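/- If a simplexwise linear immersion of a triangulated non-orientable surface Δ into ℝ³ has odd Euler characteristic and Δ contains no three pairwise vertex-disjoint triangles satisfying the piercing condition (at most 4 of the 6 adjacent triangles of each pair having all vertices among the pair's six vertices), then Δ admits no simplexwise linear immersion into ℝ³ with vertices in general position. -/

import Mathlib

/-!
Let `ψ` be a generic immersion, viewed along a generic direction `d`, and let `n` be the 1-cochain
over `𝔽₂` that counts the faces pierced by an edge. Near a vertex `v` of a face `t`, let the cover
of `t` at `v` be the parity of the number of faces above `t`. Along an edge of `t` it changes by
the value of `n`, so `n` is a cocycle. Across an edge of the surface it jumps exactly when the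
surface folds over that edge, so `n ∪ x = fold · x` for every cocycle `x`, while comparing the
orientations of the projected triangles gives `fold · x = x ∪ x`. Hence `n` is a characteristic
vector of the cup form: it represents `w₁`.

If in addition `n ∪ n = 0`, then subtracting `B n ⊗ B n` from the cup form `B` leaves an alternating
form with the same radical. So the cup form, which is nondegenerate on `H¹`, has even rank, `H¹` is
even-dimensional and `χ` is even.

Finally `n ∪ n = fold · n` is a sum over the points where an edge pierces a face, that is, over the
ends of the segments in which two disjoint faces meet. Such an end contributes the parity of the
number of other faces above it. Every edge lies in two faces, so along a segment this parity can
change only at a triple point. The three faces of a triple point are pairwise disjoint and satisfy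
the piercing condition, so without such triples the two ends of each segment cancel.
-/

open scoped Classical

/-- A finite combinatorial closed surface (triangulation of a closed surface):
a nonempty finite family of 3-element faces on a finite vertex set such that every
edge lies in exactly two faces, every vertex lies in a face, the surface is connected,
and the link of every vertex is connected (so every vertex link is a single cycle). -/
structure CombClosedSurface (V : Type*) [DecidableEq V] [Fintype V] where
  faces : Finset (Finset V)
  faces_nonempty : faces.Nonempty
  face_card : ∀ t ∈ faces, t.card = 3
  edge_in_two_faces : ∀ e : Finset V, e.card = 2 → (∃ t ∈ faces, e ⊆ t) →
    (faces.filter fun t => e ⊆ t).card = 2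
  vertex_in_face : ∀ v : V, ∃ t ∈ faces, v ∈ t
  connected : (SimpleGraph.fromRel fun u w => ∃ t ∈ faces, u ∈ t ∧ w ∈ t).Connected
  link_connected : ∀ v : V,
    ((SimpleGraph.fromRel fun u w => insert v ({u, w} : Finset V) ∈ faces).induce
      {u : V | u ≠ v ∧ ∃ t ∈ faces, v ∈ t ∧ u ∈ t}).Connected

/-- The edges of a combinatorial closed surface. -/
def CombClosedSurface.edgeSet {V : Type*} [DecidableEq V] [Fintype V]
    (S : CombClosedSurface V) : Finset (Finset V) :=
  (Finset.powersetCard 2 (Finset.univ : Finset V)).filter fun e => ∃ t ∈ S.faces, e ⊆ t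

/-- The combinatorial piercing condition for a pair of vertex-disjoint triangles
`t₁, t₂`: at most `4` of the `6` triangles adjacent to `t₁` or `t₂` (i.e. sharing one
of their six edges) have all three of their vertices among the six vertices of the
pair.  This is the necessary condition for the pair to intersect nondegenerately in a
simplexwise linear immersion. -/
def CombClosedSurface.PiercingCond {V : Type*} [DecidableEq V] [Fintype V]
    (S : CombClosedSurface V) (t₁ t₂ : Finset V) : Prop :=
  ((Finset.powersetCard 2 t₁ ∪ Finset.powersetCard 2 t₂).filter
      fun e => ∃ t ∈ S.faces, e ⊆ t ∧ t ≠ t₁ ∧ t ≠ t₂ ∧ t ⊆ t₁ ∪ t₂).card ≤ 4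

/-! ### Symmetric forms with a characteristic vector -/

section ParityOfRank

open Module

/-- The alternating form `B - x♭ ∧ y♭`, where `x♭ = B x`. If `B x y = 1` it is the part of `B` that
remains after splitting off the hyperbolic plane spanned by `x` and `y`. -/
def splitHyperbolicPlane {K M : Type*} [Field K] [AddCommGroup M] [Module K M]
    (B : M →ₗ[K] M →ₗ[K] K) (x y : M) : M →ₗ[K] M →ₗ[K] K :=
  B - ((B x).smulRight (B y) - (B y).smulRight (B x))

variable {K M : Type*} [Field K] [AddCommGroup M] [Module K M] {B : M →ₗ[K] M →ₗ[K] K} {x y : M}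

theorem splitHyperbolicPlane_apply (u v : M) :
    splitHyperbolicPlane B x y u v = B u v - (B x u * B y v - B y u * B x v) := rfl

theorem isAlt_splitHyperbolicPlane (hB : B.IsAlt) : (splitHyperbolicPlane B x y).IsAlt := by
  intro u
  rw [splitHyperbolicPlane_apply, hB]
  ring

theorem ker_le_ker_splitHyperbolicPlane (hB : B.IsAlt) :
    LinearMap.ker B ≤ LinearMap.ker (splitHyperbolicPlane B x y) := by
  intro u hu
  rw [LinearMap.mem_ker] at hu ⊢
  ext v
  simp [splitHyperbolicPlane_apply, ← hB.neg u, hu]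

theorem finrank_ker_splitHyperbolicPlane [FiniteDimensional K M] (hB : B.IsAlt) (hxy : B x y = 1) :
    finrank K (LinearMap.ker (splitHyperbolicPlane B x y)) =
      finrank K (LinearMap.ker B) + 2 := by
  have hyx : B y x = -1 := by rw [← hB.neg, hxy]
  set C := splitHyperbolicPlane B x y with hC
  let g : LinearMap.ker C →ₗ[K] K × K := ((B x).prod (B y)).comp (LinearMap.ker C).subtype
  have hker : LinearMap.ker g = (LinearMap.ker B).comap (LinearMap.ker C).subtype := by
    ext ⟨u, hu⟩
    have hBu : B u = B x u • B y - B y u • B x := by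
      ext v
      have := LinearMap.congr_fun hu v
      rw [hC, splitHyperbolicPlane_apply, LinearMap.zero_apply, sub_eq_zero] at this
      simpa using this
    simp only [g, LinearMap.mem_ker, LinearMap.comp_apply, LinearMap.prod_apply,
      Function.prod_apply, Submodule.subtype_apply, Prod.mk_eq_zero, Submodule.mem_comap]
    refine ⟨fun ⟨hxu, hyu⟩ => by rw [hBu, hxu, hyu]; simp, fun h => ?_⟩
    have hBu0 (v : M) : B u v = 0 := LinearMap.congr_fun h v
    exact ⟨by rw [← hB.neg, hBu0, neg_zero], by rw [← hB.neg, hBu0, neg_zero]⟩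
  have hrange : LinearMap.range g = ⊤ := by
    have hx : x ∈ LinearMap.ker C := by
      ext v
      simp [hC, splitHyperbolicPlane_apply, hB x, hyx]
    have hy : y ∈ LinearMap.ker C := by
      ext v
      simp [hC, splitHyperbolicPlane_apply, hB y, hxy]
    refine LinearMap.range_eq_top.2 fun ⟨p, q⟩ => ⟨p • ⟨y, hy⟩ - q • ⟨x, hx⟩, ?_⟩
    simp [g, hB x, hB y, hxy, hyx]
  have hdim := g.finrank_range_add_finrank_ker
  rw [hrange, finrank_top, hker,
    (Submodule.comapSubtypeEquivOfLe (ker_le_ker_splitHyperbolicPlane hB)).finrank_eq,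
    finrank_prod, finrank_self] at hdim
  lia

theorem even_finrank_range_of_isAlt [FiniteDimensional K M] (hB : B.IsAlt) :
    Even (finrank K (LinearMap.range B)) := by
  induction hm : finrank K (LinearMap.range B) using Nat.strong_induction_on generalizing B with
  | _ m ih =>
    subst hm
    obtain rfl | hB0 := eq_or_ne B 0
    · rw [LinearMap.range_zero, finrank_bot]
      exact Even.zero
    obtain ⟨x, y, hxy⟩ : ∃ x y, B x y = 1 := by
      obtain ⟨x, hx⟩ := DFunLike.ne_iff.1 hB0
      obtain ⟨y, hy⟩ := DFunLike.ne_iff.1 hx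
      exact ⟨x, (B x y)⁻¹ • y, by simpa using inv_mul_cancel₀ hy⟩
    have hrank : finrank K (LinearMap.range B) =
        finrank K (LinearMap.range (splitHyperbolicPlane B x y)) + 2 := by
      have hker := finrank_ker_splitHyperbolicPlane hB hxy
      have hdimB := B.finrank_range_add_finrank_ker
      have hdimC := (splitHyperbolicPlane B x y).finrank_range_add_finrank_ker
      lia
    rw [hrank]
    exact (ih _ (by omega) (isAlt_splitHyperbolicPlane hB) rfl).add even_two

/-- Over `𝔽₂` subtracting `B n ⊗ B n` makes `B` alternating without changing its kernel. -/
theorem even_finrank_range_of_characteristic {M : Type*} [AddCommGroup M] [Module (ZMod 2) M]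
    [FiniteDimensional (ZMod 2) M] {B : M →ₗ[ZMod 2] M →ₗ[ZMod 2] ZMod 2} (n : M)
    (hsymm : ∀ x y, B x y = B y x) (hchar : ∀ x, B x x = B n x) (hn : B n n = 0) :
    Even (finrank (ZMod 2) (LinearMap.range B)) := by
  let C := B - (B n).smulRight (B n)
  have hC (u v : M) : C u v = B u v - B n u * B n v := rfl
  have hAlt : C.IsAlt := fun u => by
    rw [hC, hchar]
    generalize B n u = z
    decide +revert
  have hker : LinearMap.ker C = LinearMap.ker B := by
    ext u
    simp only [LinearMap.mem_ker]
    constructor <;> intro h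
    · have hnu : B n u = 0 := by simpa [hC, hn, hsymm u n] using LinearMap.congr_fun h n
      ext v
      simpa [hC, hnu] using LinearMap.congr_fun h v
    · ext v
      simp [hC, hsymm n u, h]
  have hrank : finrank (ZMod 2) (LinearMap.range B) = finrank (ZMod 2) (LinearMap.range C) := by
    have hdimB := B.finrank_range_add_finrank_ker
    have hdimC := C.finrank_range_add_finrank_ker
    rw [hker] at hdimC
    lia
  rw [hrank]
  exact even_finrank_range_of_isAlt hAlt

end ParityOfRank

/-- The Iverson bracket of a proposition, with values in `𝔽₂`; sums of such brackets count
modulo two. -/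
noncomputable def iverson (P : Prop) : ZMod 2 := if P then 1 else 0

theorem iverson_pos {P : Prop} (h : P) : iverson P = 1 := if_pos h

theorem iverson_neg {P : Prop} (h : ¬P) : iverson P = 0 := if_neg h

/-! ### Segments and the positive orthant -/

section PositiveOrthant

open Set AffineMap

variable {ι : Type*}

/-- The segment from `u` to `w` starts by entering the open positive orthant. -/
def EntersOrthant (u w : ι → ℝ) : Prop :=
  ∀ i, 0 < u i ∨ (u i = 0 ∧ 0 < w i)

/-- The open segment from `u` to `w` meets the open positive orthant. -/
def MeetsOrthant (u w : ι → ℝ) : Prop :=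
  ∃ τ ∈ Ioo (0 : ℝ) 1, ∀ i, 0 < lineMap u w τ i

/-- The open segment from `u` to `w` meets the relative interior of the `i`-th facet of the
positive orthant. -/
def MeetsFacet (u w : ι → ℝ) (i : ι) : Prop :=
  ∃ τ ∈ Ioo (0 : ℝ) 1, lineMap u w τ i = 0 ∧ ∀ j ≠ i, 0 < lineMap u w τ j

/-- The open segment from `u` to `w` avoids the faces of codimension at least two of the closed
positive orthant. -/
def AvoidsRidges (u w : ι → ℝ) : Prop :=
  ∀ τ ∈ Ioo (0 : ℝ) 1, (∀ k, 0 ≤ lineMap u w τ k) →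
    ∀ i j, lineMap u w τ i = 0 → lineMap u w τ j = 0 → i = j

theorem lineMap_apply_coord (u w : ι → ℝ) (τ : ℝ) (i : ι) :
    lineMap u w τ i = (1 - τ) * u i + τ * w i := by
  simp [lineMap_apply_module]

variable {u w : ι → ℝ} {i : ι}

theorem exists_mem_Ioo_swap {E : Type*} [AddCommGroup E] [Module ℝ E] {x y : E} {P : E → Prop} :
    (∃ τ ∈ Ioo (0 : ℝ) 1, P (lineMap x y τ)) ↔ ∃ τ ∈ Ioo (0 : ℝ) 1, P (lineMap y x τ) := by
  have key {x y : E} : (∃ τ ∈ Ioo (0 : ℝ) 1, P (lineMap x y τ)) →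
      ∃ τ ∈ Ioo (0 : ℝ) 1, P (lineMap y x τ) := by
    rintro ⟨τ, ⟨hτ₀, hτ₁⟩, hP⟩
    exact ⟨1 - τ, ⟨by linarith, by linarith⟩, by rwa [lineMap_apply_one_sub]⟩
  exact ⟨key, key⟩

theorem meetsOrthant_comm : MeetsOrthant u w ↔ MeetsOrthant w u :=
  exists_mem_Ioo_swap (P := fun p : ι → ℝ => ∀ i, 0 < p i)

theorem meetsFacet_comm : MeetsFacet u w i ↔ MeetsFacet w u i :=
  exists_mem_Ioo_swap (P := fun p : ι → ℝ => p i = 0 ∧ ∀ j ≠ i, 0 < p j)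

theorem AvoidsRidges.symm (h : AvoidsRidges u w) : AvoidsRidges w u := by
  rintro τ ⟨hτ₀, hτ₁⟩
  rw [← lineMap_apply_one_sub]
  exact h (1 - τ) ⟨by linarith, by linarith⟩

theorem meetsOrthant_of_nonneg_of_increasing [Finite ι] {τ : ℝ} (hτ : τ ∈ Ico (0 : ℝ) 1)
    (h : ∀ i, 0 < lineMap u w τ i ∨ (lineMap u w τ i = 0 ∧ u i < w i)) : MeetsOrthant u w := by
  have hpos : ∀ᶠ σ in nhdsWithin τ (Ioi τ), ∀ i, 0 < lineMap u w σ i := by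
    refine Filter.eventually_all.2 fun i => ?_
    simp only [lineMap_apply_coord] at h ⊢
    rcases h i with hi | ⟨hi, hlt⟩
    · have hc : ContinuousAt (fun σ : ℝ => (1 - σ) * u i + σ * w i) τ := by fun_prop
      exact (hc.eventually (lt_mem_nhds hi)).filter_mono nhdsWithin_le_nhds
    · filter_upwards [self_mem_nhdsWithin] with σ (hσ : τ < σ)
      nlinarith
  obtain ⟨σ, hσpos, hτσ, hσ₁⟩ := (hpos.and (Ioo_mem_nhdsGT hτ.2)).exists
  exact ⟨σ, ⟨hτ.1.trans_lt hτσ, hσ₁⟩, hσpos⟩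

theorem EntersOrthant.meetsOrthant [Finite ι] (h : EntersOrthant u w) : MeetsOrthant u w := by
  refine meetsOrthant_of_nonneg_of_increasing (τ := 0) (by simp) fun i => ?_
  rw [lineMap_apply_zero]
  exact (h i).imp_right fun ⟨hu, hw⟩ => ⟨hu, by rwa [hu]⟩

theorem MeetsFacet.meetsOrthant [Finite ι] (h : MeetsFacet u w i) (hlt : u i < w i) :
    MeetsOrthant u w := by
  obtain ⟨τ, hτ, hzero, hpos⟩ := h
  refine meetsOrthant_of_nonneg_of_increasing (Ioo_subset_Ico_self hτ) fun j => ?_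
  obtain rfl | hj := eq_or_ne j i
  · exact .inr ⟨hzero, hlt⟩
  · exact .inl (hpos j hj)

theorem EntersOrthant.not_meetsFacet (h : EntersOrthant u w) (hlt : u i < w i) :
    ¬MeetsFacet u w i := by
  rintro ⟨τ, ⟨hτ₀, -⟩, hzero, -⟩
  rw [lineMap_apply_coord] at hzero
  rcases h i with hu | ⟨hu, -⟩ <;> nlinarith

theorem MeetsFacet.eq_of_increasing {j : ι} (hi : MeetsFacet u w i) (hui : u i < w i)
    (hj : MeetsFacet u w j) (huj : u j < w j) : i = j := by
  by_contra hij
  obtain ⟨τ, -, hzero, hpos⟩ := hi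
  obtain ⟨σ, -, hzero', hpos'⟩ := hj
  have hpos := hpos j (Ne.symm hij)
  have hpos' := hpos' i hij
  rw [lineMap_apply_coord] at hzero hpos hzero' hpos'
  nlinarith [mul_pos (sub_pos.2 hui) (sub_pos.2 huj)]

theorem exists_neg_and_lastZero [Finite ι] (hneg : ∃ i, u i < 0)
    (hinc : ∀ i, u i < 0 → u i < w i) :
    ∃ i, ∃ τ : ℝ, u i < 0 ∧ 0 < τ ∧ lineMap u w τ i = 0 ∧ ∀ j, u j < 0 → 0 ≤ lineMap u w τ j := by
  obtain ⟨i, hi, hmax⟩ := Set.exists_max_image {i | u i < 0} (fun i => u i / (u i - w i))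
    (Set.toFinite _) hneg
  have hdi : u i - w i < 0 := sub_neg.2 (hinc i hi)
  refine ⟨i, u i / (u i - w i), hi, div_pos_of_neg_of_neg hi hdi, ?_, fun j hj => ?_⟩
  · rw [lineMap_apply_coord]
    linear_combination -div_mul_cancel₀ (u i) hdi.ne
  · have hle := (div_le_iff_of_neg (sub_neg.2 (hinc j hj))).1 (hmax j hj)
    rw [lineMap_apply_coord]
    linarith

theorem exists_increasing_meetsFacet [Finite ι] (hridge : AvoidsRidges u w)
    (hmeet : MeetsOrthant u w) (henter : ¬EntersOrthant u w) :
    ∃ i, u i < w i ∧ MeetsFacet u w i := by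
  obtain ⟨σ, ⟨hσ₀, hσ₁⟩, hσ⟩ := hmeet
  simp only [lineMap_apply_coord] at hσ
  have hneg : ∃ i, u i < 0 := by
    simp only [EntersOrthant, not_forall, not_or, not_and, not_lt] at henter
    obtain ⟨i, hui, hwi⟩ := henter
    refine ⟨i, lt_of_le_of_ne hui fun h => ?_⟩
    nlinarith [hwi h, hσ i]
  have hinc (i : ι) (hi : u i < 0) : u i < w i := by
    by_contra! hle
    nlinarith [hσ i]
  obtain ⟨i, τ, hi, hτ₀, hzero, hlast⟩ := exists_neg_and_lastZero hneg hinc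
  have hτσ : τ < σ := by
    rw [lineMap_apply_coord] at hzero
    by_contra! hle
    nlinarith [hσ i, hinc i hi]
  have hnonneg (j : ι) : 0 ≤ lineMap u w τ j := by
    rcases lt_or_ge (u j) 0 with hj | hj
    · exact hlast j hj
    · have := hσ j
      rw [lineMap_apply_coord]
      rcases lt_or_ge (w j) 0 with _ | hwj
      · nlinarith
      · exact add_nonneg (mul_nonneg (by linarith) hj) (mul_nonneg hτ₀.le hwj)
  have hτ : τ ∈ Ioo (0 : ℝ) 1 := ⟨hτ₀, hτσ.trans hσ₁⟩
  exact ⟨i, hinc i hi, τ, hτ, hzero, fun j hj =>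
    (hnonneg j).lt_of_ne fun h => hj (hridge τ hτ hnonneg j i h.symm hzero)⟩

theorem iverson_entersOrthant_add_sum [Fintype ι] (hridge : AvoidsRidges u w) :
    iverson (EntersOrthant u w) + ∑ i, iverson (u i < w i ∧ MeetsFacet u w i) =
      iverson (MeetsOrthant u w) := by
  by_cases henter : EntersOrthant u w
  · have hfacet (i : ι) : ¬(u i < w i ∧ MeetsFacet u w i) := fun h => henter.not_meetsFacet h.1 h.2
    simp [iverson_pos henter, iverson_pos henter.meetsOrthant, iverson_neg (hfacet _)]
  rw [iverson_neg henter, zero_add]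
  by_cases hmeet : MeetsOrthant u w
  · obtain ⟨i, hlt, hi⟩ := exists_increasing_meetsFacet hridge hmeet henter
    rw [Finset.sum_eq_single i (fun j _ hj => iverson_neg fun h =>
      hj (h.2.eq_of_increasing h.1 hi hlt)) (by simp), iverson_pos hmeet, iverson_pos ⟨hlt, hi⟩]
  · rw [iverson_neg hmeet]
    exact Finset.sum_eq_zero fun i _ => iverson_neg fun h => hmeet (h.2.meetsOrthant h.1)

/-- The part of the segment in the open orthant is an interval, and each of its two ends is either
an end of the segment or a point of exactly one facet. -/
theorem iverson_entersOrthant_add_swap_add_sum_meetsFacet [Fintype ι] (hridge : AvoidsRidges u w)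
    (hfacet : ∀ i, MeetsFacet u w i → ¬(u i = 0 ∧ w i = 0)) :
    iverson (EntersOrthant u w) + iverson (EntersOrthant w u) +
      ∑ i, iverson (MeetsFacet u w i) = 0 := by
  have hsplit (i : ι) : iverson (MeetsFacet u w i) =
      iverson (u i < w i ∧ MeetsFacet u w i) + iverson (w i < u i ∧ MeetsFacet w u i) := by
    rw [meetsFacet_comm (u := w)]
    by_cases hi : MeetsFacet u w i
    · have hne : u i ≠ w i := fun h => by
        obtain ⟨τ, -, hzero, -⟩ := id hi
        rw [lineMap_apply_coord, h] at hzero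
        exact hfacet i hi ⟨by linarith, by linarith⟩
      rcases lt_or_gt_of_ne hne with h | h <;> simp [iverson, hi, h, h.not_gt]
    · simp [iverson, hi]
  have hu := iverson_entersOrthant_add_sum hridge
  have hw := iverson_entersOrthant_add_sum hridge.symm
  rw [meetsOrthant_comm] at hw
  rw [Finset.sum_congr rfl fun i _ => hsplit i, Finset.sum_add_distrib, add_add_add_comm, hu, hw,
    CharTwo.add_self_eq_zero]

end PositiveOrthant

/-! ### Cohomology and the cup form of a surface -/

namespace CombClosedSurface

variable {V : Type*} [DecidableEq V] [Fintype V] (S : CombClosedSurface V) {e t t' : Finset V}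

section Incidence

theorem mem_edgeSet : e ∈ S.edgeSet ↔ e.card = 2 ∧ ∃ t ∈ S.faces, e ⊆ t := by
  simp [edgeSet, Finset.mem_powersetCard]

theorem erase_mem_edgeSet (ht : t ∈ S.faces) {i : V} (hi : i ∈ t) : t.erase i ∈ S.edgeSet :=
  S.mem_edgeSet.2
    ⟨by rw [Finset.card_erase_of_mem hi, S.face_card t ht], t, ht, Finset.erase_subset _ _⟩

theorem pair_mem_edgeSet (ht : t ∈ S.faces) {i j : V} (hi : i ∈ t) (hj : j ∈ t) (hij : i ≠ j) :
    {i, j} ∈ S.edgeSet :=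
  S.mem_edgeSet.2 ⟨Finset.card_pair hij, t, ht, Finset.insert_subset hi (by simpa using hj)⟩

theorem face_eq_of_subset (ht : t ∈ S.faces) (ht' : t' ∈ S.faces) (h : t ⊆ t') : t = t' :=
  Finset.eq_of_subset_of_card_le h (by rw [S.face_card t ht, S.face_card t' ht'])

theorem exists_faces_of_edge (he : e ∈ S.edgeSet) :
    ∃ t t', t ≠ t' ∧ (S.faces.filter fun t => e ⊆ t) = {t, t'} := by
  rw [mem_edgeSet] at he
  exact Finset.card_eq_two.1 (S.edge_in_two_faces e he.1 he.2)

theorem exists_opposite_face (he : e.card = 2) (ht : t ∈ S.faces) (het : e ⊆ t) :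
    ∃ t' ∈ S.faces, e ⊆ t' ∧ t' ≠ t ∧ (S.faces.filter fun r => e ⊆ r) = {t, t'} := by
  obtain ⟨x, y, hxy, h⟩ := S.exists_faces_of_edge (S.mem_edgeSet.2 ⟨he, t, ht, het⟩)
  have hmem (r : Finset V) : (r ∈ S.faces ∧ e ⊆ r) ↔ r = x ∨ r = y := by
    rw [← Finset.mem_filter, h, Finset.mem_insert, Finset.mem_singleton]
  obtain ⟨hx, hex⟩ := (hmem x).2 (.inl rfl)
  obtain ⟨hy, hey⟩ := (hmem y).2 (.inr rfl)
  rcases (hmem t).1 ⟨ht, het⟩ with rfl | rfl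
  · exact ⟨y, hy, hey, hxy.symm, h⟩
  · exact ⟨x, hx, hex, hxy, by rw [h, Finset.pair_comm]⟩

theorem sum_edges_sum_faces {R : Type*} [AddCommMonoid R] (φ : Finset V → Finset V → R) :
    ∑ e ∈ S.edgeSet, ∑ t ∈ S.faces with e ⊆ t, φ e t =
      ∑ t ∈ S.faces, ∑ i ∈ t, φ (t.erase i) t := by
  rw [Finset.sum_comm' (t' := S.faces) (s' := fun t => S.edgeSet.filter fun e => e ⊆ t)
    (by simp only [Finset.mem_filter]; tauto)]
  refine Finset.sum_congr rfl fun t ht => ?_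
  have himage : S.edgeSet.filter (fun e => e ⊆ t) = t.image t.erase := by
    ext e
    simp only [Finset.mem_filter, Finset.mem_image]
    refine ⟨fun ⟨he, het⟩ => ?_, ?_⟩
    · have hcard : (t \ e).card = 1 := by
        rw [Finset.card_sdiff_of_subset het, S.face_card t ht, (S.mem_edgeSet.1 he).1]
      obtain ⟨i, hi⟩ := Finset.card_eq_one.1 hcard
      refine ⟨i, Finset.sdiff_subset (hi ▸ Finset.mem_singleton_self i), ?_⟩
      rw [Finset.erase_eq, ← hi, Finset.sdiff_sdiff_eq_self het]
    · rintro ⟨i, hi, rfl⟩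
      exact ⟨S.erase_mem_edgeSet ht hi, Finset.erase_subset i t⟩
  rw [himage, Finset.sum_image t.erase_injOn]

theorem sum_faces_sum_erase {R : Type*} [CommSemiring R] (Φ : Finset V → R) :
    ∑ t ∈ S.faces, ∑ i ∈ t, Φ (t.erase i) = 2 * ∑ e ∈ S.edgeSet, Φ e := by
  rw [← S.sum_edges_sum_faces fun e _ => Φ e, Finset.mul_sum]
  refine Finset.sum_congr rfl fun e he => ?_
  obtain ⟨x, y, hxy, h⟩ := S.exists_faces_of_edge he
  rw [h, Finset.sum_pair hxy, two_mul]

theorem sum_faces_sum_erase_eq_zero (Φ : Finset V → ZMod 2) :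
    ∑ t ∈ S.faces, ∑ i ∈ t, Φ (t.erase i) = 0 := by
  rw [sum_faces_sum_erase, two_mul, CharTwo.add_self_eq_zero]

theorem sum_triple_erase {α R : Type*} [DecidableEq α] [AddCommMonoid R] (Φ : Finset α → R)
    {a b c : α} (hab : a ≠ b) (hac : a ≠ c) (hbc : b ≠ c) :
    ∑ i ∈ ({a, b, c} : Finset α), Φ (({a, b, c} : Finset α).erase i) =
      Φ {b, c} + (Φ {a, c} + Φ {a, b}) := by
  rw [Finset.sum_insert (by simp [hab, hac]), Finset.sum_pair hbc]
  congr 3 <;> grind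

end Incidence

section Connectedness

variable {S} {α : Type*} {φ : Finset V → α}

theorem eq_of_mem_of_mem {v u : V}
    (h : ∀ e ∈ S.edgeSet, v ∈ e → ∀ t ∈ S.faces, ∀ t' ∈ S.faces, e ⊆ t → e ⊆ t' → φ t = φ t')
    (huv : u ≠ v) (ht : t ∈ S.faces) (hvt : v ∈ t) (hut : u ∈ t) (ht' : t' ∈ S.faces)
    (hvt' : v ∈ t') (hut' : u ∈ t') : φ t = φ t' :=
  h {v, u} (S.pair_mem_edgeSet ht hvt hut huv.symm) (by simp) t ht t' ht'
    (Finset.insert_subset hvt (by simpa using hut))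
    (Finset.insert_subset hvt' (by simpa using hut'))

theorem eq_of_vertex_mem {v : V}
    (h : ∀ e ∈ S.edgeSet, v ∈ e → ∀ t ∈ S.faces, ∀ t' ∈ S.faces, e ⊆ t → e ⊆ t' → φ t = φ t') :
    ∀ t ∈ S.faces, v ∈ t → ∀ t' ∈ S.faces, v ∈ t' → φ t = φ t' := by
  have hwalk (x y : {u : V | u ≠ v ∧ ∃ t ∈ S.faces, v ∈ t ∧ u ∈ t}) :
      ∀ t ∈ S.faces, v ∈ t → x.1 ∈ t → ∀ t' ∈ S.faces, v ∈ t' → y.1 ∈ t' → φ t = φ t' := by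
    obtain ⟨p⟩ := (S.link_connected v).preconnected x y
    induction p with
    | @nil x =>
      exact fun t ht hvt hxt t' ht' hvt' hxt' =>
        eq_of_mem_of_mem h x.2.1 ht hvt hxt ht' hvt' hxt'
    | @cons x z y hadj _ ih =>
      intro t ht hvt hxt t' ht' hvt' hyt'
      obtain ⟨r, hr, hvr, hxr, hzr⟩ : ∃ r ∈ S.faces, v ∈ r ∧ x.1 ∈ r ∧ z.1 ∈ r := by
        simp only [SimpleGraph.induce_adj, SimpleGraph.fromRel_adj] at hadj
        rcases hadj.2 with hr | hr <;> exact ⟨_, hr, by simp⟩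
      exact (eq_of_mem_of_mem h x.2.1 ht hvt hxt hr hvr hxr).trans
        (ih r hr hvr hzr t' ht' hvt' hyt')
  have hother (r : Finset V) (hr : r ∈ S.faces) : ∃ u ∈ r, u ≠ v :=
    Finset.exists_mem_ne (by rw [S.face_card r hr]; norm_num) v
  intro t ht hvt t' ht' hvt'
  obtain ⟨u, hu, huv⟩ := hother t ht
  obtain ⟨w, hw, hwv⟩ := hother t' ht'
  exact hwalk ⟨u, huv, t, ht, hvt, hu⟩ ⟨w, hwv, t', ht', hvt', hw⟩ t ht hvt hu t' ht' hvt' hw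

theorem eq_of_eq_on_faces {f : V → α} (h : ∀ t ∈ S.faces, ∀ u ∈ t, ∀ w ∈ t, f u = f w) (u w : V) :
    f u = f w := by
  obtain ⟨p⟩ := S.connected.preconnected u w
  induction p with
  | nil => rfl
  | cons hadj _ ih =>
    rw [← ih]
    rw [SimpleGraph.fromRel_adj] at hadj
    rcases hadj.2 with ⟨t, ht, hu, hw⟩ | ⟨t, ht, hw, hu⟩ <;> exact h t ht _ hu _ hw

theorem eq_of_edge_subset
    (h : ∀ e ∈ S.edgeSet, ∀ t ∈ S.faces, ∀ t' ∈ S.faces, e ⊆ t → e ⊆ t' → φ t = φ t') :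
    ∀ t ∈ S.faces, ∀ t' ∈ S.faces, φ t = φ t' := by
  have hstar (v : V) := eq_of_vertex_mem (v := v) fun e he _ => h e he
  choose r hr hvr using S.vertex_in_face
  have hr_const := eq_of_eq_on_faces (f := fun v => φ (r v)) fun t ht u hu w hw =>
    (hstar u _ (hr u) (hvr u) t ht hu).trans (hstar w t ht hw _ (hr w) (hvr w))
  have hne (t : Finset V) (ht : t ∈ S.faces) : t.Nonempty := by
    rw [← Finset.card_pos, S.face_card t ht]
    norm_num
  intro t ht t' ht'
  obtain ⟨u, hu⟩ := hne t ht
  obtain ⟨w, hw⟩ := hne t' ht'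
  calc φ t = φ (r u) := hstar u t ht hu _ (hr u) (hvr u)
    _ = φ (r w) := hr_const u w
    _ = φ t' := hstar w _ (hr w) (hvr w) t' ht' hw

end Connectedness

/-- A ranking of the vertices, together with the resulting order of the three vertices of each
face. It makes the surface an ordered simplicial complex, on which the cup product is defined by
the Alexander–Whitney formula. -/
structure FaceOrder where
  rank : V → ℕ
  rank_injective : Function.Injective rank
  low : Finset V → V
  mid : Finset V → V
  high : Finset V → V
  low_lt_mid : ∀ t ∈ S.faces, rank (low t) < rank (mid t)
  mid_lt_high : ∀ t ∈ S.faces, rank (mid t) < rank (high t)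
  eq_triple : ∀ t ∈ S.faces, t = {low t, mid t, high t}

theorem nonempty_faceOrder : Nonempty (FaceOrder S) := by
  let rank (v : V) : ℕ := Fintype.equivFin V v
  have hrank : Function.Injective rank :=
    Fin.val_injective.comp (Fintype.equivFin V).injective
  have hsorted (t : Finset V) (ht : t ∈ S.faces) : ∃ a b c,
      rank a < rank b ∧ rank b < rank c ∧ t = {a, b, c} := by
    let _ : LinearOrder V := LinearOrder.lift' rank hrank
    let f := t.orderEmbOfFin (S.face_card t ht)
    have hlt {i j : Fin 3} (hij : i < j) : rank (f i) < rank (f j) := f.strictMono hij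
    refine ⟨f 0, f 1, f 2, hlt (by decide), hlt (by decide), ?_⟩
    ext v
    rw [← Finset.mem_coe, ← t.range_orderEmbOfFin (S.face_card t ht), Set.mem_range,
      Fin.exists_fin_succ, Fin.exists_fin_two]
    simp [f, eq_comm]
  have : Nonempty V := S.connected.nonempty
  choose! a b c hab hbc habc using hsorted
  exact ⟨⟨rank, hrank, a, b, c, hab, hbc, habc⟩⟩

namespace FaceOrder

variable {S} (O : FaceOrder S)

theorem mem_iff (ht : t ∈ S.faces) (v : V) : v ∈ t ↔ v = O.low t ∨ v = O.mid t ∨ v = O.high t := by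
  conv_lhs => rw [O.eq_triple t ht]
  simp

theorem low_mem (ht : t ∈ S.faces) : O.low t ∈ t := (O.mem_iff ht _).2 (.inl rfl)

theorem mid_mem (ht : t ∈ S.faces) : O.mid t ∈ t := (O.mem_iff ht _).2 (.inr (.inl rfl))

theorem high_mem (ht : t ∈ S.faces) : O.high t ∈ t := (O.mem_iff ht _).2 (.inr (.inr rfl))

theorem low_ne_mid (ht : t ∈ S.faces) : O.low t ≠ O.mid t :=
  ne_of_apply_ne O.rank (O.low_lt_mid t ht).ne

theorem mid_ne_high (ht : t ∈ S.faces) : O.mid t ≠ O.high t :=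
  ne_of_apply_ne O.rank (O.mid_lt_high t ht).ne

theorem low_ne_high (ht : t ∈ S.faces) : O.low t ≠ O.high t :=
  ne_of_apply_ne O.rank ((O.low_lt_mid t ht).trans (O.mid_lt_high t ht)).ne

theorem sum_erase {R : Type*} [AddCommMonoid R] (Φ : Finset V → R) (ht : t ∈ S.faces) :
    ∑ i ∈ t, Φ (t.erase i) =
      Φ {O.mid t, O.high t} + (Φ {O.low t, O.high t} + Φ {O.low t, O.mid t}) := by
  have h := sum_triple_erase Φ (O.low_ne_mid ht) (O.low_ne_high ht) (O.mid_ne_high ht)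
  rwa [← O.eq_triple t ht] at h

theorem sum_edges_sum_faces {R : Type*} [AddCommMonoid R] (φ : Finset V → Finset V → R) :
    ∑ e ∈ S.edgeSet, ∑ t ∈ S.faces with e ⊆ t, φ e t = ∑ t ∈ S.faces,
      (φ {O.mid t, O.high t} t + (φ {O.low t, O.high t} t + φ {O.low t, O.mid t} t)) := by
  rw [S.sum_edges_sum_faces]
  exact Finset.sum_congr rfl fun t ht => O.sum_erase (fun e => φ e t) ht

end FaceOrder

end CombClosedSurface

namespace CombClosedSurface

open Module

variable {V : Type*} [DecidableEq V] [Fintype V] (S : CombClosedSurface V) {e t t' : Finset V}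

/-- An `𝔽₂`-valued `1`-cochain, given as a function on all sets of vertices, is a cocycle if it sums
to zero over the three edges of each face. -/
def IsCocycle (x : Finset V → ZMod 2) : Prop :=
  ∀ t ∈ S.faces, ∑ i ∈ t, x (t.erase i) = 0

/-- Extension by zero of an `𝔽₂`-valued function on the edges to all sets of vertices. -/
noncomputable def extendZero : (S.edgeSet → ZMod 2) →ₗ[ZMod 2] Finset V → ZMod 2 :=
  Function.ExtendByZero.linearMap (ZMod 2) Subtype.val

/-- The coboundary from `0`-cochains to `1`-cochains with coefficients in `𝔽₂`. -/
def coboundary₀ : (V → ZMod 2) →ₗ[ZMod 2] S.edgeSet → ZMod 2 where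
  toFun f e := ∑ v ∈ e.1, f v
  map_add' f g := by ext; simp [Finset.sum_add_distrib]
  map_smul' r f := by ext; simp [Finset.mul_sum]

/-- The coboundary from `1`-cochains to `2`-cochains with coefficients in `𝔽₂`. -/
noncomputable def coboundary₁ : (S.edgeSet → ZMod 2) →ₗ[ZMod 2] S.faces → ZMod 2 where
  toFun x t := ∑ i ∈ t.1, S.extendZero x (t.1.erase i)
  map_add' x y := by ext; simp [Finset.sum_add_distrib]
  map_smul' r x := by ext; simp [Finset.mul_sum]

section Cochains

theorem extendZero_apply (x : S.edgeSet → ZMod 2) (he : e ∈ S.edgeSet) :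
    S.extendZero x e = x ⟨e, he⟩ :=
  Subtype.val_injective.extend_apply x 0 ⟨e, he⟩

theorem extendZero_single (he : e ∈ S.edgeSet) :
    S.extendZero (Pi.single ⟨e, he⟩ 1) = Pi.single e 1 := by
  ext e'
  by_cases he' : e' ∈ S.edgeSet
  · simp [S.extendZero_apply _ he', Pi.single_apply]
  · have hne : e' ≠ e := fun h => he' (h ▸ he)
    rw [Pi.single_eq_of_ne hne]
    exact Function.extend_apply' _ _ _ fun ⟨a, ha⟩ => he' (ha ▸ a.2)

theorem extendZero_coboundary₀_pair (f : V → ZMod 2) {u w : V} (huw : u ≠ w)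
    (he : {u, w} ∈ S.edgeSet) : S.extendZero (S.coboundary₀ f) {u, w} = f u + f w :=
  (S.extendZero_apply _ he).trans (Finset.sum_pair huw)

theorem mem_ker_coboundary₁ {x : S.edgeSet → ZMod 2} :
    x ∈ LinearMap.ker S.coboundary₁ ↔ S.IsCocycle (S.extendZero x) :=
  ⟨fun h t ht => congrFun h ⟨t, ht⟩, fun h => funext fun t => h t.1 t.2⟩

theorem coboundary₁_single_apply (he : e ∈ S.edgeSet) (t : S.faces) :
    S.coboundary₁ (Pi.single ⟨e, he⟩ 1) t =
      ∑ i ∈ t.1, (Pi.single e 1 : Finset V → ZMod 2) (t.1.erase i) := by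
  rw [← S.extendZero_single he]
  rfl

theorem sum_mul_coboundary₁_single (c : Finset V → ZMod 2) (he : e ∈ S.edgeSet) :
    ∑ t : S.faces, c t.1 * S.coboundary₁ (Pi.single ⟨e, he⟩ 1) t =
      ∑ t ∈ S.faces with e ⊆ t, c t := by
  let δ : Finset V → ZMod 2 := Pi.single e 1
  calc ∑ t : S.faces, c t.1 * S.coboundary₁ (Pi.single ⟨e, he⟩ 1) t
      = ∑ t : S.faces, c t.1 * ∑ i ∈ t.1, δ (t.1.erase i) := by
        simp only [coboundary₁_single_apply, δ]
    _ = ∑ t ∈ S.faces, ∑ i ∈ t, c t * δ (t.erase i) := by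
        rw [Finset.sum_coe_sort S.faces fun t => c t * ∑ i ∈ t, δ (t.erase i)]
        simp only [Finset.mul_sum]
    _ = ∑ e' ∈ S.edgeSet, ∑ t ∈ S.faces with e' ⊆ t, c t * δ e' :=
        (S.sum_edges_sum_faces fun e' t => c t * δ e').symm
    _ = ∑ t ∈ S.faces with e ⊆ t, c t := by
        rw [Finset.sum_eq_single_of_mem e he fun e' _ hne => by simp [δ, hne]]
        simp [δ]

theorem exists_faceCoefficients (φ : (S.faces → ZMod 2) →ₗ[ZMod 2] ZMod 2) :
    ∃ c : Finset V → ZMod 2, ∀ z, φ z = ∑ t : S.faces, c t.1 * z t := by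
  refine ⟨Function.extend Subtype.val (fun t => φ (Pi.single t 1)) 0, fun z => ?_⟩
  rw [φ.pi_apply_eq_sum_univ z]
  refine Finset.sum_congr rfl fun t _ => ?_
  rw [Subtype.val_injective.extend_apply, smul_eq_mul, mul_comm]
  congr 2
  ext s
  simp [Pi.single_apply, eq_comm]

theorem eq_of_sum_faces_eq_zero {c : Finset V → ZMod 2}
    (hc : ∑ t ∈ S.faces with e ⊆ t, c t = 0) (he : e ∈ S.edgeSet) (ht : t ∈ S.faces)
    (ht' : t' ∈ S.faces) (het : e ⊆ t) (het' : e ⊆ t') : c t = c t' := by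
  obtain ⟨r, -, -, hrt, hfaces⟩ := S.exists_opposite_face (S.mem_edgeSet.1 he).1 ht het
  have htr : c t = c r := by
    rwa [hfaces, Finset.sum_pair hrt.symm, CharTwo.add_eq_zero] at hc
  have ht'mem : t' ∈ S.faces.filter fun r => e ⊆ r := Finset.mem_filter.2 ⟨ht', het'⟩
  rw [hfaces, Finset.mem_insert, Finset.mem_singleton] at ht'mem
  rcases ht'mem with rfl | rfl
  · rfl
  · exact htr

end Cochains

section Ranks

theorem finrank_range_coboundary₁_add_one :
    finrank (ZMod 2) (LinearMap.range S.coboundary₁) + 1 = S.faces.card := by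
  let σ : (S.faces → ZMod 2) →ₗ[ZMod 2] ZMod 2 := ∑ t, LinearMap.proj t
  have hσ (z : S.faces → ZMod 2) : σ z = ∑ t, z t := by simp [σ]
  obtain ⟨t₀, ht₀⟩ := S.faces_nonempty
  have hσ_ne : σ ≠ 0 := fun h => by simpa [σ] using LinearMap.congr_fun h (Pi.single ⟨t₀, ht₀⟩ 1)
  have hker : LinearMap.ker S.coboundary₁.dualMap = Submodule.span (ZMod 2) {σ} := by
    apply le_antisymm
    · intro φ hφ
      obtain ⟨c, hc⟩ := S.exists_faceCoefficients φ
      have hzero (e) (he : e ∈ S.edgeSet) : ∑ t ∈ S.faces with e ⊆ t, c t = 0 := by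
        rw [← S.sum_mul_coboundary₁_single c he, ← hc]
        exact LinearMap.congr_fun hφ (Pi.single ⟨e, he⟩ 1)
      have hconst := eq_of_edge_subset (φ := c) fun e he t ht t' ht' =>
        S.eq_of_sum_faces_eq_zero (hzero e he) he ht ht'
      refine Submodule.mem_span_singleton.2 ⟨c t₀, LinearMap.ext fun z => ?_⟩
      rw [LinearMap.smul_apply, hσ, hc, smul_eq_mul, Finset.mul_sum]
      exact Finset.sum_congr rfl fun t _ => by rw [hconst t₀ ht₀ t t.2]
    · rw [Submodule.span_singleton_le_iff_mem, LinearMap.mem_ker]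
      refine LinearMap.ext fun x => ?_
      rw [LinearMap.dualMap_apply, hσ, LinearMap.zero_apply]
      exact (Finset.sum_coe_sort S.faces _).trans (S.sum_faces_sum_erase_eq_zero _)
  have hdim := S.coboundary₁.dualMap.finrank_range_add_finrank_ker
  rw [LinearMap.finrank_range_dualMap_eq_finrank_range, hker, finrank_span_singleton hσ_ne,
    Subspace.dual_finrank_eq] at hdim
  simpa using hdim

theorem finrank_range_coboundary₀_add_one :
    finrank (ZMod 2) (LinearMap.range S.coboundary₀) + 1 = Fintype.card V := by
  obtain ⟨v₀⟩ : Nonempty V := S.connected.nonempty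
  have hone : (1 : V → ZMod 2) ≠ 0 := fun h => one_ne_zero (congrFun h v₀)
  have hker : LinearMap.ker S.coboundary₀ = Submodule.span (ZMod 2) {1} := by
    apply le_antisymm
    · intro f hf
      have hconst := S.eq_of_eq_on_faces (f := f) fun t ht u hu v hv => by
        obtain rfl | huv := eq_or_ne u v
        · rfl
        have he := S.pair_mem_edgeSet ht hu hv huv
        have h := S.extendZero_coboundary₀_pair f huv he
        rw [LinearMap.mem_ker.1 hf, map_zero, Pi.zero_apply] at h
        exact CharTwo.add_eq_zero.1 h.symm
      refine Submodule.mem_span_singleton.2 ⟨f v₀, ?_⟩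
      ext v
      simp [hconst v v₀]
    · rw [Submodule.span_singleton_le_iff_mem, LinearMap.mem_ker]
      ext e
      have hcard := (S.mem_edgeSet.1 e.2).1
      simp [coboundary₀, hcard, CharTwo.two_eq_zero]
  have hdim := S.coboundary₀.finrank_range_add_finrank_ker
  rw [hker, finrank_span_singleton hone] at hdim
  simpa using hdim

end Ranks

namespace FaceOrder

variable {S} (O : FaceOrder S) {x y : Finset V → ZMod 2}

/-- The cup product of two `1`-cochains, evaluated on the fundamental class, by the
Alexander–Whitney formula. -/
def cup (x y : Finset V → ZMod 2) : ZMod 2 :=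
  ∑ t ∈ S.faces, x {O.low t, O.mid t} * y {O.mid t, O.high t}

theorem _root_.CombClosedSurface.IsCocycle.sum_eq_zero (hx : S.IsCocycle x) (ht : t ∈ S.faces) :
    x {O.mid t, O.high t} + (x {O.low t, O.high t} + x {O.low t, O.mid t}) = 0 :=
  (O.sum_erase x ht).symm.trans (hx t ht)

theorem cup_comm (hx : S.IsCocycle x) (hy : S.IsCocycle y) : O.cup x y = O.cup y x := by
  have key : ∀ p q r p' q' r' : ZMod 2, q + (r + p) = 0 → q' + (r' + p') = 0 →
      p * q' + p' * q = q * q' + (r * r' + p * p') := by decide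
  rw [← CharTwo.add_eq_zero, cup, cup, ← Finset.sum_add_distrib,
    ← S.sum_faces_sum_erase_eq_zero fun e => x e * y e]
  refine Finset.sum_congr rfl fun t ht => ?_
  rw [O.sum_erase (fun e => x e * y e) ht]
  exact key _ _ _ _ _ _ (hx.sum_eq_zero O ht) (hy.sum_eq_zero O ht)

/-- Each edge lies in two faces, and a cocycle takes the value `1` on an even number of edges of
each face, so halving the number of incident pairs makes sense face by face. -/
theorem sum_edges_eq_add_cup_self (hx : S.IsCocycle x) :
    ∑ e ∈ S.edgeSet, x e = ∑ t ∈ S.faces, x {O.low t, O.high t} + O.cup x x := by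
  have key : ∀ p q r : ZMod 2, q + (r + p) = 0 →
      q.val + (r.val + p.val) = 2 * (r.val + p.val * q.val) := by decide
  have hdouble : 2 * ∑ e ∈ S.edgeSet, (x e).val = 2 * ∑ t ∈ S.faces,
      ((x {O.low t, O.high t}).val + (x {O.low t, O.mid t}).val * (x {O.mid t, O.high t}).val) := by
    rw [← S.sum_faces_sum_erase fun e => (x e).val, Finset.mul_sum]
    refine Finset.sum_congr rfl fun t ht => ?_
    rw [O.sum_erase (fun e => (x e).val) ht]
    exact key _ _ _ (hx.sum_eq_zero O ht)
  have hcast := congrArg (Nat.cast : ℕ → ZMod 2) (Nat.eq_of_mul_eq_mul_left two_pos hdouble)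
  simpa [cup, Finset.sum_add_distrib] using hcast

theorem cup_self (hx : S.IsCocycle x) (fold s : Finset V → ZMod 2)
    (hfold : ∀ e ∈ S.edgeSet, fold e = 1 + ∑ t ∈ S.faces with e ⊆ t,
      ((if e = {O.low t, O.high t} then 1 else 0) + s t)) :
    O.cup x x = ∑ e ∈ S.edgeSet, fold e * x e := by
  have hcorner : ∑ e ∈ S.edgeSet, ∑ t ∈ S.faces with e ⊆ t,
      ((if e = {O.low t, O.high t} then 1 else 0) + s t) * x e =
        ∑ t ∈ S.faces, x {O.low t, O.high t} := by
    rw [O.sum_edges_sum_faces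
      fun e t => ((if e = {O.low t, O.high t} then 1 else 0) + s t) * x e]
    refine Finset.sum_congr rfl fun t ht => ?_
    have hne : ({O.mid t, O.high t} : Finset V) ≠ {O.low t, O.high t} := fun h => by
      simpa [O.low_ne_mid ht, O.low_ne_high ht] using Finset.ext_iff.1 h (O.low t)
    have hne' : ({O.low t, O.mid t} : Finset V) ≠ {O.low t, O.high t} := fun h => by
      simpa [(O.mid_ne_high ht).symm, (O.low_ne_high ht).symm] using Finset.ext_iff.1 h (O.high t)
    rw [if_neg hne, if_neg hne', if_pos rfl]
    linear_combination s t * hx.sum_eq_zero O ht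
  have hsum : ∑ e ∈ S.edgeSet, fold e * x e =
      ∑ e ∈ S.edgeSet, x e + ∑ t ∈ S.faces, x {O.low t, O.high t} := by
    rw [← hcorner, ← Finset.sum_add_distrib]
    refine Finset.sum_congr rfl fun e he => ?_
    rw [hfold e he, add_mul, one_mul, Finset.sum_mul]
  rw [hsum, O.sum_edges_eq_add_cup_self hx, add_right_comm, CharTwo.add_self_eq_zero, zero_add]

theorem exists_lowest_vertex : ∃ m : Finset V → V, (∀ e ∈ S.edgeSet, m e ∈ e) ∧
    ∀ v w, {v, w} ∈ S.edgeSet → O.rank v < O.rank w → m {v, w} = v := by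
  have : Nonempty V := S.connected.nonempty
  have hmin (e : Finset V) (he : e ∈ S.edgeSet) : ∃ v ∈ e, ∀ w ∈ e, O.rank v ≤ O.rank w :=
    e.exists_min_image O.rank (Finset.card_pos.1 (by rw [(S.mem_edgeSet.1 he).1]; norm_num))
  choose! m hmem hle using hmin
  refine ⟨m, hmem, fun v w he hvw => ?_⟩
  rcases Finset.mem_insert.1 (hmem _ he) with h | h
  · exact h
  · have := hle _ he v (by simp)
    rw [Finset.mem_singleton.1 h] at this
    exact absurd hvw this.not_gt

theorem low_mid_mem_edgeSet (ht : t ∈ S.faces) : {O.low t, O.mid t} ∈ S.edgeSet :=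
  S.pair_mem_edgeSet ht (O.low_mem ht) (O.mid_mem ht) (O.low_ne_mid ht)

theorem mid_high_mem_edgeSet (ht : t ∈ S.faces) : {O.mid t, O.high t} ∈ S.edgeSet :=
  S.pair_mem_edgeSet ht (O.mid_mem ht) (O.high_mem ht) (O.mid_ne_high ht)

theorem low_high_mem_edgeSet (ht : t ∈ S.faces) : {O.low t, O.high t} ∈ S.edgeSet :=
  S.pair_mem_edgeSet ht (O.low_mem ht) (O.high_mem ht) (O.low_ne_high ht)

/-- A cochain `n` that is locally, on each face, the coboundary of a potential `o t` cups with
cocycles through the jumps of the potential across the edges. -/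
theorem cup_eq_sum_of_potential {fold n : Finset V → ZMod 2} {o : Finset V → V → ZMod 2}
    (hjump : ∀ e ∈ S.edgeSet, ∀ v ∈ e, fold e = ∑ t ∈ S.faces with e ⊆ t, o t v)
    (hn : ∀ t ∈ S.faces, ∀ v ∈ t, ∀ w ∈ t, v ≠ w → o t v + o t w = n {v, w})
    (hx : S.IsCocycle x) : O.cup n x = ∑ e ∈ S.edgeSet, fold e * x e := by
  have key : ∀ p q r a b : ZMod 2, q + (r + p) = 0 →
      (a + b) * q = b * q + (a * r + a * p) := by decide
  obtain ⟨m, hmem, hm⟩ := O.exists_lowest_vertex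
  have hsum : ∑ e ∈ S.edgeSet, fold e * x e =
      ∑ e ∈ S.edgeSet, ∑ t ∈ S.faces with e ⊆ t, o t (m e) * x e :=
    Finset.sum_congr rfl fun e he => by rw [hjump e he (m e) (hmem e he), Finset.sum_mul]
  rw [hsum, O.sum_edges_sum_faces (fun e t => o t (m e) * x e)]
  refine Finset.sum_congr rfl fun t ht => ?_
  have hlm := O.low_lt_mid t ht
  have hmh := O.mid_lt_high t ht
  rw [hm _ _ (O.low_mid_mem_edgeSet ht) hlm, hm _ _ (O.mid_high_mem_edgeSet ht) hmh,
    hm _ _ (O.low_high_mem_edgeSet ht) (hlm.trans hmh),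
    ← hn t ht _ (O.low_mem ht) _ (O.mid_mem ht) (O.low_ne_mid ht)]
  exact key _ _ _ _ _ (hx.sum_eq_zero O ht)

end FaceOrder

end CombClosedSurface

namespace CombClosedSurface

open Module

variable {V : Type*} [DecidableEq V] [Fintype V] {S : CombClosedSurface V} {t t' : Finset V}

namespace FaceOrder

variable (O : FaceOrder S) {x : Finset V → ZMod 2}

section Duality

/-- The function on the vertices of the face `t` that vanishes at the lowest vertex and whose
coboundary on `t` is the cocycle `x`. -/
noncomputable def localPrimitive (x : Finset V → ZMod 2) (t : Finset V) (v : V) : ZMod 2 :=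
  if v = O.low t then 0 else x {O.low t, v}

theorem localPrimitive_add (hx : S.IsCocycle x) (ht : t ∈ S.faces) {v w : V} (hv : v ∈ t)
    (hw : w ∈ t) (hvw : v ≠ w) :
    O.localPrimitive x t v + O.localPrimitive x t w = x {v, w} := by
  have hsum := hx.sum_eq_zero O ht
  have hlm := (O.low_ne_mid ht).symm
  have hlh := (O.low_ne_high ht).symm
  have hmid_high : x {O.low t, O.mid t} + x {O.low t, O.high t} = x {O.mid t, O.high t} := by
    rw [← CharTwo.add_eq_zero]
    linear_combination hsum
  wlog hle : O.rank v < O.rank w generalizing v w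
  · have hlt := (not_lt.1 hle).lt_of_ne fun h => hvw (O.rank_injective h.symm)
    rw [add_comm, this hw hv hvw.symm hlt, Finset.pair_comm]
  have hrank₁ := O.low_lt_mid t ht
  have hrank₂ := O.mid_lt_high t ht
  rcases (O.mem_iff ht v).1 hv with rfl | rfl | rfl <;>
    rcases (O.mem_iff ht w).1 hw with rfl | rfl | rfl <;>
    first
      | omega
      | simp [localPrimitive, hlm, hlh, hmid_high]

theorem localPrimitive_eq_ite (ht : t ∈ S.faces) {v w : V} (hv : v ∈ t) (hw : w ∈ t)
    (hvw : O.rank v < O.rank w) :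
    O.localPrimitive x t v =
      if ({O.mid t, O.high t} : Finset V) = {v, w} then x {O.low t, O.mid t} else 0 := by
  have hlow : O.low t ∉ ({O.mid t, O.high t} : Finset V) := by
    simp [O.low_ne_mid ht, O.low_ne_high ht]
  have hrank₁ := O.low_lt_mid t ht
  have hrank₂ := O.mid_lt_high t ht
  rcases (O.mem_iff ht v).1 hv with rfl | rfl | rfl <;>
    rcases (O.mem_iff ht w).1 hw with rfl | rfl | rfl <;> try omega
  · rw [if_neg fun h => hlow (by rw [h]; simp)]
    simp [localPrimitive]
  · rw [if_neg fun h => hlow (by rw [h]; simp)]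
    simp [localPrimitive]
  · simp [localPrimitive, (O.low_ne_mid ht).symm]

theorem cup_single {v w : V} (hvw : O.rank v < O.rank w) :
    O.cup x (Pi.single {v, w} 1) = ∑ t ∈ S.faces with {v, w} ⊆ t, O.localPrimitive x t v := by
  rw [cup, Finset.sum_filter]
  refine Finset.sum_congr rfl fun t ht => ?_
  rw [Pi.single_apply, mul_ite, mul_one, mul_zero]
  by_cases hsub : {v, w} ⊆ t
  · rw [if_pos hsub, O.localPrimitive_eq_ite ht (hsub (by simp)) (hsub (by simp)) hvw]
  · rw [if_neg hsub, if_neg]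
    rintro h
    exact hsub (h ▸ Finset.insert_subset (O.mid_mem ht) (by simpa using O.high_mem ht))

theorem add_localPrimitive_eq (hx : S.IsCocycle x) {c : Finset V → ZMod 2}
    (hc : ∀ v w, {v, w} ∈ S.edgeSet → O.rank v < O.rank w →
      ∑ t ∈ S.faces with {v, w} ⊆ t, (c t + O.localPrimitive x t v) = 0)
    {v w : V} (hvw : v ≠ w) (he : {v, w} ∈ S.edgeSet) (ht : t ∈ S.faces) (ht' : t' ∈ S.faces)
    (het : {v, w} ⊆ t) (het' : {v, w} ⊆ t') :
    c t + O.localPrimitive x t v = c t' + O.localPrimitive x t' v := by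
  rcases lt_or_gt_of_ne (O.rank_injective.ne hvw) with hlt | hlt
  · exact S.eq_of_sum_faces_eq_zero (c := fun t => c t + O.localPrimitive x t v) (hc v w he hlt)
      he ht ht' het het'
  · rw [Finset.pair_comm] at he
    have hw := S.eq_of_sum_faces_eq_zero (c := fun t => c t + O.localPrimitive x t w)
      (hc w v he hlt) he ht ht' (by rwa [Finset.pair_comm]) (by rwa [Finset.pair_comm])
    have hadd {r : Finset V} (hr : r ∈ S.faces) (her : {v, w} ⊆ r) :=
      O.localPrimitive_add hx hr (her (by simp)) (her (by simp)) hvw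
    have hcancel {r : Finset V} := CharTwo.add_self_eq_zero (O.localPrimitive x r w)
    linear_combination hw + (hadd ht het).trans (hadd ht' het').symm -
      hcancel (r := t) + hcancel (r := t')

/-- The local primitives, corrected by the constants `c t`, agree on the star of each vertex and
hence glue to a global primitive. -/
theorem exists_primitive (hx : S.IsCocycle x) {c : Finset V → ZMod 2}
    (hc : ∀ v w, {v, w} ∈ S.edgeSet → O.rank v < O.rank w →
      ∑ t ∈ S.faces with {v, w} ⊆ t, (c t + O.localPrimitive x t v) = 0) :
    ∃ f : V → ZMod 2, ∀ v w, v ≠ w → {v, w} ∈ S.edgeSet → f v + f w = x {v, w} := by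
  have hstar (v : V) : ∀ t ∈ S.faces, v ∈ t → ∀ t' ∈ S.faces, v ∈ t' →
      c t + O.localPrimitive x t v = c t' + O.localPrimitive x t' v := by
    refine eq_of_vertex_mem (φ := fun t => c t + O.localPrimitive x t v)
      fun e he hve t ht t' ht' het het' => ?_
    obtain ⟨p, q, hpq, rfl⟩ := Finset.card_eq_two.1 (S.mem_edgeSet.1 he).1
    rcases Finset.mem_insert.1 hve with rfl | hvq
    · exact O.add_localPrimitive_eq hx hc hpq he ht ht' het het'
    · obtain rfl := Finset.mem_singleton.1 hvq
      rw [Finset.pair_comm] at he het het'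
      exact O.add_localPrimitive_eq hx hc hpq.symm he ht ht' het het'
  choose r hr hvr using S.vertex_in_face
  refine ⟨fun v => c (r v) + O.localPrimitive x (r v) v, fun v w hvw he => ?_⟩
  obtain ⟨-, t, ht, hsub⟩ := S.mem_edgeSet.1 he
  have hv : v ∈ t := hsub (by simp)
  have hw : w ∈ t := hsub (by simp)
  calc c (r v) + O.localPrimitive x (r v) v + (c (r w) + O.localPrimitive x (r w) w)
      = c t + O.localPrimitive x t v + (c t + O.localPrimitive x t w) := by
        rw [hstar v (r v) (hr v) (hvr v) t ht hv, hstar w (r w) (hr w) (hvr w) t ht hw]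
    _ = x {v, w} := by
        rw [add_add_add_comm, CharTwo.add_self_eq_zero, zero_add,
          O.localPrimitive_add hx ht hv hw hvw]

end Duality

section CupForm

/-- The cup product as a bilinear form on the space of `1`-cochains. -/
noncomputable def cupCochains :
    (S.edgeSet → ZMod 2) →ₗ[ZMod 2] (S.edgeSet → ZMod 2) →ₗ[ZMod 2] ZMod 2 :=
  LinearMap.mk₂ (ZMod 2) (fun x y => O.cup (S.extendZero x) (S.extendZero y))
    (fun _ _ _ => by simp [cup, add_mul, Finset.sum_add_distrib])
    (fun _ _ _ => by simp [cup, Finset.mul_sum, mul_assoc])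
    (fun _ _ _ => by simp [cup, mul_add, Finset.sum_add_distrib])
    (fun _ _ _ => by simp [cup, Finset.mul_sum, mul_left_comm])

/-- The cup product as a bilinear form on the space of `1`-cocycles. -/
noncomputable def cupForm :
    LinearMap.ker S.coboundary₁ →ₗ[ZMod 2] LinearMap.ker S.coboundary₁ →ₗ[ZMod 2] ZMod 2 :=
  O.cupCochains.compl₁₂ (LinearMap.ker S.coboundary₁).subtype (LinearMap.ker S.coboundary₁).subtype

theorem cupForm_apply (x y : LinearMap.ker S.coboundary₁) :
    O.cupForm x y = O.cup (S.extendZero x) (S.extendZero y) := rfl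

theorem isCocycle_extendZero (x : LinearMap.ker S.coboundary₁) :
    S.IsCocycle (S.extendZero x) := S.mem_ker_coboundary₁.1 x.2

theorem isCocycle_of_potential (O : FaceOrder S) {n : Finset V → ZMod 2} {o : Finset V → V → ZMod 2}
    (hn : ∀ t ∈ S.faces, ∀ v ∈ t, ∀ w ∈ t, v ≠ w → o t v + o t w = n {v, w}) :
    S.IsCocycle n := by
  have key : ∀ a b c : ZMod 2, (b + c) + ((a + c) + (a + b)) = 0 := by decide
  intro t ht
  rw [O.sum_erase n ht, ← hn t ht _ (O.mid_mem ht) _ (O.high_mem ht) (O.mid_ne_high ht),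
    ← hn t ht _ (O.low_mem ht) _ (O.high_mem ht) (O.low_ne_high ht),
    ← hn t ht _ (O.low_mem ht) _ (O.mid_mem ht) (O.low_ne_mid ht)]
  exact key _ _ _

theorem coboundary₀_potential (f : V → ZMod 2) :
    ∀ t ∈ S.faces, ∀ v ∈ t, ∀ w ∈ t, v ≠ w →
      f v + f w = S.extendZero (S.coboundary₀ f) {v, w} :=
  fun _ ht _ hv _ hw hvw =>
    (S.extendZero_coboundary₀_pair f hvw (S.pair_mem_edgeSet ht hv hw hvw)).symm

theorem range_coboundary₀_le_ker (O : FaceOrder S) :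
    LinearMap.range S.coboundary₀ ≤ LinearMap.ker S.coboundary₁ := by
  rintro _ ⟨f, rfl⟩
  exact S.mem_ker_coboundary₁.2 (O.isCocycle_of_potential (o := fun _ => f)
    (coboundary₀_potential f))

theorem cup_coboundary₀ (f : V → ZMod 2) (hx : S.IsCocycle x) :
    O.cup (S.extendZero (S.coboundary₀ f)) x = 0 := by
  rw [O.cup_eq_sum_of_potential (fold := 0) (o := fun _ => f) (fun e he v _ => ?_)
    (coboundary₀_potential f) hx]
  · simp
  · obtain ⟨p, q, hpq, h⟩ := S.exists_faces_of_edge he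
    rw [h, Finset.sum_pair hpq, CharTwo.add_self_eq_zero, Pi.zero_apply]

/-- A functional vanishing on the kernel of the coboundary `C¹ → C²` factors through it. -/
theorem mem_range_coboundary₀ {x : LinearMap.ker S.coboundary₁} (hx : O.cupForm x = 0) :
    (x : S.edgeSet → ZMod 2) ∈ LinearMap.range S.coboundary₀ := by
  have hq : O.cupCochains x ∈ LinearMap.range S.coboundary₁.dualMap := by
    rw [LinearMap.range_dualMap_eq_dualAnnihilator_ker, Submodule.mem_dualAnnihilator]
    exact fun y hy => LinearMap.congr_fun hx ⟨y, hy⟩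
  obtain ⟨φ, hφ⟩ := hq
  obtain ⟨c, hc⟩ := S.exists_faceCoefficients φ
  obtain ⟨f, hf⟩ := O.exists_primitive (isCocycle_extendZero x) (c := c) fun v w he hvw => by
    have hcup : O.cupCochains x (Pi.single ⟨{v, w}, he⟩ 1) =
        O.cup (S.extendZero x) (Pi.single {v, w} 1) := by
      rw [← S.extendZero_single he]
      rfl
    rw [Finset.sum_add_distrib, ← O.cup_single hvw, ← hcup, ← hφ, LinearMap.dualMap_apply, hc,
      S.sum_mul_coboundary₁_single, CharTwo.add_self_eq_zero]
  refine ⟨f, funext fun ⟨e, he⟩ => ?_⟩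
  obtain ⟨v, w, hvw, rfl⟩ := Finset.card_eq_two.1 (S.mem_edgeSet.1 he).1
  rw [← S.extendZero_apply (S.coboundary₀ f) he,
    ← S.extendZero_apply (x : S.edgeSet → ZMod 2) he,
    S.extendZero_coboundary₀_pair f hvw he, hf v w hvw he]

theorem ker_cupForm : LinearMap.ker O.cupForm =
    (LinearMap.range S.coboundary₀).comap (LinearMap.ker S.coboundary₁).subtype := by
  ext x
  refine ⟨O.mem_range_coboundary₀, ?_⟩
  rintro ⟨f, hf : S.coboundary₀ f = x⟩
  refine LinearMap.mem_ker.2 (LinearMap.ext fun y => ?_)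
  rw [cupForm_apply, ← hf]
  exact O.cup_coboundary₀ f (isCocycle_extendZero y)

theorem finrank_range_cupForm :
    (finrank (ZMod 2) (LinearMap.range O.cupForm) : ℤ) =
      2 - (Fintype.card V - S.edgeSet.card + S.faces.card) := by
  have hcup := O.cupForm.finrank_range_add_finrank_ker
  rw [O.ker_cupForm,
    (Submodule.comapSubtypeEquivOfLe O.range_coboundary₀_le_ker).finrank_eq] at hcup
  have hcocycles := S.coboundary₁.finrank_range_add_finrank_ker
  rw [finrank_fintype_fun_eq_card, Fintype.card_coe] at hcocycles
  have hvertices := S.finrank_range_coboundary₀_add_one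
  have hfaces := S.finrank_range_coboundary₁_add_one
  lia

/-- The rank of the cup product form is the dimension of the first cohomology group, and `n` is a
characteristic cocycle with `n ∪ n = 0`. -/
theorem even_eulerChar_of_potential {fold s n : Finset V → ZMod 2} {o : Finset V → V → ZMod 2}
    (hfold : ∀ e ∈ S.edgeSet, fold e = 1 + ∑ t ∈ S.faces with e ⊆ t,
      ((if e = {O.low t, O.high t} then 1 else 0) + s t))
    (hjump : ∀ e ∈ S.edgeSet, ∀ v ∈ e, fold e = ∑ t ∈ S.faces with e ⊆ t, o t v)
    (hn : ∀ t ∈ S.faces, ∀ v ∈ t, ∀ w ∈ t, v ≠ w → o t v + o t w = n {v, w})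
    (hzero : ∑ e ∈ S.edgeSet, fold e * n e = 0) :
    Even ((Fintype.card V : ℤ) - S.edgeSet.card + S.faces.card) := by
  let n' : S.edgeSet → ZMod 2 := fun e => n e
  have hn' : ∀ e ∈ S.edgeSet, S.extendZero n' e = n e := fun e he => S.extendZero_apply _ he
  have hpotential : ∀ t ∈ S.faces, ∀ v ∈ t, ∀ w ∈ t, v ≠ w →
      o t v + o t w = S.extendZero n' {v, w} := fun t ht v hv w hw hvw => by
    rw [hn t ht v hv w hw hvw, hn' _ (S.pair_mem_edgeSet ht hv hw hvw)]
  let N : LinearMap.ker S.coboundary₁ :=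
    ⟨n', S.mem_ker_coboundary₁.2 (O.isCocycle_of_potential hpotential)⟩
  have hN (x : LinearMap.ker S.coboundary₁) :
      O.cupForm N x = ∑ e ∈ S.edgeSet, fold e * S.extendZero x e :=
    O.cup_eq_sum_of_potential hjump hpotential (isCocycle_extendZero x)
  have heven : Even (finrank (ZMod 2) (LinearMap.range O.cupForm)) := by
    refine even_finrank_range_of_characteristic N
      (fun x y => O.cup_comm (isCocycle_extendZero x) (isCocycle_extendZero y))
      (fun x => by rw [hN, cupForm_apply, O.cup_self (isCocycle_extendZero x) fold s hfold]) ?_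
    rw [hN, ← hzero]
    exact Finset.sum_congr rfl fun e he => by rw [hn' e he]
  have hrank := O.finrank_range_cupForm
  rw [← Int.even_coe_nat, hrank, Int.even_sub] at heven
  exact heven.1 even_two

end CupForm

end FaceOrder

end CombClosedSurface

/-! ### Piercing points and generic directions -/

section Simplices

open AffineMap

theorem lineMap_coord_nonneg {ι : Type*} {u w : ι → ℝ} {i : ι} {τ : ℝ} (hu : 0 ≤ u i)
    (hw : 0 ≤ w i) (hτ₀ : 0 ≤ τ) (hτ₁ : τ ≤ 1) : 0 ≤ lineMap u w τ i := by
  rw [lineMap_apply_coord]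
  exact add_nonneg (mul_nonneg (sub_nonneg.2 hτ₁) hu) (mul_nonneg hτ₀ hw)

section EdgeWeight

variable {V : Type*} [DecidableEq V] {v w : V} {τ : ℝ}

/-- The weight on `{v, w}` that represents the point dividing the edge `vw` in the ratio
`τ : 1 - τ`. -/
noncomputable def edgeWeight (v w : V) (τ : ℝ) : V → ℝ :=
  lineMap (Pi.single v 1 : V → ℝ) (Pi.single w 1) τ

theorem single_one_nonneg (v i : V) : 0 ≤ (Pi.single v 1 : V → ℝ) i := by
  rw [Pi.single_apply]
  positivity

theorem edgeWeight_nonneg (hτ₀ : 0 ≤ τ) (hτ₁ : τ ≤ 1) (i : V) : 0 ≤ edgeWeight v w τ i :=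
  lineMap_coord_nonneg (single_one_nonneg v i) (single_one_nonneg w i) hτ₀ hτ₁

theorem edgeWeight_left (hvw : v ≠ w) : edgeWeight v w τ v = 1 - τ := by
  simp [edgeWeight, lineMap_apply_coord, hvw]

theorem edgeWeight_right (hvw : v ≠ w) : edgeWeight v w τ w = τ := by
  simp [edgeWeight, lineMap_apply_coord, hvw.symm]

end EdgeWeight

variable {V : Type*} [Fintype V] {E : Type*} [AddCommGroup E] [Module ℝ E]
  {ψ : V → E} {s t : Finset V} {l m : V → ℝ} {v w : V} {p : E} {τ : ℝ}

/-- A weight on `t`: coefficients of total mass one, of any sign, supported on `t`. The points of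
the affine span of `ψ '' t` are the combinations `Fintype.linearCombination ℝ ψ l` for weights `l`
on `t`. -/
structure IsWeight (t : Finset V) (l : V → ℝ) : Prop where
  eq_zero : ∀ i ∉ t, l i = 0
  sum_eq_one : ∑ i, l i = 1

theorem IsWeight.mono (hl : IsWeight s l) (hst : s ⊆ t) : IsWeight t l :=
  ⟨fun i hi => hl.eq_zero i fun h => hi (hst h), hl.sum_eq_one⟩

theorem IsWeight.sum_smul (hl : IsWeight s l) {μ : V → V → ℝ} (hμ : ∀ j, IsWeight t (μ j)) :
    IsWeight t (∑ j, l j • μ j) := by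
  refine ⟨fun i hi => ?_, ?_⟩
  · rw [Finset.sum_apply]
    exact Finset.sum_eq_zero fun j _ => by rw [Pi.smul_apply, (hμ j).eq_zero i hi, smul_zero]
  · simp only [Finset.sum_apply, Pi.smul_apply, smul_eq_mul]
    rw [Finset.sum_comm, ← hl.sum_eq_one]
    exact Finset.sum_congr rfl fun j _ => by
      rw [← Finset.mul_sum, (hμ j).sum_eq_one, mul_one]

theorem IsWeight.lineMap (hl : IsWeight t l) (hm : IsWeight t m) (τ : ℝ) :
    IsWeight t (lineMap l m τ) := by
  refine ⟨fun i hi => ?_, ?_⟩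
  · rw [lineMap_apply_coord, hl.eq_zero i hi, hm.eq_zero i hi]
    ring
  · simp only [lineMap_apply_coord, Finset.sum_add_distrib, ← Finset.mul_sum, hl.sum_eq_one,
      hm.sum_eq_one]
    ring

theorem sum_eq_sum_univ {M : Type*} [AddCommMonoid M] {f : V → M} (hf : ∀ i ∉ t, f i = 0) :
    ∑ i ∈ t, f i = ∑ i, f i :=
  Finset.sum_subset (Finset.subset_univ _) fun i _ hi => hf i hi

theorem sum_smul_eq_linearCombination (ψ : V → E) (hl : ∀ i ∉ t, l i = 0) :
    ∑ i ∈ t, l i • ψ i = Fintype.linearCombination ℝ ψ l := by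
  rw [Fintype.linearCombination_apply, sum_eq_sum_univ fun i hi => by rw [hl i hi, zero_smul]]

theorem linearCombination_lineMap (ψ : V → E) (l m : V → ℝ) (τ : ℝ) :
    Fintype.linearCombination ℝ ψ (lineMap l m τ) =
      lineMap (Fintype.linearCombination ℝ ψ l) (Fintype.linearCombination ℝ ψ m) τ :=
  (Fintype.linearCombination ℝ ψ).toAffineMap.apply_lineMap l m τ

section Edges

variable [DecidableEq V]

theorem IsWeight.erase (hl : IsWeight t l) (hv : l v = 0) : IsWeight (t.erase v) l := by
  refine ⟨fun i hi => ?_, hl.sum_eq_one⟩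
  obtain rfl | hne := eq_or_ne i v
  · exact hv
  · exact hl.eq_zero i fun hit => hi (Finset.mem_erase.2 ⟨hne, hit⟩)

theorem isWeight_single (hv : v ∈ t) : IsWeight t (Pi.single v 1) :=
  ⟨fun i hi => Pi.single_eq_of_ne (fun h : i = v => hi (h ▸ hv)) _, Fintype.sum_pi_single' v 1⟩

theorem linearCombination_single_one (ψ : V → E) (v : V) :
    Fintype.linearCombination ℝ ψ (Pi.single v 1) = ψ v := by
  rw [Fintype.linearCombination_apply_single, one_smul]

theorem isWeight_edgeWeight (v w : V) (τ : ℝ) : IsWeight {v, w} (edgeWeight v w τ) :=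
  (isWeight_single (by simp)).lineMap (isWeight_single (by simp)) τ

theorem mem_of_isWeight_edgeWeight (hvw : v ≠ w) (hτ : τ ∈ Set.Ioo (0 : ℝ) 1)
    (h : IsWeight t (edgeWeight v w τ)) : v ∈ t ∧ w ∈ t := by
  constructor
  · by_contra hv
    exact hτ.2.ne (by linarith [h.eq_zero v hv, edgeWeight_left hvw (τ := τ)])
  · by_contra hw
    exact hτ.1.ne' (by linarith [h.eq_zero w hw, edgeWeight_right hvw (τ := τ)])

theorem linearCombination_edgeWeight (ψ : V → E) (v w : V) (τ : ℝ) :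
    Fintype.linearCombination ℝ ψ (edgeWeight v w τ) = lineMap (ψ v) (ψ w) τ := by
  rw [edgeWeight, linearCombination_lineMap, linearCombination_single_one,
    linearCombination_single_one]

end Edges

theorem mem_convexHull_image_iff : p ∈ convexHull ℝ (ψ '' t) ↔
    ∃ l, IsWeight t l ∧ (∀ i, 0 ≤ l i) ∧ Fintype.linearCombination ℝ ψ l = p := by
  constructor
  · refine fun hp => convexHull_min (t := {p | ∃ l, IsWeight t l ∧ (∀ i, 0 ≤ l i) ∧
      Fintype.linearCombination ℝ ψ l = p}) ?_ ?_ hp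
    · rintro _ ⟨v, hv, rfl⟩
      exact ⟨_, isWeight_single hv, single_one_nonneg v,
        linearCombination_single_one ψ v⟩
    · refine convex_iff_segment_subset.2 ?_
      rintro _ ⟨l, hl, hl₀, rfl⟩ _ ⟨m, hm, hm₀, rfl⟩ q hq
      rw [segment_eq_image_lineMap] at hq
      obtain ⟨τ, ⟨hτ₀, hτ₁⟩, rfl⟩ := hq
      exact ⟨_, hl.lineMap hm τ, fun i => lineMap_coord_nonneg (hl₀ i) (hm₀ i) hτ₀ hτ₁,
        linearCombination_lineMap ψ l m τ⟩
  · rintro ⟨l, hl, hl₀, rfl⟩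
    rw [← sum_smul_eq_linearCombination ψ hl.eq_zero]
    exact (convex_convexHull ℝ _).sum_mem (fun i _ => hl₀ i)
      ((sum_eq_sum_univ hl.eq_zero).trans hl.sum_eq_one)
      fun i hi => subset_convexHull ℝ _ ⟨i, hi, rfl⟩

/-- The open simplex spanned by the points `ψ v` for `v ∈ t`. -/
def openSimplex (ψ : V → E) (t : Finset V) : Set E :=
  {p | ∃ l, IsWeight t l ∧ (∀ i ∈ t, 0 < l i) ∧ Fintype.linearCombination ℝ ψ l = p}

theorem weight_nonneg (hl : IsWeight t l) (hpos : ∀ i ∈ t, 0 < l i) (i : V) : 0 ≤ l i := by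
  by_cases hi : i ∈ t
  · exact (hpos i hi).le
  · exact (hl.eq_zero i hi).ge

theorem openSimplex_subset_convexHull : openSimplex ψ t ⊆ convexHull ℝ (ψ '' t) := by
  rintro p ⟨l, hl, hpos, rfl⟩
  exact mem_convexHull_image_iff.2 ⟨l, hl, weight_nonneg hl hpos, rfl⟩

theorem mem_openSimplex_pair [DecidableEq V] (hvw : v ≠ w) :
    p ∈ openSimplex ψ {v, w} ↔ ∃ τ ∈ Set.Ioo (0 : ℝ) 1, lineMap (ψ v) (ψ w) τ = p := by
  constructor
  · rintro ⟨l, hl, hpos, rfl⟩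
    have hsum : l v + l w = 1 := by
      rw [← Finset.sum_pair hvw, sum_eq_sum_univ hl.eq_zero, hl.sum_eq_one]
    have hv := hpos v (by simp)
    have hw := hpos w (by simp)
    refine ⟨l w, ⟨hw, by linarith⟩, ?_⟩
    rw [← sum_smul_eq_linearCombination ψ hl.eq_zero, Finset.sum_pair hvw, lineMap_apply_module,
      ← hsum, add_sub_cancel_right]
  · rintro ⟨τ, ⟨hτ₀, hτ₁⟩, rfl⟩
    refine ⟨_, isWeight_edgeWeight v w τ, fun i hi => ?_, linearCombination_edgeWeight ψ v w τ⟩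
    rcases Finset.mem_insert.1 hi with rfl | hi
    · rw [edgeWeight_left hvw]
      linarith
    · rwa [Finset.mem_singleton.1 hi, edgeWeight_right hvw]

/-- The simplices spanned by `e` and `s` meet in their relative interiors. -/
def Pierces (ψ : V → E) (e s : Finset V) : Prop :=
  (openSimplex ψ e ∩ openSimplex ψ s).Nonempty

/-- A point in which the open simplices spanned by `e` and `s` meet (`0` if they do not). -/
noncomputable def piercingPoint (ψ : V → E) (e s : Finset V) : E :=
  if h : Pierces ψ e s then h.some else 0

theorem Pierces.piercingPoint_mem {e s : Finset V} (h : Pierces ψ e s) :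
    piercingPoint ψ e s ∈ openSimplex ψ e ∩ openSimplex ψ s := by
  rw [piercingPoint, dif_pos h]
  exact h.some_mem

/-- The images of the vertices together with the piercing points. -/
def criticalPoints (ψ : V → E) : Set E :=
  Set.range ψ ∪ Set.range (Function.uncurry (piercingPoint ψ))

theorem vertex_mem_criticalPoints (ψ : V → E) (v : V) : ψ v ∈ criticalPoints ψ :=
  .inl ⟨v, rfl⟩

theorem piercingPoint_mem_criticalPoints (ψ : V → E) (e s : Finset V) :
    piercingPoint ψ e s ∈ criticalPoints ψ :=
  .inr ⟨(e, s), rfl⟩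

end Simplices

namespace CombClosedSurface

variable {V : Type*} [DecidableEq V] [Fintype V] {E : Type*} [AddCommGroup E] [Module ℝ E]

theorem four_le_card (S : CombClosedSurface V) : 4 ≤ Fintype.card V := by
  obtain ⟨t, ht⟩ := S.faces_nonempty
  obtain ⟨v, hv⟩ := Finset.card_pos.1 (show 0 < t.card by rw [S.face_card t ht]; norm_num)
  obtain ⟨t', ht', -, hne, -⟩ := S.exists_opposite_face
    (S.mem_edgeSet.1 (S.erase_mem_edgeSet ht hv)).1 ht (Finset.erase_subset _ _)
  have hlt : t.card < (t ∪ t').card := by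
    refine Finset.card_lt_card (Finset.ssubset_iff_subset_ne.2 ⟨Finset.subset_union_left, ?_⟩)
    exact fun h => hne (S.face_eq_of_subset ht' ht (h ▸ Finset.subset_union_right))
  have hle := Finset.card_le_univ (t ∪ t')
  have hcard := S.face_card t ht
  omega

/-- A simplexwise linear immersion `ψ` in general position, viewed along a direction `d` that is
not parallel to any plane through three critical points. -/
structure GenericView (S : CombClosedSurface V) (ψ : V → E) (d : E) : Prop where
  finrank_eq_three : Module.finrank ℝ E = 3
  affineIndependent : ∀ s : Finset V, s.card = 4 → AffineIndependent ℝ (fun v : s => ψ v.1)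
  inter_subset : ∀ t₁ ∈ S.faces, ∀ t₂ ∈ S.faces, t₁ ≠ t₂ → ¬Disjoint t₁ t₂ →
    convexHull ℝ (ψ '' t₁) ∩ convexHull ℝ (ψ '' t₂) ⊆ convexHull ℝ (ψ '' ↑(t₁ ∩ t₂))
  notMem_span : ∀ x ∈ criticalPoints ψ, ∀ y ∈ criticalPoints ψ, ∀ z ∈ criticalPoints ψ,
    d ∉ Submodule.span ℝ {x - y, z - y}

namespace GenericView

variable {S : CombClosedSurface V} {ψ : V → E} {d p : E} {r t t' u : Finset V} {l m : V → ℝ}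
  {γ : ℝ}

theorem eq_zero_of_smul_add_smul (G : S.GenericView ψ d) {x y z : E} (hx : x ∈ criticalPoints ψ)
    (hy : y ∈ criticalPoints ψ) (hz : z ∈ criticalPoints ψ) {α β : ℝ}
    (h : α • (x - y) + β • (z - y) = γ • d) : γ = 0 := by
  by_contra hγ
  refine G.notMem_span x hx y hy z hz (Submodule.mem_span_pair.2 ⟨γ⁻¹ * α, γ⁻¹ * β, ?_⟩)
  rw [mul_smul, mul_smul, ← smul_add, h, inv_smul_smul₀ hγ]

theorem eq_zero_of_linearCombination_eq_zero (G : S.GenericView ψ d) (hu : u.card ≤ 4)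
    (hm : ∀ i ∉ u, m i = 0) (hsum : ∑ i, m i = 0) (hcomb : Fintype.linearCombination ℝ ψ m = 0) :
    m = 0 := by
  obtain ⟨s, hus, hs⟩ := Finset.exists_superset_card_eq hu S.four_le_card
  have hm' : ∀ i ∉ s, m i = 0 := fun i hi => hm i fun h => hi (hus h)
  have hind := affineIndependent_iff.1 (G.affineIndependent s hs) Finset.univ (fun v => m v.1)
    (by rw [Finset.sum_coe_sort s m, sum_eq_sum_univ hm', hsum])
    (by rw [Finset.sum_coe_sort s fun v => m v • ψ v, sum_smul_eq_linearCombination ψ hm', hcomb])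
  funext i
  by_cases hi : i ∈ s
  · exact hind ⟨i, hi⟩ (Finset.mem_univ _)
  · exact hm' i hi

theorem weight_eq (G : S.GenericView ψ d) (hu : u.card ≤ 4) (hl : IsWeight u l)
    (hm : IsWeight u m)
    (h : Fintype.linearCombination ℝ ψ l = Fintype.linearCombination ℝ ψ m) : l = m := by
  refine sub_eq_zero.1 (G.eq_zero_of_linearCombination_eq_zero hu (fun i hi => ?_) ?_ ?_)
  · rw [Pi.sub_apply, hl.eq_zero i hi, hm.eq_zero i hi, sub_zero]
  · simp only [Pi.sub_apply, Finset.sum_sub_distrib, hl.sum_eq_one, hm.sum_eq_one, sub_self]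
  · rw [map_sub, h, sub_self]

theorem eq_zero_of_linearCombination_eq_smul (G : S.GenericView ψ d) (hu : u.card ≤ 3)
    (hm : ∀ i ∉ u, m i = 0) (hsum : ∑ i, m i = 0)
    (hcomb : Fintype.linearCombination ℝ ψ m = γ • d) : m = 0 ∧ γ = 0 := by
  obtain ⟨s, hus, hs⟩ :=
    Finset.exists_superset_card_eq hu (le_trans (by norm_num) S.four_le_card)
  obtain ⟨x, y, z, hxy, hxz, hyz, rfl⟩ := Finset.card_eq_three.1 hs
  have hm' : ∀ i ∉ ({x, y, z} : Finset V), m i = 0 := fun i hi => hm i fun h => hi (hus h)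
  rw [← sum_eq_sum_univ hm', Finset.sum_insert (by simp [hxy, hxz]), Finset.sum_pair hyz] at hsum
  have hγ : γ = 0 := by
    refine G.eq_zero_of_smul_add_smul (vertex_mem_criticalPoints ψ x)
      (vertex_mem_criticalPoints ψ y) (vertex_mem_criticalPoints ψ z) (α := m x) (β := m z) ?_
    rw [← hcomb, ← sum_smul_eq_linearCombination ψ hm', Finset.sum_insert (by simp [hxy, hxz]),
      Finset.sum_pair hyz, show m y = -(m x + m z) by linarith]
    module
  refine ⟨G.eq_zero_of_linearCombination_eq_zero (hu.trans (by norm_num)) hm ?_ ?_, hγ⟩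
  · rwa [← sum_eq_sum_univ hm', Finset.sum_insert (by simp [hxy, hxz]), Finset.sum_pair hyz]
  · rw [hcomb, hγ, zero_smul]

theorem weight_eq_of_parallel (G : S.GenericView ψ d) (hu : u.card ≤ 3) (hl : IsWeight u l)
    (hm : IsWeight u m)
    (h : Fintype.linearCombination ℝ ψ l = Fintype.linearCombination ℝ ψ m + γ • d) :
    l = m ∧ γ = 0 := by
  have hsub := G.eq_zero_of_linearCombination_eq_smul hu (m := l - m) (γ := γ)
    (fun i hi => by rw [Pi.sub_apply, hl.eq_zero i hi, hm.eq_zero i hi, sub_zero])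
    (by simp only [Pi.sub_apply, Finset.sum_sub_distrib, hl.sum_eq_one, hm.sum_eq_one, sub_self])
    (by rw [map_sub, h, add_sub_cancel_left])
  exact ⟨sub_eq_zero.1 hsub.1, hsub.2⟩

theorem weight_eq_of_not_disjoint (G : S.GenericView ψ d) (ht : t ∈ S.faces) (ht' : t' ∈ S.faces)
    (hdisj : ¬Disjoint t t') (hl : IsWeight t l) (hl₀ : ∀ i, 0 ≤ l i) (hm : IsWeight t' m)
    (hm₀ : ∀ i, 0 ≤ m i)
    (h : Fintype.linearCombination ℝ ψ l = Fintype.linearCombination ℝ ψ m) : l = m := by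
  have hcard : t.card ≤ 4 := by rw [S.face_card t ht]; norm_num
  have hcard' : t'.card ≤ 4 := by rw [S.face_card t' ht']; norm_num
  obtain rfl | hne := eq_or_ne t t'
  · exact G.weight_eq hcard hl hm h
  obtain ⟨n, hn, -, hcomb⟩ := mem_convexHull_image_iff.1 <|
    G.inter_subset t ht t' ht' hne hdisj ⟨mem_convexHull_image_iff.2 ⟨l, hl, hl₀, rfl⟩,
      mem_convexHull_image_iff.2 ⟨m, hm, hm₀, h.symm⟩⟩
  rw [G.weight_eq hcard hl (hn.mono Finset.inter_subset_left) hcomb.symm,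
    G.weight_eq hcard' hm (hn.mono Finset.inter_subset_right) (h.symm.trans hcomb.symm)]

/-- The linear system for the weight and the height has as many equations as unknowns. -/
theorem exists_shadow (G : S.GenericView ψ d) (hr : r ∈ S.faces) (p : E) :
    ∃ c : (V → ℝ) × ℝ,
      IsWeight r c.1 ∧ Fintype.linearCombination ℝ ψ c.1 = p + c.2 • d := by
  have : FiniteDimensional ℝ E := Module.finite_of_finrank_pos (by rw [G.finrank_eq_three]; simp)
  have hinj := Subtype.val_injective (p := (· ∈ r))
  let ext : (r → ℝ) →ₗ[ℝ] V → ℝ := Function.ExtendByZero.linearMap ℝ Subtype.val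
  have hext (x : r → ℝ) : ∀ i ∉ r, ext x i = 0 := fun i hi =>
    Function.extend_apply' _ _ _ fun ⟨j, hj⟩ => hi (hj ▸ j.2)
  let f : (r → ℝ) × ℝ →ₗ[ℝ] E × ℝ :=
    ((Fintype.linearCombination ℝ ψ ∘ₗ ext).coprod (-LinearMap.toSpanSingleton ℝ E d)).prod
      (Fintype.linearCombination ℝ (fun _ : V => (1 : ℝ)) ∘ₗ ext ∘ₗ LinearMap.fst ℝ _ _)
  have hf (x : r → ℝ) (h : ℝ) : f (x, h) =
      (Fintype.linearCombination ℝ ψ (ext x) - h • d, ∑ i, ext x i) := by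
    simp [f, sub_eq_add_neg, Fintype.linearCombination_apply ℝ (fun _ : V => (1 : ℝ))]
  have hf_inj : Function.Injective f := by
    rw [← LinearMap.ker_eq_bot, LinearMap.ker_eq_bot']
    rintro ⟨x, h⟩ hx
    obtain ⟨hcomb, hsum⟩ := Prod.ext_iff.1 ((hf x h).symm.trans hx)
    obtain ⟨hzero, rfl⟩ := G.eq_zero_of_linearCombination_eq_smul (S.face_card r hr).le (hext x)
      hsum (sub_eq_zero.1 hcomb)
    exact Prod.ext (funext fun i => (hinj.extend_apply x 0 i).symm.trans (congrFun hzero i)) rfl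
  have hdim : Module.finrank ℝ ((r → ℝ) × ℝ) = Module.finrank ℝ (E × ℝ) := by
    simp [S.face_card r hr, G.finrank_eq_three]
  obtain ⟨⟨x, h⟩, hx⟩ :=
    (LinearMap.injective_iff_surjective_of_finrank_eq_finrank hdim).1 hf_inj (p, 1)
  obtain ⟨hcomb, hsum⟩ := Prod.ext_iff.1 ((hf x h).symm.trans hx)
  exact ⟨(ext x, h), ⟨hext x, hsum⟩, sub_eq_iff_eq_add.1 hcomb⟩

end GenericView

end CombClosedSurface

/-! ### Prisms below faces and the cover of a vertex -/

section Shadow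

open AffineMap

variable {V : Type*} [Fintype V] {E : Type*} [AddCommGroup E] [Module ℝ E]

/-- The barycentric coordinates, with respect to the face `r`, of the shadow of `p` on the plane of
`r` under projection along `d`, together with the height of that shadow above `p`. Junk unless this
shadow exists. -/
noncomputable def shadowData (ψ : V → E) (d : E) (r : Finset V) (p : E) : (V → ℝ) × ℝ :=
  if h : ∃ c : (V → ℝ) × ℝ,
      IsWeight r c.1 ∧ Fintype.linearCombination ℝ ψ c.1 = p + c.2 • d then h.choose
  else 0

/-- The barycentric coordinates, with respect to the face `r`, of the projection of `p` along `d` to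
the plane of `r`. -/
noncomputable def shadow (ψ : V → E) (d : E) (r : Finset V) (p : E) : V → ℝ :=
  (shadowData ψ d r p).1

/-- The signed height, in the direction `d`, of the plane of `r` above `p`. -/
noncomputable def height (ψ : V → E) (d : E) (r : Finset V) (p : E) : ℝ :=
  (shadowData ψ d r p).2

/-- The segment from `x` to `y` starts by entering the region below the face `r`, where only the
barycentric coordinates indexed by `u` are taken into account. -/
def EntersPrism (ψ : V → E) (d : E) (r u : Finset V) (x y : E) : Prop :=
  (∀ i ∈ u, 0 < shadow ψ d r x i ∨ (shadow ψ d r x i = 0 ∧ 0 < shadow ψ d r y i)) ∧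
    (0 < height ψ d r x ∨ (height ψ d r x = 0 ∧ 0 < height ψ d r y))

/-- The open segment from `x` to `y` meets the face `r`, where only the barycentric coordinates
indexed by `u` are taken into account. -/
def CrossesFace (ψ : V → E) (d : E) (r u : Finset V) (x y : E) : Prop :=
  ∃ τ ∈ Set.Ioo (0 : ℝ) 1, height ψ d r (lineMap x y τ) = 0 ∧
    ∀ i ∈ u, 0 < shadow ψ d r (lineMap x y τ) i

/-- The open segment from `x` to `y` passes below the simplex spanned by `g`, where only the
barycentric coordinates indexed by `u` are taken into account. This depends on `g` alone and not on
a face containing it. -/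
def PassesBelow (ψ : V → E) (d : E) (g u : Finset V) (x y : E) : Prop :=
  ∃ τ ∈ Set.Ioo (0 : ℝ) 1, ∃ h > (0 : ℝ), ∃ l, IsWeight g l ∧ (∀ i ∈ u, 0 < l i) ∧
    Fintype.linearCombination ℝ ψ l = lineMap x y τ + h • d

/-- The affine coordinates of `p` that describe the prism below the face `r` as an orthant: the
height, and the barycentric coordinates indexed by `u`. -/
noncomputable def prismCoords (ψ : V → E) (d : E) (r u : Finset V) (p : E) : Option u → ℝ :=
  fun o => o.elim (height ψ d r p) fun i => shadow ψ d r p i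

theorem entersOrthant_prismCoords {ψ : V → E} {d : E} {r u : Finset V} {x y : E} :
    EntersOrthant (prismCoords ψ d r u x) (prismCoords ψ d r u y) ↔
      EntersPrism ψ d r u x y := by
  simp [EntersOrthant, EntersPrism, Option.forall, prismCoords, and_comm]

end Shadow

namespace CombClosedSurface

open AffineMap

variable {V : Type*} [DecidableEq V] [Fintype V] {E : Type*} [AddCommGroup E] [Module ℝ E]

namespace GenericView

variable {S : CombClosedSurface V} {ψ : V → E} {d p x y : E} {r u : Finset V} {l : V → ℝ}
  {γ τ : ℝ} {i j : V}

section Coordinates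

theorem shadow_spec (G : S.GenericView ψ d) (hr : r ∈ S.faces) (p : E) :
    IsWeight r (shadow ψ d r p) ∧
      Fintype.linearCombination ℝ ψ (shadow ψ d r p) = p + height ψ d r p • d := by
  rw [shadow, height, shadowData, dif_pos (G.exists_shadow hr p)]
  exact (G.exists_shadow hr p).choose_spec

theorem isWeight_shadow (G : S.GenericView ψ d) (hr : r ∈ S.faces) (p : E) :
    IsWeight r (shadow ψ d r p) :=
  (G.shadow_spec hr p).1

theorem linearCombination_shadow (G : S.GenericView ψ d) (hr : r ∈ S.faces) (p : E) :
    Fintype.linearCombination ℝ ψ (shadow ψ d r p) = p + height ψ d r p • d :=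
  (G.shadow_spec hr p).2

theorem shadow_eq (G : S.GenericView ψ d) (hr : r ∈ S.faces) (hl : IsWeight r l)
    (h : Fintype.linearCombination ℝ ψ l = p + γ • d) :
    shadow ψ d r p = l ∧ height ψ d r p = γ := by
  obtain ⟨hshadow, hheight⟩ := G.weight_eq_of_parallel (γ := height ψ d r p - γ)
    (S.face_card r hr).le (G.isWeight_shadow hr p) hl
    (by rw [G.linearCombination_shadow hr, h]; module)
  exact ⟨hshadow, sub_eq_zero.1 hheight⟩

theorem shadow_linearCombination (G : S.GenericView ψ d) (hr : r ∈ S.faces) {s : Finset V}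
    (hl : IsWeight s l) :
    shadow ψ d r (Fintype.linearCombination ℝ ψ l) = ∑ j, l j • shadow ψ d r (ψ j) ∧
      height ψ d r (Fintype.linearCombination ℝ ψ l) = ∑ j, l j * height ψ d r (ψ j) := by
  refine G.shadow_eq hr (hl.sum_smul fun j => G.isWeight_shadow hr (ψ j)) ?_
  rw [map_sum, Finset.sum_smul, Fintype.linearCombination_apply, ← Finset.sum_add_distrib]
  exact Finset.sum_congr rfl fun j _ => by
    rw [map_smul, G.linearCombination_shadow hr, smul_add, mul_smul]

theorem shadow_lineMap (G : S.GenericView ψ d) (hr : r ∈ S.faces) (x y : E) (τ : ℝ) :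
    shadow ψ d r (lineMap x y τ) = lineMap (shadow ψ d r x) (shadow ψ d r y) τ ∧
      height ψ d r (lineMap x y τ) = lineMap (height ψ d r x) (height ψ d r y) τ := by
  refine G.shadow_eq hr ((G.isWeight_shadow hr x).lineMap (G.isWeight_shadow hr y) τ) ?_
  rw [linearCombination_lineMap, G.linearCombination_shadow hr, G.linearCombination_shadow hr]
  simp only [lineMap_apply_module, smul_eq_mul]
  module

theorem shadow_eq_of_linearCombination (G : S.GenericView ψ d) (hr : r ∈ S.faces)
    (hl : IsWeight r l) (h : Fintype.linearCombination ℝ ψ l = p) :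
    shadow ψ d r p = l ∧ height ψ d r p = 0 :=
  G.shadow_eq hr hl (by rw [h, zero_smul, add_zero])

theorem shadow_vertex (G : S.GenericView ψ d) (hr : r ∈ S.faces) (hj : j ∈ r) :
    shadow ψ d r (ψ j) = Pi.single j 1 ∧ height ψ d r (ψ j) = 0 :=
  G.shadow_eq_of_linearCombination hr (isWeight_single hj) (linearCombination_single_one ψ j)

theorem mem_erase_of_shadow_eq_zero (G : S.GenericView ψ d) (hr : r ∈ S.faces) (hi : i ∈ r)
    (h : shadow ψ d r (ψ j) i = 0) : j ∈ r.erase i := by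
  have hcard : (insert j (r.erase i)).card ≤ 3 := by
    refine (Finset.card_insert_le _ _).trans ?_
    rw [Finset.card_erase_of_mem hi, S.face_card r hr]
  have hw := (G.isWeight_shadow hr (ψ j)).erase h
  have heq := (G.weight_eq_of_parallel hcard (hw.mono (Finset.subset_insert _ _))
    (isWeight_single (Finset.mem_insert_self j _))
    (by rw [G.linearCombination_shadow hr, linearCombination_single_one])).1
  by_contra hj
  have hzero := hw.eq_zero j hj
  rw [heq, Pi.single_eq_same] at hzero
  exact one_ne_zero hzero

theorem mem_of_height_eq_zero (G : S.GenericView ψ d) (hr : r ∈ S.faces)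
    (h : height ψ d r (ψ j) = 0) : j ∈ r := by
  have hcard : (insert j r).card ≤ 4 :=
    (Finset.card_insert_le _ _).trans (by rw [S.face_card r hr])
  have hw := G.isWeight_shadow hr (ψ j)
  have heq := G.weight_eq hcard (hw.mono (Finset.subset_insert _ _))
    (isWeight_single (Finset.mem_insert_self j _))
    (by rw [G.linearCombination_shadow hr, linearCombination_single_one, h, zero_smul, add_zero])
  by_contra hj
  have hzero := hw.eq_zero j hj
  rw [heq, Pi.single_eq_same] at hzero
  exact one_ne_zero hzero

theorem mem_convexHull_of_shadow_nonneg (G : S.GenericView ψ d) (hr : r ∈ S.faces)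
    (h : height ψ d r p = 0) (hnonneg : ∀ i ∈ r, 0 ≤ shadow ψ d r p i) :
    p ∈ convexHull ℝ (ψ '' r) := by
  refine mem_convexHull_image_iff.2 ⟨shadow ψ d r p, G.isWeight_shadow hr p, fun i => ?_, ?_⟩
  · by_cases hi : i ∈ r
    · exact hnonneg i hi
    · exact ((G.isWeight_shadow hr p).eq_zero i hi).ge
  · rw [G.linearCombination_shadow hr, h, zero_smul, add_zero]

theorem mem_openSimplex_iff (G : S.GenericView ψ d) (hr : r ∈ S.faces) :
    p ∈ openSimplex ψ r ↔ height ψ d r p = 0 ∧ ∀ i ∈ r, 0 < shadow ψ d r p i := by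
  refine ⟨?_, fun ⟨h, hpos⟩ => ⟨shadow ψ d r p, G.isWeight_shadow hr p, hpos, ?_⟩⟩
  · rintro ⟨l, hl, hpos, hp⟩
    obtain ⟨hshadow, hheight⟩ := G.shadow_eq_of_linearCombination hr hl hp
    exact ⟨hheight, hshadow ▸ hpos⟩
  · rw [G.linearCombination_shadow hr, h, zero_smul, add_zero]

end Coordinates

section PrismParity

theorem prismCoords_lineMap (G : S.GenericView ψ d) (hr : r ∈ S.faces) (u : Finset V) (x y : E)
    (τ : ℝ) : lineMap (prismCoords ψ d r u x) (prismCoords ψ d r u y) τ =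
      prismCoords ψ d r u (lineMap x y τ) := by
  obtain ⟨hshadow, hheight⟩ := G.shadow_lineMap hr x y τ
  funext o
  rcases o with _ | i
  · rw [lineMap_apply_coord]
    simp only [prismCoords, Option.elim, hheight]
    simp [lineMap_apply_module]
  · rw [lineMap_apply_coord]
    simp [prismCoords, hshadow, lineMap_apply_coord]

theorem meetsFacet_none_prismCoords (G : S.GenericView ψ d) (hr : r ∈ S.faces) :
    MeetsFacet (prismCoords ψ d r u x) (prismCoords ψ d r u y) none ↔
      CrossesFace ψ d r u x y := by
  simp [MeetsFacet, CrossesFace, G.prismCoords_lineMap hr, Option.forall, prismCoords]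

theorem meetsFacet_some_prismCoords (G : S.GenericView ψ d) (hr : r ∈ S.faces) (i : u) :
    MeetsFacet (prismCoords ψ d r u x) (prismCoords ψ d r u y) (some i) ↔
      PassesBelow ψ d (r.erase i) (u.erase i) x y := by
  simp only [MeetsFacet, PassesBelow, G.prismCoords_lineMap hr, Option.forall]
  refine exists_congr fun τ => and_congr_right fun _ => ?_
  constructor
  · rintro ⟨hzero, hheight, hpos⟩
    refine ⟨height ψ d r (lineMap x y τ), hheight (by simp), shadow ψ d r (lineMap x y τ),
      (G.isWeight_shadow hr _).erase hzero, fun j hj => ?_, G.linearCombination_shadow hr _⟩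
    obtain ⟨hji, hju⟩ := Finset.mem_erase.1 hj
    exact hpos ⟨j, hju⟩ fun h => hji (congrArg Subtype.val (Option.some.inj h))
  · rintro ⟨h, hh, l, hl, hpos, hcomb⟩
    obtain ⟨hshadow, hheight⟩ := G.shadow_eq (p := lineMap x y τ) (γ := h) hr
      (hl.mono (Finset.erase_subset _ _)) hcomb
    simp only [prismCoords, Option.elim, hshadow, hheight]
    refine ⟨hl.eq_zero i (by simp), fun _ => hh, fun j hj => hpos j ?_⟩
    exact Finset.mem_erase.2 ⟨fun h => hj (by rw [Subtype.ext h]), j.2⟩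

theorem iverson_entersPrism_add_swap (G : S.GenericView ψ d) (hr : r ∈ S.faces) {u : Finset V}
    {x y : E}
    (hcorner : ∀ τ ∈ Set.Ioo (0 : ℝ) 1, ∀ i ∈ u, ∀ j ∈ u, i ≠ j →
      shadow ψ d r (lineMap x y τ) i = 0 → shadow ψ d r (lineMap x y τ) j ≠ 0)
    (hside : ∀ τ ∈ Set.Ioo (0 : ℝ) 1, height ψ d r (lineMap x y τ) = 0 →
      (∀ i ∈ u, 0 ≤ shadow ψ d r (lineMap x y τ) i) →
      ∀ i ∈ u, shadow ψ d r (lineMap x y τ) i ≠ 0)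
    (hends : ∀ i ∈ u, shadow ψ d r x i = 0 → shadow ψ d r y i ≠ 0)
    (hplane : CrossesFace ψ d r u x y → height ψ d r x = 0 → height ψ d r y ≠ 0) :
    iverson (EntersPrism ψ d r u x y) + iverson (EntersPrism ψ d r u y x) +
      iverson (CrossesFace ψ d r u x y) +
      ∑ i ∈ u, iverson (PassesBelow ψ d (r.erase i) (u.erase i) x y) = 0 := by
  have hridge : AvoidsRidges (prismCoords ψ d r u x) (prismCoords ψ d r u y) := by
    intro τ hτ hnonneg i j hi hj
    rw [G.prismCoords_lineMap hr] at hnonneg hi hj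
    have hnonneg' : ∀ i ∈ u, 0 ≤ shadow ψ d r (lineMap x y τ) i :=
      fun i hi => hnonneg (some ⟨i, hi⟩)
    rcases i with _ | i <;> rcases j with _ | j
    · rfl
    · exact (hside τ hτ hi hnonneg' j j.2 hj).elim
    · exact (hside τ hτ hj hnonneg' i i.2 hi).elim
    · by_contra hij
      exact hcorner τ hτ i i.2 j j.2 (fun h => hij (congrArg some (Subtype.ext h))) hi hj
  have hparity := iverson_entersOrthant_add_swap_add_sum_meetsFacet hridge fun o ho h => by
    rcases o with _ | i
    · exact hplane ((G.meetsFacet_none_prismCoords hr).1 ho) h.1 h.2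
    · exact hends i i.2 h.1 h.2
  simpa only [Fintype.sum_option, entersOrthant_prismCoords, G.meetsFacet_none_prismCoords hr,
    G.meetsFacet_some_prismCoords hr,
    Finset.sum_coe_sort u fun i => iverson (PassesBelow ψ d (r.erase i) (u.erase i) x y),
    ← add_assoc] using hparity

end PrismParity

end GenericView

end CombClosedSurface

theorem exists_eq_triple {α : Type*} [DecidableEq α] {t : Finset α} (ht : t.card = 3) {v w : α}
    (hv : v ∈ t) (hw : w ∈ t) (hvw : v ≠ w) : ∃ x, v ≠ x ∧ w ≠ x ∧ t = {v, w, x} := by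
  have hw' : w ∈ t.erase v := Finset.mem_erase.2 ⟨hvw.symm, hw⟩
  have hcard : ((t.erase v).erase w).card = 1 := by
    rw [Finset.card_erase_of_mem hw', Finset.card_erase_of_mem hv, ht]
  obtain ⟨x, hx⟩ := Finset.card_eq_one.1 hcard
  have hxt : x ∈ (t.erase v).erase w := by rw [hx, Finset.mem_singleton]
  refine ⟨x, ?_, (Finset.ne_of_mem_erase hxt).symm, ?_⟩
  · exact (Finset.ne_of_mem_erase (Finset.mem_of_mem_erase hxt)).symm
  · rw [← hx, Finset.insert_erase hw', Finset.insert_erase hv]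

section Flags

variable {V : Type*} [Fintype V] {E : Type*} [AddCommGroup E] [Module ℝ E]

/-- Lexicographic positivity of a triple of real numbers. -/
def LexPos (p q s : ℝ) : Prop :=
  0 < p ∨ (p = 0 ∧ (0 < q ∨ (q = 0 ∧ 0 < s)))

/-- The points of the triangle `vwx` near `v`, and much nearer still to the side `vw`, lie below the
face `r`. -/
def FlagEntersPrism (ψ : V → E) (d : E) (r : Finset V) (v w x : V) : Prop :=
  (∀ i ∈ r, LexPos (shadow ψ d r (ψ v) i) (shadow ψ d r (ψ w) i) (shadow ψ d r (ψ x) i)) ∧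
    LexPos (height ψ d r (ψ v)) (height ψ d r (ψ w)) (height ψ d r (ψ x))

/-- A face with third vertex `x`, sharing with `t` the side opposite to `a`, runs below `t` near
that side. -/
def FoldsUnder (ψ : V → E) (d : E) (t : Finset V) (a x : V) : Prop :=
  0 < shadow ψ d t (ψ x) a ∧ 0 < height ψ d t (ψ x)

end Flags

namespace CombClosedSurface

open AffineMap

variable {V : Type*} [DecidableEq V] [Fintype V] {E : Type*} [AddCommGroup E] [Module ℝ E]

/-- The parity of the number of faces that cover the face `t` near its flag at the vertex `v` and
the side `vw`. -/
noncomputable def cornerCover (S : CombClosedSurface V) (ψ : V → E) (d : E) (t : Finset V)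
    (v w : V) : ZMod 2 :=
  ∑ r ∈ S.faces.erase t, iverson (∃ x ∈ t, x ≠ v ∧ x ≠ w ∧ FlagEntersPrism ψ d r v w x)

/-- The parity of the number of faces pierced by the edge `e`. -/
noncomputable def piercingParity (S : CombClosedSurface V) (ψ : V → E) (e : Finset V) : ZMod 2 :=
  ∑ s ∈ S.faces, iverson (Pierces ψ e s)

/-- The two faces `t = vwx` and `t' = vwa` that contain the edge `vw`. -/
structure Hinge (S : CombClosedSurface V) (t t' : Finset V) (v w x a : V) : Prop where
  left_mem : t ∈ S.faces
  right_mem : t' ∈ S.faces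
  left_eq : t = {v, w, x}
  right_eq : t' = {v, w, a}
  v_ne_w : v ≠ w
  v_ne_x : v ≠ x
  w_ne_x : w ≠ x
  v_ne_a : v ≠ a
  w_ne_a : w ≠ a
  x_ne_a : x ≠ a
  filter_eq : (S.faces.filter fun r => {v, w} ⊆ r) = {t, t'}

variable {S : CombClosedSurface V} {ψ : V → E} {d : E} {r s t t' : Finset V} {v w x a : V} {τ : ℝ}

theorem exists_hinge (ht : t ∈ S.faces) (hv : v ∈ t) (hw : w ∈ t) (hvw : v ≠ w) :
    ∃ t' x a, S.Hinge t t' v w x a := by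
  have hsub : ({v, w} : Finset V) ⊆ t := Finset.insert_subset hv (Finset.singleton_subset_iff.2 hw)
  obtain ⟨t', ht', hsub', hne, hfilter⟩ := S.exists_opposite_face (Finset.card_pair hvw) ht hsub
  obtain ⟨x, hvx, hwx, hx⟩ := exists_eq_triple (S.face_card t ht) hv hw hvw
  obtain ⟨a, hva, hwa, ha⟩ := exists_eq_triple (S.face_card t' ht') (hsub' (by simp : v ∈ _))
    (hsub' (by simp : w ∈ _)) hvw
  exact ⟨t', x, a, ht, ht', hx, ha, hvw, hvx, hwx, hva, hwa,
    fun h => hne (by rw [ha, hx, h]), hfilter⟩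

namespace Hinge

theorem swap (W : S.Hinge t t' v w x a) : S.Hinge t' t v w a x where
  left_mem := W.right_mem
  right_mem := W.left_mem
  left_eq := W.right_eq
  right_eq := W.left_eq
  v_ne_w := W.v_ne_w
  v_ne_x := W.v_ne_a
  w_ne_x := W.w_ne_a
  v_ne_a := W.v_ne_x
  w_ne_a := W.w_ne_x
  x_ne_a := W.x_ne_a.symm
  filter_eq := by rw [W.filter_eq, Finset.pair_comm]

theorem flip (W : S.Hinge t t' v w x a) : S.Hinge t t' w v x a where
  left_mem := W.left_mem
  right_mem := W.right_mem
  left_eq := by rw [W.left_eq, Finset.insert_comm]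
  right_eq := by rw [W.right_eq, Finset.insert_comm]
  v_ne_w := W.v_ne_w.symm
  v_ne_x := W.w_ne_x
  w_ne_x := W.v_ne_x
  v_ne_a := W.w_ne_a
  w_ne_a := W.v_ne_a
  x_ne_a := W.x_ne_a
  filter_eq := by rw [Finset.pair_comm, W.filter_eq]

theorem left_mem_left (W : S.Hinge t t' v w x a) : v ∈ t := by simp [W.left_eq]

theorem left_ne_right (W : S.Hinge t t' v w x a) : t ≠ t' := by
  intro h
  have hx : x ∈ t' := by simp [← h, W.left_eq]
  simp [W.right_eq, W.v_ne_x.symm, W.w_ne_x.symm, W.x_ne_a] at hx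

theorem mem_faces_and_not_mem (W : S.Hinge t t' v w x a) (hr : r ∈ (S.faces.erase t).erase t') :
    r ∈ S.faces ∧ ¬(v ∈ r ∧ w ∈ r) := by
  obtain ⟨hrt', hrt, hr⟩ : r ≠ t' ∧ r ≠ t ∧ r ∈ S.faces := by simpa using hr
  refine ⟨hr, fun ⟨hv, hw⟩ => ?_⟩
  have hmem : r ∈ S.faces.filter fun r => {v, w} ⊆ r :=
    Finset.mem_filter.2 ⟨hr, Finset.insert_subset hv (Finset.singleton_subset_iff.2 hw)⟩
  simp [W.filter_eq, hrt, hrt'] at hmem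

end Hinge

theorem cornerCover_eq (ht : t = {v, w, x}) (hvx : v ≠ x) (hwx : w ≠ x) :
    S.cornerCover ψ d t v w = ∑ r ∈ S.faces.erase t, iverson (FlagEntersPrism ψ d r v w x) := by
  have hflag (r : Finset V) : (∃ y ∈ t, y ≠ v ∧ y ≠ w ∧ FlagEntersPrism ψ d r v w y) ↔
      FlagEntersPrism ψ d r v w x := by
    simp [ht, hvx.symm, hwx.symm]
  simp only [cornerCover, hflag]

namespace GenericView

theorem flagEntersPrism_iff_foldsUnder (G : S.GenericView ψ d) (W : S.Hinge t t' v w x a) :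
    FlagEntersPrism ψ d t' v w x ↔ FoldsUnder ψ d t' a x := by
  obtain ⟨hv, hv₀⟩ := G.shadow_vertex W.right_mem W.swap.left_mem_left
  obtain ⟨hw, hw₀⟩ := G.shadow_vertex W.right_mem W.swap.flip.left_mem_left
  simp [FlagEntersPrism, FoldsUnder, LexPos, W.right_eq ▸ hv, W.right_eq ▸ hv₀, W.right_eq ▸ hw,
    W.right_eq ▸ hw₀, W.right_eq, W.v_ne_w, W.v_ne_w.symm, W.v_ne_a.symm, W.w_ne_a.symm]

theorem flagEntersPrism_iff_entersPrism (G : S.GenericView ψ d) (hr : r ∈ S.faces)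
    (hvw : ¬(v ∈ r ∧ w ∈ r)) (x : V) :
    FlagEntersPrism ψ d r v w x ↔ EntersPrism ψ d r r (ψ v) (ψ w) := by
  have hshadow : ∀ i ∈ r, ¬(shadow ψ d r (ψ v) i = 0 ∧ shadow ψ d r (ψ w) i = 0) :=
    fun i hi ⟨hv, hw⟩ => hvw ⟨Finset.mem_of_mem_erase (G.mem_erase_of_shadow_eq_zero hr hi hv),
      Finset.mem_of_mem_erase (G.mem_erase_of_shadow_eq_zero hr hi hw)⟩
  have hheight : ¬(height ψ d r (ψ v) = 0 ∧ height ψ d r (ψ w) = 0) :=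
    fun ⟨hv, hw⟩ => hvw ⟨G.mem_of_height_eq_zero hr hv, G.mem_of_height_eq_zero hr hw⟩
  refine and_congr (forall₂_congr fun i hi => ?_) ?_
  · have := hshadow i hi
    unfold LexPos
    tauto
  · unfold LexPos
    tauto

theorem cornerCover_eq_foldsUnder_add (G : S.GenericView ψ d) (W : S.Hinge t t' v w x a) :
    S.cornerCover ψ d t v w = iverson (FoldsUnder ψ d t' a x) +
      ∑ r ∈ (S.faces.erase t).erase t', iverson (EntersPrism ψ d r r (ψ v) (ψ w)) := by
  rw [cornerCover_eq W.left_eq W.v_ne_x W.w_ne_x, ← Finset.add_sum_erase _ _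
    (Finset.mem_erase.2 ⟨W.left_ne_right.symm, W.right_mem⟩), G.flagEntersPrism_iff_foldsUnder W]
  congr 1
  refine Finset.sum_congr rfl fun r hr => ?_
  obtain ⟨hr, hvw⟩ := W.mem_faces_and_not_mem hr
  rw [G.flagEntersPrism_iff_entersPrism hr hvw]

theorem cornerCover_add_cornerCover (G : S.GenericView ψ d) (W : S.Hinge t t' v w x a) :
    S.cornerCover ψ d t v w + S.cornerCover ψ d t' v w =
      iverson (FoldsUnder ψ d t' a x) + iverson (FoldsUnder ψ d t x a) := by
  rw [G.cornerCover_eq_foldsUnder_add W, G.cornerCover_eq_foldsUnder_add W.swap,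
    Finset.erase_right_comm, add_add_add_comm, CharTwo.add_self_eq_zero, add_zero]

theorem not_passesBelow (G : S.GenericView ψ d) (hr : r ∈ S.faces) {g u : Finset V} (hg : g ⊆ r)
    {x y : E} (hx : height ψ d r x = 0) (hy : height ψ d r y = 0) :
    ¬PassesBelow ψ d g u x y := by
  rintro ⟨τ, -, h, hpos, l, hl, -, hcomb⟩
  have hheight := (G.shadow_eq hr (hl.mono hg) hcomb).2
  rw [(G.shadow_lineMap hr x y τ).2, hx, hy, lineMap_same_apply] at hheight
  exact hpos.ne hheight

theorem crossesFace_iff_pierces (G : S.GenericView ψ d) (hr : r ∈ S.faces) (hvw : v ≠ w) :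
    CrossesFace ψ d r r (ψ v) (ψ w) ↔ Pierces ψ {v, w} r := by
  simp only [CrossesFace, ← G.mem_openSimplex_iff hr]
  constructor
  · rintro ⟨τ, hτ, hp⟩
    exact ⟨_, (mem_openSimplex_pair hvw).2 ⟨τ, hτ, rfl⟩, hp⟩
  · rintro ⟨p, hedge, hp⟩
    obtain ⟨τ, hτ, rfl⟩ := (mem_openSimplex_pair hvw).1 hedge
    exact ⟨τ, hτ, hp⟩

theorem disjoint_of_pierces (G : S.GenericView ψ d) (ht : t ∈ S.faces) (hs : s ∈ S.faces)
    {e : Finset V} (het : e ⊆ t) (he : e.card = 2) (h : Pierces ψ e s) : Disjoint t s := by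
  by_contra hdisj
  obtain ⟨p, ⟨l, hl, hlpos, hlp⟩, m, hm, hmpos, hmp⟩ := h
  have hlm := G.weight_eq_of_not_disjoint ht hs hdisj (hl.mono het) (weight_nonneg hl hlpos) hm
    (weight_nonneg hm hmpos) (hlp.trans hmp.symm)
  have hse : s ⊆ e := fun i hi => by
    by_contra hie
    exact (hmpos i hi).ne' (hlm ▸ hl.eq_zero i hie)
  have hcard := Finset.card_le_card hse
  rw [S.face_card s hs] at hcard
  omega

theorem not_pierces_of_subset (G : S.GenericView ψ d) (hr : r ∈ S.faces) {e : Finset V}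
    (her : e ⊆ r) (he : e.card = 2) : ¬Pierces ψ e r := by
  intro h
  have hempty := Finset.disjoint_self_iff_empty r |>.1 (G.disjoint_of_pierces hr hr her he h)
  simpa [hempty] using S.face_card r hr

theorem mem_of_isWeight_shadow (G : S.GenericView ψ d) (hr : r ∈ S.faces) (hvw : v ≠ w)
    (hτ : τ ∈ Set.Ioo (0 : ℝ) 1) (hs : s.card ≤ 2)
    (hweight : IsWeight s (shadow ψ d r (lineMap (ψ v) (ψ w) τ)))
    (hheight : height ψ d r (lineMap (ψ v) (ψ w) τ) = 0) : v ∈ s ∧ w ∈ s := by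
  have hcard : ({v, w} ∪ s).card ≤ 4 := by
    linarith [Finset.card_union_le {v, w} s, Finset.card_le_two (a := v) (b := w)]
  have heq := G.weight_eq hcard (hweight.mono Finset.subset_union_right)
    ((isWeight_edgeWeight v w τ).mono Finset.subset_union_left)
    (by rw [G.linearCombination_shadow hr, hheight, zero_smul, add_zero,
      linearCombination_edgeWeight])
  exact mem_of_isWeight_edgeWeight hvw hτ (heq ▸ hweight)

theorem one_lt_card_of_isWeight_shadow (G : S.GenericView ψ d) (hr : r ∈ S.faces) (hvw : v ≠ w)
    (hτ : τ ∈ Set.Ioo (0 : ℝ) 1)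
    (hweight : IsWeight s (shadow ψ d r (lineMap (ψ v) (ψ w) τ))) : 1 < s.card := by
  by_contra! hs
  have hcard : ({v, w} ∪ s).card ≤ 3 := by
    linarith [Finset.card_union_le {v, w} s, Finset.card_le_two (a := v) (b := w)]
  have heq := (G.weight_eq_of_parallel hcard (hweight.mono Finset.subset_union_right)
    ((isWeight_edgeWeight v w τ).mono Finset.subset_union_left)
    (by rw [G.linearCombination_shadow hr, linearCombination_edgeWeight])).1
  obtain ⟨hv, hw⟩ := mem_of_isWeight_edgeWeight hvw hτ (heq ▸ hweight)
  exact hvw (Finset.card_le_one.1 hs v hv w hw)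

theorem shadow_lineMap_ne_zero (G : S.GenericView ψ d) (hr : r ∈ S.faces) (hvw : v ≠ w)
    (hτ : τ ∈ Set.Ioo (0 : ℝ) 1) {i j : V} (hi : i ∈ r) (hj : j ∈ r) (hij : i ≠ j)
    (hzero : shadow ψ d r (lineMap (ψ v) (ψ w) τ) i = 0) :
    shadow ψ d r (lineMap (ψ v) (ψ w) τ) j ≠ 0 := by
  intro hzero'
  have hlt := G.one_lt_card_of_isWeight_shadow hr hvw hτ
    (((G.isWeight_shadow hr _).erase hzero).erase hzero')
  rw [Finset.card_erase_of_mem (Finset.mem_erase.2 ⟨hij.symm, hj⟩), Finset.card_erase_of_mem hi,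
    S.face_card r hr] at hlt
  exact lt_irrefl _ hlt

theorem mem_of_shadow_lineMap_eq_zero (G : S.GenericView ψ d) (hr : r ∈ S.faces) (hvw : v ≠ w)
    (hτ : τ ∈ Set.Ioo (0 : ℝ) 1) {i : V} (hi : i ∈ r)
    (hzero : shadow ψ d r (lineMap (ψ v) (ψ w) τ) i = 0)
    (hheight : height ψ d r (lineMap (ψ v) (ψ w) τ) = 0) : v ∈ r.erase i ∧ w ∈ r.erase i := by
  refine G.mem_of_isWeight_shadow hr hvw hτ ?_ ((G.isWeight_shadow hr _).erase hzero) hheight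
  rw [Finset.card_erase_of_mem hi, S.face_card r hr]

theorem iverson_entersPrism_edge_add_swap (G : S.GenericView ψ d) (hr : r ∈ S.faces)
    (hvw : v ≠ w) (hmem : ¬(v ∈ r ∧ w ∈ r)) :
    iverson (EntersPrism ψ d r r (ψ v) (ψ w)) + iverson (EntersPrism ψ d r r (ψ w) (ψ v)) +
      iverson (Pierces ψ {v, w} r) +
      ∑ i ∈ r, iverson (PassesBelow ψ d (r.erase i) (r.erase i) (ψ v) (ψ w)) = 0 := by
  rw [← G.crossesFace_iff_pierces hr hvw]
  refine G.iverson_entersPrism_add_swap hr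
    (fun τ hτ i hi j hj hij => G.shadow_lineMap_ne_zero hr hvw hτ hi hj hij)
    (fun τ hτ hheight _ i hi hzero => ?_) (fun i hi hv hw => ?_) (fun _ hv hw => ?_)
  · obtain ⟨hv, hw⟩ := G.mem_of_shadow_lineMap_eq_zero hr hvw hτ hi hzero hheight
    exact hmem ⟨Finset.mem_of_mem_erase hv, Finset.mem_of_mem_erase hw⟩
  · exact hmem ⟨Finset.mem_of_mem_erase (G.mem_erase_of_shadow_eq_zero hr hi hv),
      Finset.mem_of_mem_erase (G.mem_erase_of_shadow_eq_zero hr hi hw)⟩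
  · exact hmem ⟨G.mem_of_height_eq_zero hr hv, G.mem_of_height_eq_zero hr hw⟩

theorem cornerCover_add_flip (G : S.GenericView ψ d) (W : S.Hinge t t' v w x a) :
    S.cornerCover ψ d t v w + S.cornerCover ψ d t w v = S.piercingParity ψ {v, w} := by
  have hrest {f : Finset V → ZMod 2} (hf : ∀ r ∈ S.faces, v ∈ r → w ∈ r → f r = 0) :
      ∑ r ∈ (S.faces.erase t).erase t', f r = ∑ r ∈ S.faces, f r := by
    rw [Finset.sum_erase _ (hf t' W.right_mem W.swap.left_mem_left W.swap.flip.left_mem_left),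
      Finset.sum_erase _ (hf t W.left_mem W.left_mem_left W.flip.left_mem_left)]
  have hbelow : ∑ r ∈ (S.faces.erase t).erase t',
      ∑ i ∈ r, iverson (PassesBelow ψ d (r.erase i) (r.erase i) (ψ v) (ψ w)) = 0 := by
    rw [hrest, S.sum_faces_sum_erase_eq_zero fun e => iverson (PassesBelow ψ d e e (ψ v) (ψ w))]
    exact fun r hr hv hw => Finset.sum_eq_zero fun i _ => iverson_neg <|
      G.not_passesBelow hr (Finset.erase_subset _ _) (G.shadow_vertex hr hv).2
        (G.shadow_vertex hr hw).2
  have hpierces : ∑ r ∈ (S.faces.erase t).erase t', iverson (Pierces ψ {v, w} r) =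
      S.piercingParity ψ {v, w} :=
    hrest fun r hr hv hw => iverson_neg <| G.not_pierces_of_subset hr
      (Finset.insert_subset hv (Finset.singleton_subset_iff.2 hw)) (Finset.card_pair W.v_ne_w)
  have hsum := Finset.sum_eq_zero fun r hr =>
    G.iverson_entersPrism_edge_add_swap (W.mem_faces_and_not_mem hr).1 W.v_ne_w
      (W.mem_faces_and_not_mem hr).2
  rw [Finset.sum_add_distrib, Finset.sum_add_distrib, Finset.sum_add_distrib, hbelow, hpierces,
    add_zero, CharTwo.add_eq_zero] at hsum
  rw [G.cornerCover_eq_foldsUnder_add W, G.cornerCover_eq_foldsUnder_add W.flip,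
    add_add_add_comm, CharTwo.add_self_eq_zero, zero_add, hsum]

end GenericView

end CombClosedSurface

theorem iverson_eq_one (c : ZMod 2) : iverson (c = 1) = c := by
  have h : ∀ c : ZMod 2, c ≠ 1 → 0 = c := by decide
  unfold iverson
  split_ifs with hc
  · exact hc.symm
  · exact h c hc

namespace CombClosedSurface

open AffineMap

variable {V : Type*} [DecidableEq V] [Fintype V] {E : Type*} [AddCommGroup E] [Module ℝ E]

/-- The parity of the number of faces that cover the face `t` near its vertex `v`. By
`GenericView.cornerCover_eq_cornerCover` all flags at `v` give the same parity. -/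
noncomputable def vertexCover (S : CombClosedSurface V) (ψ : V → E) (d : E) (t : Finset V) (v : V) :
    ZMod 2 :=
  iverson (∃ w ∈ t, w ≠ v ∧ S.cornerCover ψ d t v w = 1)

namespace GenericView

variable {S : CombClosedSurface V} {ψ : V → E} {d : E} {r t t' : Finset V} {v w x a : V}

theorem flagEntersPrism_comm (G : S.GenericView ψ d) (hr : r ∈ S.faces) (hv : v ∉ r) (w x : V) :
    FlagEntersPrism ψ d r v w x ↔ FlagEntersPrism ψ d r v x w := by
  have hshadow : ∀ i ∈ r, shadow ψ d r (ψ v) i ≠ 0 := fun i hi hzero =>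
    hv (Finset.mem_of_mem_erase (G.mem_erase_of_shadow_eq_zero hr hi hzero))
  have hheight : height ψ d r (ψ v) ≠ 0 := fun hzero => hv (G.mem_of_height_eq_zero hr hzero)
  refine and_congr (forall₂_congr fun i hi => ?_) ?_
  · simp only [LexPos, hshadow i hi, false_and]
  · simp only [LexPos, hheight, false_and]

theorem flagEntersPrism_iff_of_mem (G : S.GenericView ψ d) (hr : r ∈ S.faces) (hv : v ∈ r)
    (w x : V) : FlagEntersPrism ψ d r v w x ↔ EntersPrism ψ d r (r.erase v) (ψ w) (ψ x) := by
  obtain ⟨hshadow, hheight⟩ := G.shadow_vertex hr hv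
  refine and_congr ⟨fun h i hi => ?_, fun h i hi => ?_⟩ (by simp [LexPos, hheight])
  · obtain ⟨hiv, hi⟩ := Finset.mem_erase.1 hi
    simpa [LexPos, hshadow, hiv] using h i hi
  · obtain rfl | hiv := eq_or_ne i v
    · simp [LexPos, hshadow]
    · simpa [LexPos, hshadow, hiv] using h i (Finset.mem_erase.2 ⟨hiv, hi⟩)

/-- If the edge `wx` crossed the sector of `r` at `v`, the triangles `vwx` and `r` would share a
point close to `v`, contrary to the immersion property. -/
theorem not_crossesFace_erase (G : S.GenericView ψ d) (ht : {v, w, x} ∈ S.faces) (hr : r ∈ S.faces)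
    (hv : v ∈ r) (hwx : w ≠ x) (hmem : ¬(w ∈ r ∧ x ∈ r)) :
    ¬CrossesFace ψ d r (r.erase v) (ψ w) (ψ x) := by
  rintro ⟨τ, hτ, hheight, hpos⟩
  set q := lineMap (ψ w) (ψ x) τ
  obtain ⟨ε, hε₀, hε₁, hε⟩ :
      ∃ ε : ℝ, 0 < ε ∧ ε ≤ 1 ∧ 0 ≤ 1 - ε + ε * shadow ψ d r q v := by
    have hc : 0 < 1 + |shadow ψ d r q v| := by positivity
    refine ⟨(1 + |shadow ψ d r q v|)⁻¹, inv_pos.2 hc, inv_le_one_of_one_le₀ (by simp), ?_⟩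
    have hfactor : 1 - (1 + |shadow ψ d r q v|)⁻¹ + (1 + |shadow ψ d r q v|)⁻¹ * shadow ψ d r q v =
        (1 + |shadow ψ d r q v|)⁻¹ * (|shadow ψ d r q v| + shadow ψ d r q v) := by
      field_simp
      ring
    rw [hfactor]
    exact mul_nonneg (inv_nonneg.2 hc.le) (by linarith [neg_abs_le (shadow ψ d r q v)])
  have heq := G.weight_eq_of_not_disjoint ht hr (Finset.not_disjoint_iff.2 ⟨v, by simp, hv⟩)
    (l := lineMap (Pi.single v 1 : V → ℝ) (edgeWeight w x τ) ε)
    (m := lineMap (Pi.single v 1 : V → ℝ) (shadow ψ d r q) ε)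
    ((isWeight_single (by simp)).lineMap
      ((isWeight_edgeWeight w x τ).mono (Finset.subset_insert _ _)) ε)
    (fun i => lineMap_coord_nonneg (single_one_nonneg v i) (edgeWeight_nonneg hτ.1.le hτ.2.le i)
      hε₀.le hε₁)
    ((isWeight_single hv).lineMap (G.isWeight_shadow hr q) ε) (fun i => ?_) ?_
  · have hweight : edgeWeight w x τ = shadow ψ d r q := by
      simpa [lineMap_apply_module, hε₀.ne'] using heq
    exact hmem (mem_of_isWeight_edgeWeight hwx hτ (hweight ▸ G.isWeight_shadow hr q))
  · obtain rfl | hiv := eq_or_ne i v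
    · simpa [lineMap_apply_coord] using hε
    refine lineMap_coord_nonneg (single_one_nonneg v i) ?_ hε₀.le hε₁
    by_cases hi : i ∈ r
    · exact (hpos i (Finset.mem_erase.2 ⟨hiv, hi⟩)).le
    · exact ((G.isWeight_shadow hr q).eq_zero i hi).ge
  · rw [linearCombination_lineMap, linearCombination_lineMap, G.linearCombination_shadow hr,
      linearCombination_edgeWeight, hheight, zero_smul, add_zero]

theorem iverson_flagEntersPrism_add_swap (G : S.GenericView ψ d) (ht : {v, w, x} ∈ S.faces)
    (hr : r ∈ S.faces) (hne : r ≠ {v, w, x}) (hwx : w ≠ x) :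
    iverson (FlagEntersPrism ψ d r v w x) + iverson (FlagEntersPrism ψ d r v x w) +
      ∑ i ∈ r, iverson (v ∈ r.erase i ∧
        PassesBelow ψ d (r.erase i) ((r.erase i).erase v) (ψ w) (ψ x)) = 0 := by
  by_cases hv : v ∈ r
  · have hmem : ¬(w ∈ r ∧ x ∈ r) := fun ⟨hw, hx⟩ =>
      hne (S.face_eq_of_subset ht hr (by simp [Finset.insert_subset_iff, hv, hw, hx])).symm
    rw [G.flagEntersPrism_iff_of_mem hr hv w x, G.flagEntersPrism_iff_of_mem hr hv x w,
      ← Finset.add_sum_erase _ _ hv,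
      iverson_neg (P := v ∈ r.erase v ∧ _) fun h => Finset.notMem_erase v r h.1, zero_add]
    have hparity := G.iverson_entersPrism_add_swap hr (u := r.erase v) (x := ψ w) (y := ψ x)
      (fun τ hτ i hi j hj hij => G.shadow_lineMap_ne_zero hr hwx hτ (Finset.mem_of_mem_erase hi)
        (Finset.mem_of_mem_erase hj) hij)
      (fun τ hτ hheight _ i hi hzero => ?_) (fun i hi hw hx => ?_) (fun _ hw hx => ?_)
    · rw [iverson_neg (G.not_crossesFace_erase ht hr hv hwx hmem), add_zero] at hparity
      rw [← hparity]
      congr 1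
      refine Finset.sum_congr rfl fun i hi => ?_
      rw [Finset.erase_right_comm,
        and_iff_right (Finset.mem_erase.2 ⟨(Finset.ne_of_mem_erase hi).symm, hv⟩)]
    · obtain ⟨hw, hx⟩ := G.mem_of_shadow_lineMap_eq_zero hr hwx hτ (Finset.mem_of_mem_erase hi)
        hzero hheight
      exact hmem ⟨Finset.mem_of_mem_erase hw, Finset.mem_of_mem_erase hx⟩
    · have hi := Finset.mem_of_mem_erase hi
      exact hmem ⟨Finset.mem_of_mem_erase (G.mem_erase_of_shadow_eq_zero hr hi hw),
        Finset.mem_of_mem_erase (G.mem_erase_of_shadow_eq_zero hr hi hx)⟩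
    · exact hmem ⟨G.mem_of_height_eq_zero hr hw, G.mem_of_height_eq_zero hr hx⟩
  · rw [G.flagEntersPrism_comm hr hv w x, CharTwo.add_self_eq_zero, zero_add]
    exact Finset.sum_eq_zero fun i _ => iverson_neg fun h => hv (Finset.mem_of_mem_erase h.1)

theorem cornerCover_eq_cornerCover (G : S.GenericView ψ d) (ht : t ∈ S.faces)
    (heq : t = {v, w, x}) (hvw : v ≠ w) (hvx : v ≠ x) (hwx : w ≠ x) :
    S.cornerCover ψ d t v w = S.cornerCover ψ d t v x := by
  have hbelow : ∑ r ∈ S.faces.erase t, ∑ i ∈ r, iverson (v ∈ r.erase i ∧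
      PassesBelow ψ d (r.erase i) ((r.erase i).erase v) (ψ w) (ψ x)) = 0 := by
    rw [Finset.sum_erase, S.sum_faces_sum_erase_eq_zero fun e =>
      iverson (v ∈ e ∧ PassesBelow ψ d e (e.erase v) (ψ w) (ψ x))]
    exact Finset.sum_eq_zero fun i _ => iverson_neg fun h => G.not_passesBelow ht
      (Finset.erase_subset _ _) (G.shadow_vertex ht (by simp [heq])).2
      (G.shadow_vertex ht (by simp [heq])).2 h.2
  have hsum : ∑ r ∈ S.faces.erase t, (iverson (FlagEntersPrism ψ d r v w x) +
      iverson (FlagEntersPrism ψ d r v x w) + ∑ i ∈ r, iverson (v ∈ r.erase i ∧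
        PassesBelow ψ d (r.erase i) ((r.erase i).erase v) (ψ w) (ψ x))) = 0 :=
    Finset.sum_eq_zero fun r hr => G.iverson_flagEntersPrism_add_swap (heq ▸ ht)
      (Finset.mem_of_mem_erase hr) (heq ▸ Finset.ne_of_mem_erase hr) hwx
  rw [Finset.sum_add_distrib, Finset.sum_add_distrib, hbelow, add_zero, CharTwo.add_eq_zero] at hsum
  rw [cornerCover_eq heq hvx hwx, hsum,
    cornerCover_eq (heq.trans (by rw [Finset.pair_comm])) hvw hwx.symm]

theorem vertexCover_eq (G : S.GenericView ψ d) (ht : t ∈ S.faces) (hv : v ∈ t) (hw : w ∈ t)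
    (hvw : v ≠ w) : S.vertexCover ψ d t v = S.cornerCover ψ d t v w := by
  obtain ⟨x, hvx, hwx, heq⟩ := exists_eq_triple (S.face_card t ht) hv hw hvw
  have hiff : (∃ y ∈ t, y ≠ v ∧ S.cornerCover ψ d t v y = 1) ↔ S.cornerCover ψ d t v w = 1 := by
    have hother := G.cornerCover_eq_cornerCover ht heq hvw hvx hwx
    refine ⟨?_, fun h => ⟨w, hw, hvw.symm, h⟩⟩
    rintro ⟨y, hy, hyv, hone⟩
    rw [heq, Finset.mem_insert, Finset.mem_insert, Finset.mem_singleton] at hy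
    rcases hy with rfl | rfl | rfl
    · exact absurd rfl hyv
    · exact hone
    · rwa [hother]
  rw [vertexCover, hiff, iverson_eq_one]

theorem vertexCover_add_vertexCover (G : S.GenericView ψ d) (ht : t ∈ S.faces) (hv : v ∈ t)
    (hw : w ∈ t) (hvw : v ≠ w) :
    S.vertexCover ψ d t v + S.vertexCover ψ d t w = S.piercingParity ψ {v, w} := by
  obtain ⟨t', x, a, W⟩ := exists_hinge ht hv hw hvw
  rw [G.vertexCover_eq ht hv hw hvw, G.vertexCover_eq ht hw hv hvw.symm, G.cornerCover_add_flip W]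

theorem sum_vertexCover (G : S.GenericView ψ d) (W : S.Hinge t t' v w x a) :
    ∑ r ∈ S.faces with {v, w} ⊆ r, S.vertexCover ψ d r v =
      iverson (FoldsUnder ψ d t' a x) + iverson (FoldsUnder ψ d t x a) := by
  rw [W.filter_eq, Finset.sum_pair W.left_ne_right, ← G.cornerCover_add_cornerCover W,
    G.vertexCover_eq W.left_mem W.left_mem_left W.flip.left_mem_left W.v_ne_w,
    G.vertexCover_eq W.right_mem W.swap.left_mem_left W.swap.flip.left_mem_left W.v_ne_w]

end GenericView

end CombClosedSurface

/-! ### Folds -/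

section Orientation

variable {V : Type*} {E : Type*} [AddCommGroup E] [Module ℝ E]

/-- The signed area, in units depending on the basis `b`, of the projection of the triangle `ijk`
along `d`. -/
noncomputable def projectedArea (b : Module.Basis (Fin 3) ℝ E) (ψ : V → E) (d : E)
    (i j k : V) : ℝ :=
  b.det ![ψ j - ψ i, ψ k - ψ i, d]

variable (b : Module.Basis (Fin 3) ℝ E) (ψ : V → E) (d : E) (i j k : V)

theorem projectedArea_swap_left :
    projectedArea b ψ d j i k = -projectedArea b ψ d i j k := by
  simp only [projectedArea, Module.Basis.det_apply, Matrix.det_fin_three,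
    Module.Basis.toMatrix_apply, Matrix.cons_val, map_sub, Finsupp.sub_apply]
  ring

theorem projectedArea_rotate : projectedArea b ψ d j k i = projectedArea b ψ d i j k := by
  simp only [projectedArea, Module.Basis.det_apply, Matrix.det_fin_three,
    Module.Basis.toMatrix_apply, Matrix.cons_val, map_sub, Finsupp.sub_apply]
  ring

end Orientation

theorem iverson_pos_and_add {l h : ℝ} (hl : l ≠ 0) (hh : h ≠ 0) :
    iverson (0 < l ∧ 0 < h) + iverson (0 < l⁻¹ ∧ 0 < -l⁻¹ * h) = iverson (0 < l) := by
  rcases hl.lt_or_gt with hl | hl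
  · simp [iverson, hl.not_gt]
  · rcases hh.lt_or_gt with hh | hh
    · have hneg : 0 < -l⁻¹ * h := by
        rw [neg_mul, neg_pos]
        exact mul_neg_of_pos_of_neg (inv_pos.2 hl) hh
      simp [iverson, hl, hh.not_gt, -neg_mul, hneg]
    · simp [iverson, hl, hh, (mul_pos (inv_pos.2 hl) hh).le]

theorem iverson_mul_neg_add {l m : ℝ} (hl : l ≠ 0) (hm : m ≠ 0) :
    1 + (iverson (l * m < 0) + iverson (m < 0)) = iverson (0 < l) := by
  rcases hl.lt_or_gt with hl | hl <;> rcases hm.lt_or_gt with hm | hm <;>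
    simp [iverson, mul_neg_iff, hl, hm, hl.not_gt, hm.not_gt, CharTwo.add_self_eq_zero]

theorem iverson_neg_lt_zero {m : ℝ} (hm : m ≠ 0) : iverson (-m < 0) = 1 + iverson (m < 0) := by
  rcases hm.lt_or_gt with hm | hm <;> simp [iverson, hm, hm.not_gt, CharTwo.add_self_eq_zero]

namespace CombClosedSurface

open AffineMap

variable {V : Type*} [DecidableEq V] [Fintype V] {E : Type*} [AddCommGroup E] [Module ℝ E]

/-- The fold number of the edge `e`, as a parity: `1` if the two faces at `e` project along `d` to
the same side of `e`. By `GenericView.fold_eq_iverson` it does not depend on the orientation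
conventions used to define it. -/
noncomputable def fold (S : CombClosedSurface V) (b : Module.Basis (Fin 3) ℝ E) (ψ : V → E) (d : E)
    (O : S.FaceOrder) (e : Finset V) : ZMod 2 :=
  1 + ∑ t ∈ S.faces with e ⊆ t, ((if e = {O.low t, O.high t} then 1 else 0) +
    iverson (projectedArea b ψ d (O.low t) (O.mid t) (O.high t) < 0))

namespace GenericView

variable {S : CombClosedSurface V} {ψ : V → E} {d : E} {t t' : Finset V} {v w x a i j k : V}

section Area

theorem shadow_hinge_ne_zero (G : S.GenericView ψ d) (W : S.Hinge t t' v w x a) :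
    shadow ψ d t' (ψ x) a ≠ 0 := fun h => by
  have hx := Finset.mem_of_mem_erase
    (G.mem_erase_of_shadow_eq_zero W.right_mem (by simp [W.right_eq]) h)
  simp [W.right_eq, W.v_ne_x.symm, W.w_ne_x.symm, W.x_ne_a] at hx

theorem shadow_hinge_left (G : S.GenericView ψ d) (W : S.Hinge t t' v w x a) :
    shadow ψ d t (ψ a) x = (shadow ψ d t' (ψ x) a)⁻¹ ∧
      height ψ d t (ψ a) = -(shadow ψ d t' (ψ x) a)⁻¹ * height ψ d t' (ψ x) := by
  have hne := G.shadow_hinge_ne_zero W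
  have hL := G.isWeight_shadow W.right_mem (ψ x)
  have hcomb := G.linearCombination_shadow W.right_mem (ψ x)
  set L := shadow ψ d t' (ψ x)
  have hx : L x = 0 := hL.eq_zero x (by simp [W.right_eq, W.v_ne_x.symm, W.w_ne_x.symm, W.x_ne_a])
  have hl : IsWeight t ((L a)⁻¹ • (Pi.single x 1 - L) + Pi.single a 1) := by
    refine ⟨fun i hi => ?_, ?_⟩
    · simp only [W.left_eq, Finset.mem_insert, Finset.mem_singleton, not_or] at hi
      obtain rfl | hia := eq_or_ne i a
      · simp [hne, W.x_ne_a.symm]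
      · simp [hia, hi.2.2, hL.eq_zero i (by simp [W.right_eq, hi.1, hi.2.1, hia])]
    · simp [Finset.sum_add_distrib, ← Finset.mul_sum, Finset.sum_sub_distrib, hL.sum_eq_one]
  obtain ⟨hshadow, hheight⟩ := G.shadow_eq W.left_mem hl (p := ψ a)
    (γ := -(L a)⁻¹ * height ψ d t' (ψ x)) (by
      rw [map_add, map_smul, map_sub, hcomb, linearCombination_single_one,
        linearCombination_single_one]
      module)
  exact ⟨by simp [hshadow, hx, W.x_ne_a], hheight⟩

theorem iverson_foldsUnder_add (G : S.GenericView ψ d) (W : S.Hinge t t' v w x a) :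
    iverson (FoldsUnder ψ d t' a x) + iverson (FoldsUnder ψ d t x a) =
      iverson (0 < shadow ψ d t' (ψ x) a) := by
  have hx : x ∉ t' := by simp [W.right_eq, W.v_ne_x.symm, W.w_ne_x.symm, W.x_ne_a]
  obtain ⟨hshadow, hheight⟩ := G.shadow_hinge_left W
  rw [FoldsUnder, FoldsUnder, hshadow, hheight]
  exact iverson_pos_and_add (G.shadow_hinge_ne_zero W)
    fun h => hx (G.mem_of_height_eq_zero W.right_mem h)

theorem projectedArea_ne_zero (G : S.GenericView ψ d) (b : Module.Basis (Fin 3) ℝ E)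
    (hij : i ≠ j) (hik : i ≠ k) (hjk : j ≠ k) : projectedArea b ψ d i j k ≠ 0 := by
  have hli : LinearIndependent ℝ ![ψ j - ψ i, ψ k - ψ i, d] := by
    refine Fintype.linearIndependent_iff.2 fun g hg => ?_
    simp only [Fin.sum_univ_three, Matrix.cons_val] at hg
    obtain ⟨hm, hγ⟩ := G.eq_zero_of_linearCombination_eq_smul (u := {i, j, k}) (γ := -g 2)
      (m := g 0 • (Pi.single j 1 - Pi.single i 1) + g 1 • (Pi.single k 1 - Pi.single i 1))
      Finset.card_le_three
      (fun n hn => by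
        simp only [Finset.mem_insert, Finset.mem_singleton, not_or] at hn
        simp [hn.1, hn.2.1, hn.2.2])
      (by simp [Finset.sum_add_distrib, ← Finset.mul_sum])
      (by
        simp only [map_add, map_smul, map_sub, linearCombination_single_one]
        rw [neg_smul]
        exact eq_neg_of_add_eq_zero_left hg)
    have hj := congrFun hm j
    have hk := congrFun hm k
    simp [hij.symm, hjk, hik.symm, hjk.symm] at hj hk
    simpa [Fin.forall_fin_succ, hj, hk] using hγ
  have hspan := hli.span_eq_top_of_card_eq_finrank (by simp [G.finrank_eq_three])
  exact (b.is_basis_iff_det.1 ⟨hli, hspan⟩).ne_zero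

theorem projectedArea_hinge (G : S.GenericView ψ d) (b : Module.Basis (Fin 3) ℝ E)
    (W : S.Hinge t t' v w x a) :
    projectedArea b ψ d v w x = shadow ψ d t' (ψ x) a * projectedArea b ψ d v w a := by
  have hL := G.isWeight_shadow W.right_mem (ψ x)
  have hcomb := G.linearCombination_shadow W.right_mem (ψ x)
  have hsum := hL.sum_eq_one
  rw [← sum_smul_eq_linearCombination ψ hL.eq_zero] at hcomb
  rw [← sum_eq_sum_univ hL.eq_zero] at hsum
  set L := shadow ψ d t' (ψ x)
  set γ := height ψ d t' (ψ x)
  rw [W.right_eq, Finset.sum_insert (by simp [W.v_ne_w, W.v_ne_a]), Finset.sum_pair W.w_ne_a]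
    at hsum hcomb
  have hx : ψ x - ψ v = L w • (ψ w - ψ v) + L a • (ψ a - ψ v) - γ • d := by
    rw [eq_sub_of_add_eq hcomb.symm, eq_sub_of_add_eq hsum]
    module
  clear_value L γ
  rw [projectedArea, hx]
  simp only [projectedArea, Module.Basis.det_apply, Matrix.det_fin_three,
    Module.Basis.toMatrix_apply, Matrix.cons_val, map_sub, map_add, map_smul, Finsupp.sub_apply,
    Finsupp.add_apply, Finsupp.smul_apply, smul_eq_mul]
  ring

end Area

section FoldNumber

/-- Listing the face `vwx` in the order `v, w, x` instead of by rank is an odd permutation exactly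
when one, but not both, of the conditions `{v, w} = {low, high}` and `rank w < rank v` holds. -/
theorem iverson_projectedArea_neg (G : S.GenericView ψ d) (b : Module.Basis (Fin 3) ℝ E)
    (O : S.FaceOrder) (ht : t ∈ S.faces) (heq : t = {v, w, x}) (hvw : v ≠ w) (hvx : v ≠ x)
    (hwx : w ≠ x) :
    (if ({v, w} : Finset V) = {O.low t, O.high t} then 1 else 0) +
        iverson (projectedArea b ψ d (O.low t) (O.mid t) (O.high t) < 0) =
      iverson (projectedArea b ψ d v w x < 0) + iverson (O.rank w < O.rank v) := by
  have hlm := O.low_lt_mid t ht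
  have hmh := O.mid_lt_high t ht
  have hpair : ({v, w} : Finset V) = {O.low t, O.high t} ↔ x = O.mid t := by
    have hx : ({v, w} : Finset V) = t.erase x := by grind
    have hmid : ({O.low t, O.high t} : Finset V) = t.erase (O.mid t) := by
      grind [O.mem_iff ht, O.low_ne_mid ht, O.mid_ne_high ht]
    rw [hx, hmid, Finset.erase_inj _ (by simp [heq])]
  have hneg := iverson_neg_lt_zero
    (G.projectedArea_ne_zero b (O.low_ne_mid ht) (O.low_ne_high ht) (O.mid_ne_high ht))
  have hlm_ne := O.low_ne_mid ht
  have hmh_ne := O.mid_ne_high ht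
  have hcases : (v = O.low t ∧ w = O.mid t ∧ x = O.high t) ∨
      (v = O.mid t ∧ w = O.high t ∧ x = O.low t) ∨
      (v = O.high t ∧ w = O.low t ∧ x = O.mid t) ∨
      (v = O.mid t ∧ w = O.low t ∧ x = O.high t) ∨
      (v = O.low t ∧ w = O.high t ∧ x = O.mid t) ∨
      (v = O.high t ∧ w = O.mid t ∧ x = O.low t) := by
    grind [O.mem_iff ht v, O.mem_iff ht w, O.mem_iff ht x]
  simp only [hpair]
  clear hpair heq
  have hlh := hlm.trans hmh
  rcases hcases with ⟨rfl, rfl, rfl⟩ | ⟨rfl, rfl, rfl⟩ | ⟨rfl, rfl, rfl⟩ | ⟨rfl, rfl, rfl⟩ |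
    ⟨rfl, rfl, rfl⟩ | ⟨rfl, rfl, rfl⟩
  · simp [iverson_neg hlm.not_gt, hmh_ne.symm]
  · simp [iverson_neg hmh.not_gt, hlm_ne, projectedArea_rotate]
  · simp [iverson_pos hlh, ← projectedArea_rotate b ψ d (O.high t), add_comm]
  · rw [projectedArea_swap_left b ψ d (O.low t), hneg, add_right_comm]
    simp [iverson_pos hlm, hmh_ne.symm, CharTwo.add_self_eq_zero]
  · rw [projectedArea_swap_left b ψ d (O.high t), projectedArea_rotate b ψ d (O.mid t),
      projectedArea_rotate b ψ d (O.low t), hneg]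
    simp [iverson_neg hlh.not_gt]
  · rw [projectedArea_swap_left b ψ d (O.mid t) (O.high t),
      projectedArea_rotate b ψ d (O.low t), hneg, add_right_comm]
    simp [iverson_pos hmh, hlm_ne, CharTwo.add_self_eq_zero]

theorem fold_eq_iverson (G : S.GenericView ψ d) (b : Module.Basis (Fin 3) ℝ E) (O : S.FaceOrder)
    (W : S.Hinge t t' v w x a) :
    S.fold b ψ d O {v, w} = iverson (0 < shadow ψ d t' (ψ x) a) := by
  rw [fold, W.filter_eq, Finset.sum_pair W.left_ne_right,
    G.iverson_projectedArea_neg b O W.left_mem W.left_eq W.v_ne_w W.v_ne_x W.w_ne_x,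
    G.iverson_projectedArea_neg b O W.right_mem W.right_eq W.v_ne_w W.v_ne_a W.w_ne_a,
    add_add_add_comm, CharTwo.add_self_eq_zero, add_zero, G.projectedArea_hinge b W]
  exact iverson_mul_neg_add (G.shadow_hinge_ne_zero W)
    (G.projectedArea_ne_zero b W.v_ne_w W.v_ne_a W.w_ne_a)

theorem fold_eq_sum_vertexCover (G : S.GenericView ψ d) (b : Module.Basis (Fin 3) ℝ E)
    (O : S.FaceOrder) {e : Finset V} (he : e ∈ S.edgeSet) (hv : v ∈ e) :
    S.fold b ψ d O e = ∑ t ∈ S.faces with e ⊆ t, S.vertexCover ψ d t v := by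
  obtain ⟨hcard, t, ht, het⟩ := S.mem_edgeSet.1 he
  obtain ⟨w, hw⟩ := Finset.card_eq_one.1
    (show (e.erase v).card = 1 by rw [Finset.card_erase_of_mem hv, hcard])
  obtain rfl : e = {v, w} := by rw [← Finset.insert_erase hv, hw]
  have hvw : v ≠ w := by
    rintro rfl
    simp at hcard
  obtain ⟨t', x, a, W⟩ := exists_hinge ht (het hv) (het (by simp)) hvw
  rw [G.fold_eq_iverson b O W, G.sum_vertexCover W, G.iverson_foldsUnder_add W]

end FoldNumber

end GenericView

end CombClosedSurface

/-! ### Double segments -/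

section Rays

variable {V : Type*} {R : Submodule ℝ (V → ℝ)} {u : Finset V} {k : V}

/-- The relations in `R` that are nonnegative on `u` have an extremal ray that is positive on `u`
except at `k`. -/
def HasRay (R : Submodule ℝ (V → ℝ)) (u : Finset V) (k : V) : Prop :=
  ∃ g ∈ R, g k = 0 ∧ ∀ i ∈ u, i ≠ k → 0 < g i

/-- `R` is a plane none of whose nonzero vectors vanishes at two elements of `u`. -/
structure IsGenericPlane (R : Submodule ℝ (V → ℝ)) (u : Finset V) : Prop where
  eq_zero : ∀ g ∈ R, ∀ i ∈ u, ∀ j ∈ u, i ≠ j → g i = 0 → g j = 0 → g = 0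
  exists_ne_zero : ∀ i ∈ u, ∃ g ∈ R, g i = 0 ∧ g ≠ 0

theorem exists_sub_smul_nonneg (hu : u.Nonempty) {g : V → ℝ} (hg : ∀ i ∈ u, 0 < g i) (f : V → ℝ) :
    ∃ c : ℝ, (∃ k ∈ u, (f - c • g) k = 0) ∧ ∀ i ∈ u, 0 ≤ (f - c • g) i := by
  obtain ⟨k, hk, hmin⟩ := u.exists_min_image (fun i => f i / g i) hu
  refine ⟨f k / g k, ⟨k, hk, ?_⟩, fun i hi => ?_⟩
  · rw [Pi.sub_apply, Pi.smul_apply, smul_eq_mul, div_mul_cancel₀ _ (hg k hk).ne', sub_self]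
  · exact sub_nonneg.2 ((le_div_iff₀ (hg i hi)).1 (hmin i hi))

namespace IsGenericPlane

theorem hasRay (P : IsGenericPlane R u) {g : V → ℝ} (hg : g ∈ R) (hne : g ≠ 0)
    (hnonneg : ∀ i ∈ u, 0 ≤ g i) (hk : k ∈ u) (hzero : g k = 0) : HasRay R u k :=
  ⟨g, hg, hzero, fun i hi hik =>
    (hnonneg i hi).lt_of_ne' fun h => hne (P.eq_zero g hg i hi k hk hik h hzero)⟩

theorem exists_hasRay (P : IsGenericPlane R u) (hu : u.Nonempty) {g : V → ℝ} (hg : g ∈ R)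
    (hne : g ≠ 0) (hnonneg : ∀ i ∈ u, 0 ≤ g i) : ∃ k ∈ u, HasRay R u k := by
  by_cases hpos : ∀ i ∈ u, 0 < g i
  · obtain ⟨j, hj⟩ := hu
    obtain ⟨f, hf, hfj, hf₀⟩ := P.exists_ne_zero j hj
    obtain ⟨c, ⟨k, hk, hzero⟩, hnonneg'⟩ := exists_sub_smul_nonneg ⟨j, hj⟩ hpos f
    refine ⟨k, hk, P.hasRay (R.sub_mem hf (R.smul_mem c hg)) (fun h => hf₀ ?_) hnonneg' hk hzero⟩
    have hc : c = 0 := by simpa [hfj, (hpos j hj).ne'] using congrFun h j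
    simpa [hc] using h
  · push Not at hpos
    obtain ⟨k, hk, hle⟩ := hpos
    exact ⟨k, hk, P.hasRay hg hne hnonneg hk (hle.antisymm (hnonneg k hk))⟩

theorem exists_pos [DecidableEq V] (P : IsGenericPlane R u) (hu : (u.erase k).Nonempty)
    (hk : k ∈ u) : ∃ f ∈ R, 0 < f k := by
  obtain ⟨j, hj⟩ := hu
  rw [Finset.mem_erase] at hj
  obtain ⟨f, hf, hfj, hf₀⟩ := P.exists_ne_zero j hj.2
  rcases lt_or_gt_of_ne fun h => hf₀ (P.eq_zero f hf k hk j hj.2 hj.1.symm h hfj) with h | h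
  · exact ⟨-f, R.neg_mem hf, neg_pos.2 h⟩
  · exact ⟨f, hf, h⟩

/-- The combination of three such rays that eliminates the coordinates `i` and `j` is zero, but its
coordinate `k` would be negative. -/
theorem eq_or_eq_of_hasRay (P : IsGenericPlane R u) {i j k : V} (hi : i ∈ u) (hj : j ∈ u)
    (hk : k ∈ u) (hij : i ≠ j) (h_i : HasRay R u i) (h_j : HasRay R u j) (h_k : HasRay R u k) :
    k = i ∨ k = j := by
  by_contra! hne
  obtain ⟨f, hf, hfi, hf_pos⟩ := h_i
  obtain ⟨g, hg, hgj, hg_pos⟩ := h_j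
  obtain ⟨h, hh, hhk, hh_pos⟩ := h_k
  have hgi := hg_pos i hi hij
  have hfj := hf_pos j hj hij.symm
  have hfk := hf_pos k hk hne.1
  have hmem : (f j * g i) • h - (f j * h i) • g - (g i * h j) • f ∈ R :=
    R.sub_mem (R.sub_mem (R.smul_mem _ hh) (R.smul_mem _ hg)) (R.smul_mem _ hf)
  have hzero := congrFun (P.eq_zero _ hmem i hi j hj hij
    (by simp [hfi]; ring) (by simp [hgj]; ring)) k
  have hgk := hg_pos k hk hne.2
  have hhi := hh_pos i hi hne.1.symm
  have hhj := hh_pos j hj hne.2.symm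
  simp only [Pi.sub_apply, Pi.smul_apply, smul_eq_mul, hhk, mul_zero, Pi.zero_apply] at hzero
  nlinarith [mul_pos (mul_pos hfj hhi) hgk, mul_pos (mul_pos hgi hhj) hfk]

theorem exists_second_hasRay [DecidableEq V] (P : IsGenericPlane R u)
    (hu : (u.erase k).Nonempty) (hk : k ∈ u) (h : HasRay R u k) :
    ∃ k' ∈ u, k' ≠ k ∧ HasRay R u k' := by
  obtain ⟨g, hg, hgk, hpos⟩ := h
  obtain ⟨f, hf, hfk⟩ := P.exists_pos hu hk
  obtain ⟨c, ⟨k', hk', hzero⟩, hnonneg⟩ := exists_sub_smul_nonneg hu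
    (fun i hi => hpos i (Finset.mem_of_mem_erase hi) (Finset.ne_of_mem_erase hi)) f
  have hval : (f - c • g) k = f k := by simp [hgk]
  refine ⟨k', Finset.mem_of_mem_erase hk', Finset.ne_of_mem_erase hk',
    P.hasRay (R.sub_mem hf (R.smul_mem c hg)) (fun h => hfk.ne' ?_) (fun i hi => ?_)
      (Finset.mem_of_mem_erase hk') hzero⟩
  · rw [← hval, h, Pi.zero_apply]
  · obtain rfl | hik := eq_or_ne i k
    · exact hval ▸ hfk.le
    · exact hnonneg i (Finset.mem_erase.2 ⟨hik, hi⟩)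

end IsGenericPlane

end Rays

theorem exists_erase_eq {α : Type*} [DecidableEq α] {e t : Finset α} (he : e ⊆ t)
    (hcard : e.card + 1 = t.card) : ∃ i ∈ t, t.erase i = e :=
  (Finset.covBy_iff_card_sdiff_eq_one.2 ⟨he, by
    rw [Finset.card_sdiff_of_subset he]; omega⟩).exists_finset_erase

section CommonPoints

theorem Pierces.symm {V : Type*} [Fintype V] {E : Type*} [AddCommGroup E] [Module ℝ E] {ψ : V → E}
    {e s : Finset V} (h : Pierces ψ e s) : Pierces ψ s e := by
  rwa [Pierces, Set.inter_comm]

theorem piercingPoint_comm {V : Type*} [Fintype V] {E : Type*} [AddCommGroup E] [Module ℝ E]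
    (ψ : V → E) (e s : Finset V) : piercingPoint ψ e s = piercingPoint ψ s e := by
  unfold piercingPoint Pierces
  rw [Set.inter_comm]

theorem smul_linearCombination_mem_openSimplex {V : Type*} [Fintype V] {E : Type*}
    [AddCommGroup E] [Module ℝ E] {ψ : V → E} {t : Finset V} {f : V → ℝ} {c : ℝ} (hc : 0 < c)
    (hf : ∀ i ∉ t, f i = 0) (hpos : ∀ i ∈ t, 0 < f i) (hsum : ∑ i, f i = c) :
    c⁻¹ • Fintype.linearCombination ℝ ψ f ∈ openSimplex ψ t := by
  refine ⟨c⁻¹ • f, ⟨fun i hi => ?_, ?_⟩, fun i hi => mul_pos (inv_pos.2 hc) (hpos i hi),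
    map_smul _ _ _⟩
  · rw [Pi.smul_apply, hf i hi, smul_zero]
  · simp only [Pi.smul_apply, smul_eq_mul, ← Finset.mul_sum, hsum, inv_mul_cancel₀ hc.ne']

theorem exists_affine_relation {V : Type*} [Fintype V] {E : Type*} [AddCommGroup E] [Module ℝ E]
    [Module.Finite ℝ E] (ψ : V → E) {u : Finset V} (hu : Module.finrank ℝ E + 1 < u.card) :
    ∃ m : V → ℝ, (∀ i ∉ u, m i = 0) ∧ ∑ i, m i = 0 ∧ Fintype.linearCombination ℝ ψ m = 0 ∧
      m ≠ 0 := by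
  let F : (V → ℝ) →ₗ[ℝ] (ℝ × E) × ({v // v ∉ u} → ℝ) :=
    ((Fintype.linearCombination ℝ fun _ => (1 : ℝ)).prod (Fintype.linearCombination ℝ ψ)).prod
      (LinearMap.funLeft ℝ ℝ Subtype.val)
  have hF : LinearMap.ker F ≠ ⊥ := LinearMap.ker_ne_bot_of_finrank_lt (by
    have hle := u.card_le_univ
    rw [Module.finrank_prod, Module.finrank_prod, Module.finrank_self,
      Module.finrank_fintype_fun_eq_card, Module.finrank_fintype_fun_eq_card,
      Fintype.card_subtype_compl, Fintype.card_coe]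
    omega)
  obtain ⟨m, hm, hne⟩ := Submodule.exists_mem_ne_zero_of_ne_bot hF
  obtain ⟨⟨hsum, hcomb⟩, hzero⟩ : ((∑ i, m i = 0) ∧ Fintype.linearCombination ℝ ψ m = 0) ∧
      ∀ v : {v // v ∉ u}, m v = 0 := by
    simpa [F, Prod.ext_iff, funext_iff, Fintype.linearCombination_apply] using hm
  exact ⟨m, fun i hi => hzero ⟨i, hi⟩, hsum, hcomb, hne⟩

section SignedDifference

variable {V : Type*} {s t : Finset V} {g l m : V → ℝ}

/-- The restriction of coefficients to `t` minus their restriction to `s`. -/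
noncomputable def signedDifference (t s : Finset V) : (V → ℝ) →ₗ[ℝ] V → ℝ :=
  LinearMap.mulLeft ℝ ((t : Set V).indicator 1 - (s : Set V).indicator 1)

theorem signedDifference_eq (t s : Finset V) (g : V → ℝ) :
    signedDifference t s g = (t : Set V).indicator g - (s : Set V).indicator g := by
  funext i
  simp only [signedDifference, LinearMap.mulLeft_apply, Pi.mul_apply, Pi.sub_apply,
    Set.indicator_apply]
  split_ifs <;> simp

theorem signedDifference_add (hd : Disjoint t s) (hl : ∀ i ∉ t, l i = 0) (hm : ∀ i ∉ s, m i = 0) :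
    signedDifference t s (l + m) = l - m := by
  rw [signedDifference_eq]
  funext i
  by_cases hi : i ∈ t
  · have his := Finset.disjoint_left.1 hd hi
    simp [hi, his, hm i his]
  · by_cases his : i ∈ s <;> simp [hi, his, hl i hi, hm]

theorem signedDifference_signedDifference [DecidableEq V] (hd : Disjoint t s)
    (hg : ∀ i ∉ t ∪ s, g i = 0) : signedDifference t s (signedDifference t s g) = g := by
  rw [signedDifference_eq, signedDifference_eq]
  funext i
  by_cases hi : i ∈ t
  · simp [hi, Finset.disjoint_left.1 hd hi]
  · by_cases his : i ∈ s <;> simp [hi, his, hg]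

end SignedDifference

variable {V : Type*} [DecidableEq V] [Fintype V] {E : Type*} [AddCommGroup E] [Module ℝ E]
  {ψ : V → E} {s t : Finset V} {l m : V → ℝ} {k : V}

/-- The coefficients on `t ∪ s` for which the combinations over `t` and over `s` have the same mass
and the same value. The nonnegative ones represent common points of the two simplices. -/
noncomputable def commonRelations (ψ : V → E) (t s : Finset V) : Submodule ℝ (V → ℝ) where
  carrier := {g | (∀ i ∉ t ∪ s, g i = 0) ∧ ∑ i, signedDifference t s g i = 0 ∧
    Fintype.linearCombination ℝ ψ (signedDifference t s g) = 0}
  zero_mem' := by simp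
  add_mem' := by
    rintro f g ⟨hf, hf', hf''⟩ ⟨hg, hg', hg''⟩
    refine ⟨fun i hi => by rw [Pi.add_apply, hf i hi, hg i hi, add_zero], ?_, ?_⟩
    · simp only [map_add, Pi.add_apply, Finset.sum_add_distrib, hf', hg', add_zero]
    · rw [map_add, map_add, hf'', hg'', add_zero]
  smul_mem' := by
    rintro c g ⟨hg, hg', hg''⟩
    refine ⟨fun i hi => by rw [Pi.smul_apply, hg i hi, smul_zero], ?_, ?_⟩
    · simp only [map_smul, Pi.smul_apply, ← Finset.smul_sum, hg', smul_zero]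
    · rw [map_smul, map_smul, hg'', smul_zero]

theorem add_mem_commonRelations (hd : Disjoint t s) (hl : IsWeight t l) (hm : IsWeight s m)
    (h : Fintype.linearCombination ℝ ψ l = Fintype.linearCombination ℝ ψ m) :
    l + m ∈ commonRelations ψ t s := by
  refine ⟨fun i hi => ?_, ?_, ?_⟩
  · rw [Finset.mem_union, not_or] at hi
    rw [Pi.add_apply, hl.eq_zero i hi.1, hm.eq_zero i hi.2, add_zero]
  · simp only [signedDifference_add hd hl.eq_zero hm.eq_zero, Pi.sub_apply,
      Finset.sum_sub_distrib, hl.sum_eq_one, hm.sum_eq_one, sub_self]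
  · rw [signedDifference_add hd hl.eq_zero hm.eq_zero, map_sub, h, sub_self]

theorem hasRay_of_pierces (hd : Disjoint t s) (h : Pierces ψ (t.erase k) (s.erase k)) :
    HasRay (commonRelations ψ t s) (t ∪ s) k := by
  obtain ⟨p, ⟨l, hl, hl_pos, hlp⟩, m, hm, hm_pos, hmp⟩ := h
  refine ⟨l + m, add_mem_commonRelations hd (hl.mono (t.erase_subset k))
    (hm.mono (s.erase_subset k)) (hlp.trans hmp.symm), ?_, fun i hi hik => ?_⟩
  · rw [Pi.add_apply, hl.eq_zero k (t.notMem_erase k), hm.eq_zero k (s.notMem_erase k), add_zero]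
  · rcases Finset.mem_union.1 hi with hi | hi
    · exact add_pos_of_pos_of_nonneg (hl_pos i (Finset.mem_erase.2 ⟨hik, hi⟩))
        (weight_nonneg hm hm_pos i)
    · exact add_pos_of_nonneg_of_pos (weight_nonneg hl hl_pos i)
        (hm_pos i (Finset.mem_erase.2 ⟨hik, hi⟩))

theorem pierces_of_hasRay (hne : (t.erase k).Nonempty)
    (h : HasRay (commonRelations ψ t s) (t ∪ s) k) : Pierces ψ (t.erase k) (s.erase k) := by
  obtain ⟨g, ⟨-, hsum, hcomb⟩, hgk, hpos⟩ := h
  simp only [signedDifference_eq, Pi.sub_apply, Finset.sum_sub_distrib, map_sub,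
    sub_eq_zero] at hsum hcomb
  have hind_zero (u : Finset V) : ∀ i ∉ u.erase k, (u : Set V).indicator g i = 0 := by
    intro i hi
    obtain rfl | hik := eq_or_ne i k
    · rw [Set.indicator_apply, hgk, ite_self]
    · exact Set.indicator_of_notMem (fun h => hi (Finset.mem_erase.2 ⟨hik, h⟩)) _
  have hind_pos {u : Finset V} (hu : u ⊆ t ∪ s) :
      ∀ i ∈ u.erase k, 0 < (u : Set V).indicator g i := by
    intro i hi
    obtain ⟨hik, hiu⟩ := Finset.mem_erase.1 hi
    rw [Set.indicator_of_mem (Finset.mem_coe.2 hiu)]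
    exact hpos i (hu hiu) hik
  have hmass : 0 < ∑ i, (t : Set V).indicator g i := by
    rw [← sum_eq_sum_univ (hind_zero t)]
    exact Finset.sum_pos (hind_pos Finset.subset_union_left) hne
  exact ⟨_, smul_linearCombination_mem_openSimplex hmass (hind_zero t)
    (hind_pos Finset.subset_union_left) rfl, hcomb ▸ smul_linearCombination_mem_openSimplex hmass
      (hind_zero s) (hind_pos Finset.subset_union_right) hsum.symm⟩

end CommonPoints

namespace CombClosedSurface

variable {V : Type*} [DecidableEq V] [Fintype V] {E : Type*} [AddCommGroup E] [Module ℝ E]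

/-- The side opposite to `k` of whichever of the disjoint faces `t` and `s` contains `k`. -/
def oppositeSide (t s : Finset V) (k : V) : Finset V :=
  if k ∈ t then t.erase k else s.erase k

variable {S : CombClosedSurface V} {ψ : V → E} {d p : E} {r s t : Finset V} {k k' : V}

theorem eq_of_oppositeSide_eq (hd : Disjoint t s) (ht : t ∈ S.faces) (hk : k ∈ t ∪ s)
    (hk' : k' ∈ t ∪ s) (h : oppositeSide t s k = oppositeSide t s k') :
    k = k' := by
  have hcard_ne {x : V} (hx : x ∈ t) (y : V) : t.erase x ≠ s.erase y := fun hxy => by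
    have hcard := Finset.card_erase_of_mem hx
    rw [S.face_card t ht] at hcard
    have hempty : t.erase x = ∅ := Finset.disjoint_self_iff_empty _ |>.1
      (hd.mono (t.erase_subset x) (hxy ▸ s.erase_subset y))
    simp [hempty] at hcard
  have hmem_s {x : V} (hx : x ∈ t ∪ s) (hxt : x ∉ t) : x ∈ s :=
    (Finset.mem_union.1 hx).resolve_left hxt
  unfold oppositeSide at h
  split_ifs at h with hkt hkt' hkt'
  · exact Finset.erase_injOn t hkt hkt' h
  · exact (hcard_ne hkt k' h).elim
  · exact (hcard_ne hkt' k h.symm).elim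
  · exact Finset.erase_injOn s (hmem_s hk hkt) (hmem_s hk' hkt') h

theorem card_union_of_disjoint_faces (ht : t ∈ S.faces) (hs : s ∈ S.faces) (hd : Disjoint t s) :
    (t ∪ s).card = 6 := by
  rw [Finset.card_union_of_disjoint hd, S.face_card t ht, S.face_card s hs]

theorem erase_nonempty (ht : t ∈ S.faces) (k : V) : (t.erase k).Nonempty := by
  rw [← Finset.card_pos]
  exact lt_of_lt_of_le (by rw [S.face_card t ht]; norm_num) Finset.pred_card_le_card_erase

namespace GenericView

theorem isGenericPlane_commonRelations (G : S.GenericView ψ d) (ht : t ∈ S.faces)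
    (hs : s ∈ S.faces) (hd : Disjoint t s) :
    IsGenericPlane (commonRelations ψ t s) (t ∪ s) where
  eq_zero g hg i hi j hj hij hgi hgj := by
    obtain ⟨hzero, hsum, hcomb⟩ := hg
    have hcard : (((t ∪ s).erase i).erase j).card ≤ 4 := by
      rw [Finset.card_erase_of_mem (Finset.mem_erase.2 ⟨hij.symm, hj⟩),
        Finset.card_erase_of_mem hi, card_union_of_disjoint_faces ht hs hd]
    rw [← signedDifference_signedDifference hd hzero,
      G.eq_zero_of_linearCombination_eq_zero hcard (fun x hx => ?_) hsum hcomb, map_zero]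
    have hgx : g x = 0 := by
      rw [Finset.mem_erase, Finset.mem_erase, not_and_or, not_and_or, not_not, not_not] at hx
      obtain rfl | rfl | hx := hx
      exacts [hgj, hgi, hzero x hx]
    rw [signedDifference_eq]
    simp [Set.indicator_apply, hgx]
  exists_ne_zero i hi := by
    have : Module.Finite ℝ E := Module.finite_of_finrank_eq_succ G.finrank_eq_three
    obtain ⟨m, hm, hsum, hcomb, hne⟩ := exists_affine_relation ψ (u := (t ∪ s).erase i) (by
      rw [Finset.card_erase_of_mem hi, card_union_of_disjoint_faces ht hs hd, G.finrank_eq_three]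
      norm_num)
    have hzero : ∀ x ∉ t ∪ s, m x = 0 := fun x hx => hm x fun h => hx (Finset.mem_of_mem_erase h)
    have hself := signedDifference_signedDifference hd hzero
    refine ⟨signedDifference t s m, ⟨fun x hx => ?_, by rw [hself, hsum], by rw [hself, hcomb]⟩,
      ?_, fun h => hne (by rw [← hself, h, map_zero])⟩
    · rw [signedDifference_eq]
      simp [Set.indicator_apply, hzero x hx]
    · rw [signedDifference_eq]
      simp [Set.indicator_apply, hm i (Finset.notMem_erase i _)]

theorem exists_pierces_erase (G : S.GenericView ψ d) (ht : t ∈ S.faces) (hs : s ∈ S.faces)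
    (hd : Disjoint t s) (hpt : p ∈ convexHull ℝ (ψ '' t)) (hps : p ∈ convexHull ℝ (ψ '' s)) :
    ∃ k ∈ t ∪ s, Pierces ψ (t.erase k) (s.erase k) := by
  obtain ⟨l, hl, hl₀, hlp⟩ := mem_convexHull_image_iff.1 hpt
  obtain ⟨m, hm, hm₀, hmp⟩ := mem_convexHull_image_iff.1 hps
  have hne : l + m ≠ 0 := fun h => by
    have hsum : ∑ i, (l + m) i = 1 + 1 := by
      simp only [Pi.add_apply, Finset.sum_add_distrib, hl.sum_eq_one, hm.sum_eq_one]
    rw [h] at hsum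
    norm_num at hsum
  obtain ⟨k, hk, hray⟩ := (G.isGenericPlane_commonRelations ht hs hd).exists_hasRay
    (Finset.card_pos.1 (by rw [card_union_of_disjoint_faces ht hs hd]; norm_num))
    (add_mem_commonRelations hd hl hm (hlp.trans hmp.symm)) hne
    (fun i _ => add_nonneg (hl₀ i) (hm₀ i))
  exact ⟨k, hk, pierces_of_hasRay (S.erase_nonempty ht k) hray⟩

theorem exists_second_pierces_erase (G : S.GenericView ψ d) (ht : t ∈ S.faces) (hs : s ∈ S.faces)
    (hd : Disjoint t s) (hk : k ∈ t ∪ s) (h : Pierces ψ (t.erase k) (s.erase k)) :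
    ∃ k' ∈ t ∪ s, k' ≠ k ∧ Pierces ψ (t.erase k') (s.erase k') ∧
      ∀ j ∈ t ∪ s, Pierces ψ (t.erase j) (s.erase j) → j = k ∨ j = k' := by
  have P := G.isGenericPlane_commonRelations ht hs hd
  have hray := hasRay_of_pierces hd h
  obtain ⟨k', hk', hne, hray'⟩ := P.exists_second_hasRay (Finset.card_pos.1 (by
    rw [Finset.card_erase_of_mem hk, card_union_of_disjoint_faces ht hs hd]; norm_num)) hk hray
  exact ⟨k', hk', hne, pierces_of_hasRay (S.erase_nonempty ht k') hray', fun j hj hj' =>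
    P.eq_or_eq_of_hasRay hk hk' hj hne.symm hray hray' (hasRay_of_pierces hd hj')⟩

theorem eq_of_erase_subset (G : S.GenericView ψ d) (ht : t ∈ S.faces) (hs : s ∈ S.faces)
    (hr : r ∈ S.faces) (hd : Disjoint t s) (hk : k ∈ t) (h : Pierces ψ (t.erase k) (s.erase k))
    (hsub : t.erase k ⊆ r) (hru : r ⊆ t ∪ s) : r = t := by
  rw [Finset.erase_eq_of_notMem (Finset.disjoint_left.1 hd hk)] at h
  have hrs := G.disjoint_of_pierces hr hs hsub (by
    rw [Finset.card_erase_of_mem hk, S.face_card t ht]) h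
  exact S.face_eq_of_subset hr ht fun i hi =>
    (Finset.mem_union.1 (hru hi)).resolve_right (Finset.disjoint_left.1 hrs hi)

theorem not_oppositeSide_subset (G : S.GenericView ψ d) (ht : t ∈ S.faces) (hs : s ∈ S.faces)
    (hr : r ∈ S.faces) (hd : Disjoint t s) (hk : k ∈ t ∪ s)
    (h : Pierces ψ (t.erase k) (s.erase k)) (hrt : r ≠ t) (hrs : r ≠ s) (hru : r ⊆ t ∪ s) :
    ¬oppositeSide t s k ⊆ r := fun hsub => by
  unfold oppositeSide at hsub
  split_ifs at hsub with hkt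
  · exact hrt (G.eq_of_erase_subset ht hs hr hd hkt h hsub hru)
  · exact hrs (G.eq_of_erase_subset hs ht hr hd.symm ((Finset.mem_union.1 hk).resolve_left hkt)
      h.symm hsub (Finset.union_comm t s ▸ hru))

theorem piercingCond (G : S.GenericView ψ d) (ht : t ∈ S.faces) (hs : s ∈ S.faces)
    (hd : Disjoint t s) (hpt : p ∈ convexHull ℝ (ψ '' t)) (hps : p ∈ convexHull ℝ (ψ '' s)) :
    S.PiercingCond t s := by
  obtain ⟨k, hk, h⟩ := G.exists_pierces_erase ht hs hd hpt hps
  obtain ⟨k', hk', hne, h', -⟩ := G.exists_second_pierces_erase ht hs hd hk h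
  have hcard : (((t ∪ s).erase k).erase k').card = 4 := by
    rw [Finset.card_erase_of_mem (Finset.mem_erase.2 ⟨hne, hk'⟩), Finset.card_erase_of_mem hk,
      card_union_of_disjoint_faces ht hs hd]
  have hside : ∀ e ∈ Finset.powersetCard 2 t ∪ Finset.powersetCard 2 s,
      ∃ i ∈ t ∪ s, oppositeSide t s i = e := by
    simp only [Finset.mem_union, Finset.mem_powersetCard]
    rintro e (⟨he, hcard⟩ | ⟨he, hcard⟩)
    · obtain ⟨i, hi, rfl⟩ := exists_erase_eq he (by rw [hcard, S.face_card t ht])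
      exact ⟨i, Or.inl hi, if_pos hi⟩
    · obtain ⟨i, hi, rfl⟩ := exists_erase_eq he (by rw [hcard, S.face_card s hs])
      exact ⟨i, Or.inr hi, if_neg (Finset.disjoint_right.1 hd hi)⟩
  refine (Finset.card_le_card (t := (((t ∪ s).erase k).erase k').image (oppositeSide t s))
    fun e he => ?_).trans (Finset.card_image_le.trans hcard.le)
  obtain ⟨he, r, hr, her, hrt, hrs, hru⟩ := Finset.mem_filter.1 he
  obtain ⟨i, hi, rfl⟩ := hside e he
  refine Finset.mem_image_of_mem _ (Finset.mem_erase.2 ⟨?_, Finset.mem_erase.2 ⟨?_, hi⟩⟩)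
  · rintro rfl
    exact G.not_oppositeSide_subset ht hs hr hd hk' h' hrt hrs hru her
  · rintro rfl
    exact G.not_oppositeSide_subset ht hs hr hd hk h hrt hrs hru her

end GenericView

end CombClosedSurface

section DoubleArcs

open AffineMap

variable {V : Type*} [Fintype V] {E : Type*} [AddCommGroup E] [Module ℝ E] {ψ : V → E}

theorem IsWeight.eq_single {l : V → ℝ} {c : V} [DecidableEq V] (hl : IsWeight {c} l) :
    l = Pi.single c 1 := by
  funext i
  obtain rfl | hic := eq_or_ne i c
  · rw [Pi.single_eq_same, ← hl.sum_eq_one, ← sum_eq_sum_univ hl.eq_zero, Finset.sum_singleton]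
  · rw [Pi.single_eq_of_ne hic, hl.eq_zero i (Finset.notMem_singleton.2 hic)]

/-- The point `p` lies in the open prism that the face `r` sweeps out against the direction `d`. -/
def LiesBelow (ψ : V → E) (d : E) (r : Finset V) (p : E) : Prop :=
  (∀ i ∈ r, 0 < shadow ψ d r p i) ∧ 0 < height ψ d r p

variable [DecidableEq V] {s t : Finset V} {k k' : V} {p p' : E}

/-- The point `p` is an end of the double segment in which two disjoint triangles `t` and `s` meet:
a side of one of them, opposite to the vertex `k`, meets the other one in `p`. -/
structure IsDoubleEnd (ψ : V → E) (t s : Finset V) (k : V) (p : E) : Prop where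
  mem_criticalPoints : p ∈ criticalPoints ψ
  mem_left : p ∈ openSimplex ψ (t.erase k)
  mem_right : p ∈ openSimplex ψ (s.erase k)

theorem Pierces.isDoubleEnd (h : Pierces ψ (t.erase k) (s.erase k)) :
    IsDoubleEnd ψ t s k (piercingPoint ψ (t.erase k) (s.erase k)) :=
  ⟨piercingPoint_mem_criticalPoints ψ _ _, h.piercingPoint_mem.1, h.piercingPoint_mem.2⟩

theorem IsDoubleEnd.symm (P : IsDoubleEnd ψ t s k p) : IsDoubleEnd ψ s t k p :=
  ⟨P.mem_criticalPoints, P.mem_right, P.mem_left⟩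

theorem IsDoubleEnd.mem_openSimplex_right (P : IsDoubleEnd ψ t s k p) (hd : Disjoint t s)
    (hk : k ∈ t) : p ∈ openSimplex ψ s := by
  simpa only [Finset.erase_eq_of_notMem (Finset.disjoint_left.1 hd hk)] using P.mem_right

theorem lineMap_mem_openSimplex (hk : k' ≠ k) (hp : p ∈ openSimplex ψ (t.erase k))
    (hp' : p' ∈ openSimplex ψ (t.erase k')) {τ : ℝ} (hτ : τ ∈ Set.Ioo (0 : ℝ) 1) :
    lineMap p p' τ ∈ openSimplex ψ t := by
  obtain ⟨l, hl, hl_pos, rfl⟩ := hp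
  obtain ⟨m, hm, hm_pos, rfl⟩ := hp'
  have hτ' : 0 < 1 - τ := sub_pos.2 hτ.2
  refine ⟨lineMap l m τ, (hl.mono (t.erase_subset k)).lineMap (hm.mono (t.erase_subset k')) τ,
    fun i hi => ?_, linearCombination_lineMap ψ l m τ⟩
  rw [lineMap_apply_coord]
  obtain rfl | hik := eq_or_ne i k
  · exact add_pos_of_nonneg_of_pos (mul_nonneg hτ'.le (weight_nonneg hl hl_pos i))
      (mul_pos hτ.1 (hm_pos i (Finset.mem_erase.2 ⟨hk.symm, hi⟩)))
  · exact add_pos_of_pos_of_nonneg (mul_pos hτ' (hl_pos i (Finset.mem_erase.2 ⟨hik, hi⟩)))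
      (mul_nonneg hτ.1.le (weight_nonneg hm hm_pos i))

end DoubleArcs

namespace CombClosedSurface

open AffineMap

variable {V : Type*} [DecidableEq V] [Fintype V] {E : Type*} [AddCommGroup E] [Module ℝ E]

/-- Three pairwise disjoint faces of `S`, each two of which satisfy the piercing condition: the
combinatorial trace of a triple point. -/
def HasPiercingTriple (S : CombClosedSurface V) : Prop :=
  ∃ t₁ ∈ S.faces, ∃ t₂ ∈ S.faces, ∃ t₃ ∈ S.faces,
    Disjoint t₁ t₂ ∧ Disjoint t₁ t₃ ∧ Disjoint t₂ t₃ ∧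
    S.PiercingCond t₁ t₂ ∧ S.PiercingCond t₁ t₃ ∧ S.PiercingCond t₂ t₃

/-- The number mod 2 of faces other than `t` and `s` that the ray in direction `d` meets from a
point on the double segment of `t` and `s` just next to its end opposite to `k`. It is `0` if there
is no such end. -/
noncomputable def endCover (S : CombClosedSurface V) (ψ : V → E) (d : E) (t s : Finset V) (k : V) :
    ZMod 2 :=
  iverson (Disjoint t s ∧ Pierces ψ (t.erase k) (s.erase k)) *
    ∑ r ∈ (S.faces.erase t).erase s,
      iverson (EntersPrism ψ d r r (piercingPoint ψ (t.erase k) (s.erase k)) (ψ k))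

theorem endCover_comm (S : CombClosedSurface V) (ψ : V → E) (d : E) (t s : Finset V) (k : V) :
    S.endCover ψ d t s k = S.endCover ψ d s t k := by
  have hiff : Disjoint t s ∧ Pierces ψ (t.erase k) (s.erase k) ↔
      Disjoint s t ∧ Pierces ψ (s.erase k) (t.erase k) :=
    and_congr disjoint_comm ⟨Pierces.symm, Pierces.symm⟩
  rw [endCover, endCover, hiff, piercingPoint_comm, Finset.erase_right_comm]

variable {S : CombClosedSurface V} {ψ : V → E} {d p y : E} {e g r s t : Finset V}
  {i k : V}

theorem endCover_of_pierces (hd : Disjoint t s) (h : Pierces ψ (t.erase k) (s.erase k)) :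
    S.endCover ψ d t s k = ∑ r ∈ (S.faces.erase t).erase s,
      iverson (EntersPrism ψ d r r (piercingPoint ψ (t.erase k) (s.erase k)) (ψ k)) := by
  rw [endCover, iverson_pos ⟨hd, h⟩, one_mul]

theorem endCover_of_not (h : ¬(Disjoint t s ∧ Pierces ψ (t.erase k) (s.erase k))) :
    S.endCover ψ d t s k = 0 := by
  rw [endCover, iverson_neg h, zero_mul]

namespace GenericView

theorem subset_of_mem_openSimplex (G : S.GenericView ψ d) (ht : t ∈ S.faces) (hr : r ∈ S.faces)
    (hdisj : ¬Disjoint t r) (het : e ⊆ t) (hpe : p ∈ openSimplex ψ e)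
    (hpr : p ∈ convexHull ℝ (ψ '' r)) : e ⊆ r := by
  obtain ⟨l, hl, hl_pos, hlp⟩ := hpe
  obtain ⟨m, hm, hm₀, hmp⟩ := mem_convexHull_image_iff.1 hpr
  have hlm := G.weight_eq_of_not_disjoint ht hr hdisj (hl.mono het) (weight_nonneg hl hl_pos) hm hm₀
    (hlp.trans hmp.symm)
  intro i hi
  by_contra hir
  exact (hl_pos i hi).ne' (hlm ▸ hm.eq_zero i hir)

theorem notMem_convexHull_of_not_subset (G : S.GenericView ψ d) (N : ¬S.HasPiercingTriple)
    (ht : t ∈ S.faces) (hs : s ∈ S.faces) (hr : r ∈ S.faces) (hd : Disjoint t s) (het : e ⊆ t)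
    (hgs : g ⊆ s) (hpe : p ∈ openSimplex ψ e) (hpg : p ∈ openSimplex ψ g) (her : ¬e ⊆ r)
    (hgr : ¬g ⊆ r) : p ∉ convexHull ℝ (ψ '' r) := fun hpr => by
  have hpt := convexHull_mono (Set.image_mono het) (openSimplex_subset_convexHull hpe)
  have hps := convexHull_mono (Set.image_mono hgs) (openSimplex_subset_convexHull hpg)
  have htr : Disjoint t r := by
    by_contra h
    exact her (G.subset_of_mem_openSimplex ht hr h het hpe hpr)
  have hsr : Disjoint s r := by
    by_contra h
    exact hgr (G.subset_of_mem_openSimplex hs hr h hgs hpg hpr)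
  exact N ⟨t, ht, s, hs, r, hr, hd, htr, hsr, G.piercingCond ht hs hd hpt hps,
    G.piercingCond ht hr htr hpt hpr, G.piercingCond hs hr hsr hps hpr⟩

theorem height_eq_zero_of_shadow_eq_zero (G : S.GenericView ψ d) (hr : r ∈ S.faces)
    (hp : p ∈ criticalPoints ψ) (hi : i ∈ r) (h : shadow ψ d r p i = 0) : height ψ d r p = 0 := by
  have hW := (G.isWeight_shadow hr p).erase h
  have hcomb := G.linearCombination_shadow hr p
  have hone := hW.sum_eq_one
  obtain ⟨a, b, hab, hri⟩ := Finset.card_eq_two.1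
    (by rw [Finset.card_erase_of_mem hi, S.face_card r hr] : (r.erase i).card = 2)
  rw [← sum_smul_eq_linearCombination ψ hW.eq_zero, hri, Finset.sum_pair hab] at hcomb
  rw [← sum_eq_sum_univ hW.eq_zero, hri, Finset.sum_pair hab] at hone
  refine G.eq_zero_of_smul_add_smul (vertex_mem_criticalPoints ψ a) hp
    (vertex_mem_criticalPoints ψ b) (α := shadow ψ d r p a) (β := shadow ψ d r p b) ?_
  rw [smul_sub, smul_sub, sub_add_sub_comm, hcomb, ← add_smul, hone, one_smul, add_sub_cancel_left]

theorem subset_erase_of_shadow_eq_zero (G : S.GenericView ψ d) (hr : r ∈ S.faces)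
    (he : e.card = 2) (hp : p ∈ criticalPoints ψ) (hpe : p ∈ openSimplex ψ e) (hi : i ∈ r)
    (h : shadow ψ d r p i = 0) : e ⊆ r.erase i := by
  obtain ⟨l, hl, hl_pos, hlp⟩ := hpe
  have hW := (G.isWeight_shadow hr p).erase h
  have hcomb := G.linearCombination_shadow hr p
  rw [G.height_eq_zero_of_shadow_eq_zero hr hp hi h, zero_smul, add_zero] at hcomb
  have hcard : (e ∪ r.erase i).card ≤ 4 := (Finset.card_union_le _ _).trans (by
    rw [he, Finset.card_erase_of_mem hi, S.face_card r hr])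
  have hl_eq := G.weight_eq hcard (hl.mono Finset.subset_union_left)
    (hW.mono Finset.subset_union_right) (hlp.trans hcomb.symm)
  intro j hj
  by_contra hjr
  exact (hl_pos j hj).ne' (hl_eq ▸ hW.eq_zero j hjr)

theorem entersPrism_iff_of_subset (G : S.GenericView ψ d) (hr : r ∈ S.faces) (her : e ⊆ r)
    (hp : p ∈ openSimplex ψ e) :
    EntersPrism ψ d r r p y ↔ (∀ i ∈ r \ e, 0 < shadow ψ d r y i) ∧ 0 < height ψ d r y := by
  obtain ⟨l, hl, hl_pos, hlp⟩ := hp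
  obtain ⟨hshadow, hheight⟩ := G.shadow_eq_of_linearCombination hr (hl.mono her) hlp
  simp only [EntersPrism, hshadow, hheight, lt_irrefl, false_or, true_and, Finset.mem_sdiff]
  refine and_congr_left fun _ => ⟨fun h i ⟨hi, hie⟩ => ?_, fun h i hi => ?_⟩
  · exact ((h i hi).resolve_left (hl.eq_zero i hie).not_gt).2
  · by_cases hie : i ∈ e
    · exact .inl (hl_pos i hie)
    · exact .inr ⟨hl.eq_zero i hie, h i ⟨hi, hie⟩⟩

theorem entersPrism_iff_of_not_subset (G : S.GenericView ψ d) (N : ¬S.HasPiercingTriple)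
    (ht : t ∈ S.faces) (hs : s ∈ S.faces) (hr : r ∈ S.faces) (hd : Disjoint t s) (hrs : r ≠ s)
    (hk : k ∈ t) (P : IsDoubleEnd ψ t s k p) (her : ¬t.erase k ⊆ r) :
    EntersPrism ψ d r r p y ↔ LiesBelow ψ d r p := by
  have hcard : (t.erase k).card = 2 := by rw [Finset.card_erase_of_mem hk, S.face_card t ht]
  have hne : ∀ i ∈ r, shadow ψ d r p i ≠ 0 := fun i hi h => her
    ((G.subset_erase_of_shadow_eq_zero hr hcard P.mem_criticalPoints P.mem_left hi h).trans
      (r.erase_subset i))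
  refine ⟨fun ⟨hshadow, hheight⟩ => ?_, fun h => ⟨fun i hi => .inl (h.1 i hi), .inl h.2⟩⟩
  have hpos : ∀ i ∈ r, 0 < shadow ψ d r p i := fun i hi =>
    (hshadow i hi).resolve_right fun h => hne i hi h.1
  refine ⟨hpos, hheight.resolve_right fun h => ?_⟩
  exact G.notMem_convexHull_of_not_subset N ht hs hr hd (t.erase_subset k) subset_rfl P.mem_left
    (P.mem_openSimplex_right hd hk) her (fun hsr => hrs (S.face_eq_of_subset hs hr hsr).symm)
    (G.mem_convexHull_of_shadow_nonneg hr h.1 fun i hi => (hpos i hi).le)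

end GenericView

end CombClosedSurface

namespace CombClosedSurface

variable {V : Type*} [DecidableEq V] [Fintype V] {E : Type*} [AddCommGroup E] [Module ℝ E]
  {S : CombClosedSurface V} {ψ : V → E} {d p : E} {s t t' : Finset V}
  {v w x a : V}

theorem Hinge.sdiff_eq (W : S.Hinge t t' v w x a) : t \ {v, w} = {x} := by
  ext i
  simp only [W.left_eq, Finset.mem_sdiff, Finset.mem_insert, Finset.mem_singleton]
  grind [W.v_ne_x, W.w_ne_x]

namespace GenericView

theorem entersPrism_hinge_iff (G : S.GenericView ψ d) (W : S.Hinge t t' v w x a)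
    (hp : p ∈ openSimplex ψ {v, w}) : EntersPrism ψ d t' t' p (ψ x) ↔ FoldsUnder ψ d t' a x := by
  have hsub : {v, w} ⊆ t' := by simp [W.right_eq, Finset.insert_subset_iff]
  rw [G.entersPrism_iff_of_subset W.right_mem hsub hp, W.swap.sdiff_eq]
  simp only [Finset.mem_singleton, forall_eq, FoldsUnder]

theorem endCover_hinge (G : S.GenericView ψ d) (N : ¬S.HasPiercingTriple)
    (W : S.Hinge t t' v w x a) (hs : s ∈ S.faces) (h : Pierces ψ {v, w} s) :
    S.endCover ψ d t s x = iverson (FoldsUnder ψ d t' a x) +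
      ∑ r ∈ ((S.faces.erase t).erase t').erase s,
        iverson (LiesBelow ψ d r (piercingPoint ψ {v, w} s)) := by
  have hcard := Finset.card_pair W.v_ne_w
  have hd := G.disjoint_of_pierces W.left_mem hs
    (by simp [W.left_eq, Finset.insert_subset_iff]) hcard h
  have hd' := G.disjoint_of_pierces W.right_mem hs
    (by simp [W.right_eq, Finset.insert_subset_iff]) hcard h
  have hx : x ∈ t := by simp [W.left_eq]
  have hst' : s ≠ t' := by
    rintro rfl
    exact Finset.disjoint_left.1 hd' W.swap.left_mem_left W.swap.left_mem_left
  have ht_erase : t.erase x = {v, w} := by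
    ext i
    simp only [W.left_eq, Finset.mem_erase, Finset.mem_insert, Finset.mem_singleton]
    grind [W.v_ne_x, W.w_ne_x]
  have hs_erase : s.erase x = s := Finset.erase_eq_of_notMem (Finset.disjoint_left.1 hd hx)
  have h_end : Pierces ψ (t.erase x) (s.erase x) := by rwa [ht_erase, hs_erase]
  have P := h_end.isDoubleEnd
  have hset : ((S.faces.erase t).erase s).erase t' = ((S.faces.erase t).erase t').erase s :=
    Finset.erase_right_comm
  rw [endCover_of_pierces hd h_end, ← Finset.add_sum_erase _ _ (Finset.mem_erase.2
    ⟨hst'.symm, Finset.mem_erase.2 ⟨W.left_ne_right.symm, W.right_mem⟩⟩), hset]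
  simp only [ht_erase, hs_erase] at P ⊢
  rw [G.entersPrism_hinge_iff W h.piercingPoint_mem.1]
  congr 1
  refine Finset.sum_congr rfl fun r hr => ?_
  obtain ⟨hrs, hr⟩ := Finset.mem_erase.1 hr
  obtain ⟨hr_face, hr_edge⟩ := W.mem_faces_and_not_mem hr
  have her : ¬t.erase x ⊆ r := fun h =>
    hr_edge (by simpa [ht_erase, Finset.insert_subset_iff] using h)
  rw [G.entersPrism_iff_of_not_subset N W.left_mem hs hr_face hd hrs hx P her]

theorem endCover_add_endCover (G : S.GenericView ψ d) (N : ¬S.HasPiercingTriple)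
    (b : Module.Basis (Fin 3) ℝ E) (O : S.FaceOrder) (W : S.Hinge t t' v w x a) (hs : s ∈ S.faces)
    (h : Pierces ψ {v, w} s) :
    S.endCover ψ d t s x + S.endCover ψ d t' s a = S.fold b ψ d O {v, w} := by
  have hset : (S.faces.erase t').erase t = (S.faces.erase t).erase t' := Finset.erase_right_comm
  rw [G.endCover_hinge N W hs h, G.endCover_hinge N W.swap hs h, G.fold_eq_iverson b O W,
    ← G.iverson_foldsUnder_add W, hset, add_add_add_comm, CharTwo.add_self_eq_zero, add_zero]

end GenericView

end CombClosedSurface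

namespace CombClosedSurface

open AffineMap

variable {V : Type*} [DecidableEq V] [Fintype V] {E : Type*} [AddCommGroup E] [Module ℝ E]
  {S : CombClosedSurface V} {ψ : V → E} {d p p' x y : E} {r s t : Finset V}
  {i j k k' : V} {τ : ℝ}

theorem mem_openSimplex_oppositeSide (ht : t ∈ S.faces) (hs : s ∈ S.faces) (hk : k ∈ t ∪ s)
    (P : IsDoubleEnd ψ t s k p) :
    (oppositeSide t s k).card = 2 ∧ p ∈ openSimplex ψ (oppositeSide t s k) := by
  rw [oppositeSide]
  split_ifs with hkt
  · exact ⟨by rw [Finset.card_erase_of_mem hkt, S.face_card t ht], P.mem_left⟩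
  · have hks : k ∈ s := (Finset.mem_union.1 hk).resolve_left hkt
    exact ⟨by rw [Finset.card_erase_of_mem hks, S.face_card s hs], P.mem_right⟩

namespace GenericView

theorem height_eq_zero_of_mem_openSimplex (G : S.GenericView ψ d) (ht : t ∈ S.faces) (hrt : r ⊆ t)
    (h : p ∈ openSimplex ψ r) : height ψ d t p = 0 := by
  obtain ⟨l, hl, -, hlp⟩ := h
  exact (G.shadow_eq_of_linearCombination ht (hl.mono hrt) hlp).2

theorem shadow_linearCombination_of_erase_subset (G : S.GenericView ψ d) (hr : r ∈ S.faces)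
    (hsub : t.erase k ⊆ r) {m : V → ℝ} (hm : IsWeight t m) :
    height ψ d r (Fintype.linearCombination ℝ ψ m) = m k * height ψ d r (ψ k) ∧
      ∀ i ∉ t.erase k,
        shadow ψ d r (Fintype.linearCombination ℝ ψ m) i = m k * shadow ψ d r (ψ k) i := by
  have h_reduce (f : V → ℝ) (hf : ∀ j ∈ t.erase k, f j = 0) : ∑ j, m j * f j = m k * f k := by
    refine Fintype.sum_eq_single k fun j hjk => ?_
    by_cases hj : j ∈ t
    · rw [hf j (Finset.mem_erase.2 ⟨hjk, hj⟩), mul_zero]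
    · rw [hm.eq_zero j hj, zero_mul]
  obtain ⟨hshadow, hheight⟩ := G.shadow_linearCombination hr hm
  rw [hshadow, hheight]
  refine ⟨h_reduce _ fun j hj => (G.shadow_vertex hr (hsub hj)).2, fun i hi => ?_⟩
  simp only [Finset.sum_apply, Pi.smul_apply, smul_eq_mul]
  refine h_reduce (fun j => shadow ψ d r (ψ j) i) fun j hj => ?_
  rw [(G.shadow_vertex hr (hsub hj)).1, Pi.single_eq_of_ne (ne_of_mem_of_not_mem hj hi).symm]

theorem entersPrism_otherEnd_iff_of_mem (G : S.GenericView ψ d) (N : ¬S.HasPiercingTriple)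
    (ht : t ∈ S.faces) (hs : s ∈ S.faces) (hr : r ∈ S.faces) (hd : Disjoint t s) (hrs : r ≠ s)
    (hk : k ∈ t) (hkk' : k' ≠ k) (P : IsDoubleEnd ψ t s k p)
    (hp' : p' ∈ openSimplex ψ (t.erase k')) :
    EntersPrism ψ d r r p p' ↔ EntersPrism ψ d r r p (ψ k) := by
  by_cases hsub : t.erase k ⊆ r
  · obtain ⟨m, hm, hm_pos, rfl⟩ := hp'
    have hmk : 0 < m k := hm_pos k (Finset.mem_erase.2 ⟨hkk'.symm, hk⟩)
    obtain ⟨hheight, hshadow⟩ :=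
      G.shadow_linearCombination_of_erase_subset hr hsub (hm.mono (t.erase_subset k'))
    rw [G.entersPrism_iff_of_subset hr hsub P.mem_left,
      G.entersPrism_iff_of_subset hr hsub P.mem_left, hheight, mul_pos_iff_of_pos_left hmk]
    refine and_congr_left fun _ => forall₂_congr fun i hi => ?_
    rw [hshadow i (Finset.mem_sdiff.1 hi).2, mul_pos_iff_of_pos_left hmk]
  · rw [G.entersPrism_iff_of_not_subset N ht hs hr hd hrs hk P hsub,
      G.entersPrism_iff_of_not_subset N ht hs hr hd hrs hk P hsub]

theorem entersPrism_otherEnd_iff (G : S.GenericView ψ d) (N : ¬S.HasPiercingTriple)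
    (ht : t ∈ S.faces) (hs : s ∈ S.faces) (hr : r ∈ S.faces) (hd : Disjoint t s) (hrt : r ≠ t)
    (hrs : r ≠ s) (hk : k ∈ t ∪ s) (hkk' : k' ≠ k) (P : IsDoubleEnd ψ t s k p)
    (P' : IsDoubleEnd ψ t s k' p') :
    EntersPrism ψ d r r p p' ↔ EntersPrism ψ d r r p (ψ k) := by
  obtain hk | hk := Finset.mem_union.1 hk
  · exact G.entersPrism_otherEnd_iff_of_mem N ht hs hr hd hrs hk hkk' P P'.mem_left
  · exact G.entersPrism_otherEnd_iff_of_mem N hs ht hr hd.symm hrt hk hkk' P.symm P'.mem_right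

theorem mem_convexHull_of_shadow_eq_zero (G : S.GenericView ψ d) (hr : r ∈ S.faces)
    (hx : x ∈ criticalPoints ψ) (hy : y ∈ criticalPoints ψ) (hi : i ∈ r) (hj : j ∈ r)
    (hij : i ≠ j) (hi₀ : shadow ψ d r (lineMap x y τ) i = 0)
    (hj₀ : shadow ψ d r (lineMap x y τ) j = 0) : lineMap x y τ ∈ convexHull ℝ (ψ '' r) := by
  obtain ⟨c, hic, hjc, hr_eq⟩ := exists_eq_triple (S.face_card r hr) hi hj hij
  have herase : (r.erase i).erase j = {c} := by
    rw [hr_eq]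
    grind
  have hshadow : shadow ψ d r (lineMap x y τ) = Pi.single c 1 :=
    IsWeight.eq_single (herase ▸ ((G.isWeight_shadow hr (lineMap x y τ)).erase hi₀).erase hj₀)
  have hcomb := G.linearCombination_shadow hr (lineMap x y τ)
  rw [hshadow, linearCombination_single_one] at hcomb
  -- If the height did not vanish, `d` would be parallel to the plane of `x`, `ψ c` and `y`.
  have hheight : height ψ d r (lineMap x y τ) = 0 := by
    refine G.eq_zero_of_smul_add_smul hx (vertex_mem_criticalPoints ψ c) hy
      (α := -(1 - τ)) (β := -τ) ?_
    rw [hcomb, lineMap_apply_module]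
    module
  exact G.mem_convexHull_of_shadow_nonneg hr hheight fun l _ =>
    hshadow ▸ single_one_nonneg c l

theorem lineMap_notMem_convexHull (G : S.GenericView ψ d) (N : ¬S.HasPiercingTriple)
    (ht : t ∈ S.faces) (hs : s ∈ S.faces) (hr : r ∈ S.faces) (hd : Disjoint t s) (hrt : r ≠ t)
    (hrs : r ≠ s) (hkk' : k' ≠ k) (P : IsDoubleEnd ψ t s k p) (P' : IsDoubleEnd ψ t s k' p')
    (hτ : τ ∈ Set.Ioo (0 : ℝ) 1) : lineMap p p' τ ∉ convexHull ℝ (ψ '' r) :=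
  G.notMem_convexHull_of_not_subset N ht hs hr hd subset_rfl subset_rfl
    (lineMap_mem_openSimplex hkk' P.mem_left P'.mem_left hτ)
    (lineMap_mem_openSimplex hkk' P.mem_right P'.mem_right hτ)
    (fun h => hrt (S.face_eq_of_subset ht hr h).symm)
    (fun h => hrs (S.face_eq_of_subset hs hr h).symm)

theorem oppositeSide_eq_of_shadow_eq_zero (G : S.GenericView ψ d) (ht : t ∈ S.faces)
    (hs : s ∈ S.faces) (hr : r ∈ S.faces) (hk : k ∈ t ∪ s) (P : IsDoubleEnd ψ t s k p)
    (hi : i ∈ r) (h : shadow ψ d r p i = 0) : oppositeSide t s k = r.erase i := by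
  obtain ⟨hcard, hp⟩ := mem_openSimplex_oppositeSide ht hs hk P
  refine Finset.eq_of_subset_of_card_le
    (G.subset_erase_of_shadow_eq_zero hr hcard P.mem_criticalPoints hp hi h) ?_
  rw [hcard, Finset.card_erase_of_mem hi, S.face_card r hr]

theorem iverson_entersPrism_doubleEnds (G : S.GenericView ψ d) (N : ¬S.HasPiercingTriple)
    (ht : t ∈ S.faces) (hs : s ∈ S.faces) (hr : r ∈ S.faces) (hd : Disjoint t s) (hrt : r ≠ t)
    (hrs : r ≠ s) (hk : k ∈ t ∪ s) (hk' : k' ∈ t ∪ s) (hkk' : k' ≠ k)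
    (P : IsDoubleEnd ψ t s k p) (P' : IsDoubleEnd ψ t s k' p') :
    iverson (EntersPrism ψ d r r p (ψ k)) + iverson (EntersPrism ψ d r r p' (ψ k')) +
      ∑ i ∈ r, iverson (PassesBelow ψ d (r.erase i) (r.erase i) p p') = 0 := by
  have hhull (τ : ℝ) (hτ : τ ∈ Set.Ioo (0 : ℝ) 1) : lineMap p p' τ ∉ convexHull ℝ (ψ '' r) :=
    G.lineMap_notMem_convexHull N ht hs hr hd hrt hrs hkk' P P' hτ
  have hcross : ¬CrossesFace ψ d r r p p' := fun ⟨τ, hτ, hheight, hpos⟩ =>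
    hhull τ hτ (G.mem_convexHull_of_shadow_nonneg hr hheight fun i hi => (hpos i hi).le)
  have hswap := G.iverson_entersPrism_add_swap hr (u := r) (x := p) (y := p')
    (fun τ hτ i hi j hj hij hi₀ hj₀ => hhull τ hτ (G.mem_convexHull_of_shadow_eq_zero hr
      P.mem_criticalPoints P'.mem_criticalPoints hi hj hij hi₀ hj₀))
    (fun τ hτ hheight hnonneg => absurd
      (G.mem_convexHull_of_shadow_nonneg hr hheight hnonneg) (hhull τ hτ))
    (fun i hi h h' => hkk' (eq_of_oppositeSide_eq hd ht hk' hk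
      ((G.oppositeSide_eq_of_shadow_eq_zero ht hs hr hk' P' hi h').trans
        (G.oppositeSide_eq_of_shadow_eq_zero ht hs hr hk P hi h).symm)))
    (fun h => absurd h hcross)
  rwa [iverson_neg hcross, add_zero,
    G.entersPrism_otherEnd_iff N ht hs hr hd hrt hrs hk hkk' P P',
    G.entersPrism_otherEnd_iff N ht hs hr hd hrt hrs hk' hkk'.symm P' P] at hswap

theorem sum_passesBelow_doubleEnds (G : S.GenericView ψ d) (ht : t ∈ S.faces) (hs : s ∈ S.faces)
    (P : IsDoubleEnd ψ t s k p) (P' : IsDoubleEnd ψ t s k' p') :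
    ∑ r ∈ (S.faces.erase t).erase s,
      ∑ i ∈ r, iverson (PassesBelow ψ d (r.erase i) (r.erase i) p p') = 0 := by
  have hzero {r : Finset V} {q q' : V} (hr : r ∈ S.faces) (hp : p ∈ openSimplex ψ (r.erase q))
      (hp' : p' ∈ openSimplex ψ (r.erase q')) :
      ∑ i ∈ r, iverson (PassesBelow ψ d (r.erase i) (r.erase i) p p') = 0 :=
    Finset.sum_eq_zero fun i _ => iverson_neg (G.not_passesBelow hr (r.erase_subset i)
      (G.height_eq_zero_of_mem_openSimplex hr (r.erase_subset q) hp)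
      (G.height_eq_zero_of_mem_openSimplex hr (r.erase_subset q') hp'))
  calc _ = ∑ r ∈ S.faces.erase t, ∑ i ∈ r, iverson (PassesBelow ψ d (r.erase i) (r.erase i) p p') :=
        Finset.sum_erase _ (hzero hs P.mem_right P'.mem_right)
    _ = ∑ r ∈ S.faces, ∑ i ∈ r, iverson (PassesBelow ψ d (r.erase i) (r.erase i) p p') :=
        Finset.sum_erase _ (hzero ht P.mem_left P'.mem_left)
    _ = 0 := S.sum_faces_sum_erase_eq_zero fun e => iverson (PassesBelow ψ d e e p p')

theorem endCover_eq_endCover (G : S.GenericView ψ d) (N : ¬S.HasPiercingTriple)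
    (ht : t ∈ S.faces) (hs : s ∈ S.faces) (hd : Disjoint t s) (hk : k ∈ t ∪ s) (hk' : k' ∈ t ∪ s)
    (hkk' : k' ≠ k) (h : Pierces ψ (t.erase k) (s.erase k))
    (h' : Pierces ψ (t.erase k') (s.erase k')) :
    S.endCover ψ d t s k = S.endCover ψ d t s k' := by
  have hsum := Finset.sum_eq_zero fun r (hr : r ∈ (S.faces.erase t).erase s) =>
    G.iverson_entersPrism_doubleEnds N ht hs (Finset.mem_of_mem_erase (Finset.mem_of_mem_erase hr))
      hd (Finset.ne_of_mem_erase (Finset.mem_of_mem_erase hr)) (Finset.ne_of_mem_erase hr) hk hk'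
      hkk' h.isDoubleEnd h'.isDoubleEnd
  rwa [Finset.sum_add_distrib, Finset.sum_add_distrib,
    G.sum_passesBelow_doubleEnds ht hs h.isDoubleEnd h'.isDoubleEnd, add_zero,
    CharTwo.add_eq_zero, ← endCover_of_pierces hd h, ← endCover_of_pierces hd h'] at hsum

end GenericView

end CombClosedSurface

namespace CombClosedSurface

variable {V : Type*} [DecidableEq V] [Fintype V] {E : Type*} [AddCommGroup E] [Module ℝ E]
  {S : CombClosedSurface V} {ψ : V → E} {d : E} {e s t : Finset V} {k : V}

theorem endCover_eq_iverson_mul (S : CombClosedSurface V) (ψ : V → E) (d : E) (hk : k ∈ t) :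
    S.endCover ψ d t s k = iverson (Pierces ψ (t.erase k) s) * S.endCover ψ d t s k := by
  by_cases h : Pierces ψ (t.erase k) s
  · rw [iverson_pos h, one_mul]
  · rw [iverson_neg h, zero_mul]
    refine endCover_of_not fun ⟨hd, h'⟩ => h ?_
    rwa [Finset.erase_eq_of_notMem (Finset.disjoint_left.1 hd hk)] at h'

namespace GenericView

theorem sum_endCover_eq_zero (G : S.GenericView ψ d) (N : ¬S.HasPiercingTriple) (ht : t ∈ S.faces)
    (hs : s ∈ S.faces) (hd : Disjoint t s) : ∑ k ∈ t ∪ s, S.endCover ψ d t s k = 0 := by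
  by_cases hex : ∃ k ∈ t ∪ s, Pierces ψ (t.erase k) (s.erase k)
  · obtain ⟨k, hk, h⟩ := hex
    obtain ⟨k', hk', hkk', h', h_only⟩ := G.exists_second_pierces_erase ht hs hd hk h
    rw [Finset.sum_eq_add_of_mem k k' hk hk' hkk'.symm fun j hj hjk =>
        endCover_of_not fun hj' => (h_only j hj hj'.2).elim hjk.1 hjk.2,
      G.endCover_eq_endCover N ht hs hd hk hk' hkk' h h', CharTwo.add_self_eq_zero]
  · exact Finset.sum_eq_zero fun k hk => endCover_of_not fun h => hex ⟨k, hk, h.2⟩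

theorem sum_endCover_add_swap (G : S.GenericView ψ d) (N : ¬S.HasPiercingTriple) (ht : t ∈ S.faces)
    (hs : s ∈ S.faces) : ∑ k ∈ t, S.endCover ψ d t s k + ∑ k ∈ s, S.endCover ψ d s t k = 0 := by
  simp only [S.endCover_comm ψ d s t]
  by_cases hd : Disjoint t s
  · rw [← Finset.sum_union hd, G.sum_endCover_eq_zero N ht hs hd]
  · have hzero (u : Finset V) : ∑ k ∈ u, S.endCover ψ d t s k = 0 :=
      Finset.sum_eq_zero fun k _ => endCover_of_not fun h => hd h.1
    rw [hzero, hzero, add_zero]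

theorem sum_sum_endCover_eq_zero (G : S.GenericView ψ d) (N : ¬S.HasPiercingTriple) :
    ∑ s ∈ S.faces, ∑ t ∈ S.faces, ∑ k ∈ t, S.endCover ψ d t s k = 0 := by
  rw [← Finset.sum_product']
  refine Finset.sum_involution (fun p _ => p.swap) (fun p hp => ?_) (fun p hp hne hswap => ?_)
    (fun p hp => ?_) fun p _ => p.swap_swap
  · obtain ⟨hs, ht⟩ := Finset.mem_product.1 hp
    exact G.sum_endCover_add_swap N ht hs
  · obtain ⟨s, t⟩ := p
    obtain rfl : t = s := congrArg Prod.fst hswap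
    refine hne (Finset.sum_eq_zero fun k hk => endCover_of_not fun h => ?_)
    exact Finset.disjoint_left.1 h.1 hk hk
  · exact Finset.mem_product.2 (Finset.mem_product.1 hp).symm

theorem sum_fold_mul_iverson_pierces (G : S.GenericView ψ d) (N : ¬S.HasPiercingTriple)
    (b : Module.Basis (Fin 3) ℝ E) (O : S.FaceOrder) (hs : s ∈ S.faces) :
    ∑ e ∈ S.edgeSet, S.fold b ψ d O e * iverson (Pierces ψ e s) =
      ∑ t ∈ S.faces, ∑ k ∈ t, S.endCover ψ d t s k := by
  let φ (e t : Finset V) : ZMod 2 := iverson (Pierces ψ e s) * ∑ k ∈ t \ e, S.endCover ψ d t s k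
  have hφ : ∀ t ∈ S.faces, ∑ k ∈ t, S.endCover ψ d t s k = ∑ k ∈ t, φ (t.erase k) t :=
    fun t _ => Finset.sum_congr rfl fun k hk => by
      rw [S.endCover_eq_iverson_mul ψ d hk]
      simp only [φ, Finset.sdiff_erase_self hk, Finset.sum_singleton]
  rw [Finset.sum_congr rfl hφ, ← S.sum_edges_sum_faces φ]
  refine Finset.sum_congr rfl fun e he => ?_
  by_cases h : Pierces ψ e s
  · obtain ⟨hcard, t, ht, het⟩ := S.mem_edgeSet.1 he
    obtain ⟨v, w, hvw, rfl⟩ := Finset.card_eq_two.1 hcard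
    obtain ⟨t', x, a, W⟩ := exists_hinge ht (het (by simp : v ∈ _)) (het (by simp : w ∈ _)) hvw
    rw [W.filter_eq, Finset.sum_pair W.left_ne_right]
    simp only [φ, W.sdiff_eq, W.swap.sdiff_eq, Finset.sum_singleton, iverson_pos h, one_mul,
      mul_one]
    exact (G.endCover_add_endCover N b O W hs h).symm
  · simp only [φ, iverson_neg h, mul_zero, zero_mul, Finset.sum_const_zero]

theorem sum_fold_mul_piercingParity (G : S.GenericView ψ d) (N : ¬S.HasPiercingTriple)
    (b : Module.Basis (Fin 3) ℝ E) (O : S.FaceOrder) :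
    ∑ e ∈ S.edgeSet, S.fold b ψ d O e * S.piercingParity ψ e = 0 := by
  simp only [piercingParity, Finset.mul_sum]
  rw [Finset.sum_comm, Finset.sum_congr rfl fun s hs => G.sum_fold_mul_iverson_pierces N b O hs,
    G.sum_sum_endCover_eq_zero N]

theorem even_eulerChar (G : S.GenericView ψ d) (N : ¬S.HasPiercingTriple) :
    Even ((Fintype.card V : ℤ) - S.edgeSet.card + S.faces.card) := by
  obtain ⟨O⟩ := S.nonempty_faceOrder
  have : FiniteDimensional ℝ E := Module.finite_of_finrank_pos (by rw [G.finrank_eq_three]; decide)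
  let b := Module.finBasisOfFinrankEq ℝ E G.finrank_eq_three
  exact O.even_eulerChar_of_potential (fun _ _ => rfl)
    (fun _ he _ hv => G.fold_eq_sum_vertexCover b O he hv)
    (fun _ ht _ hv _ hw hvw => G.vertexCover_add_vertexCover ht hv hw hvw)
    (G.sum_fold_mul_piercingParity N b O)

end GenericView

theorem exists_genericView (S : CombClosedSurface V) (hE : Module.finrank ℝ E = 3)
    (gp : ∀ s : Finset V, s.card = 4 → AffineIndependent ℝ (fun v : s => ψ v.1))
    (imm : ∀ t₁ ∈ S.faces, ∀ t₂ ∈ S.faces, t₁ ≠ t₂ → ¬Disjoint t₁ t₂ →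
      convexHull ℝ (ψ '' t₁) ∩ convexHull ℝ (ψ '' t₂) ⊆ convexHull ℝ (ψ '' ↑(t₁ ∩ t₂))) :
    ∃ d, S.GenericView ψ d := by
  let plane (q : E × E × E) : Submodule ℝ E :=
    Submodule.span ℝ ↑({q.1 - q.2.1, q.2.2 - q.2.1} : Finset E)
  have h_plane (q : E × E × E) : plane q ≠ ⊤ := fun h => by
    have hle := (finrank_span_finset_le_card (R := ℝ) {q.1 - q.2.1, q.2.2 - q.2.1}).trans
      Finset.card_le_two
    have htop : Module.finrank ℝ (plane q) = 3 := by rw [h, finrank_top, hE]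
    exact absurd (htop.symm.trans_le hle) (by decide)
  have hfin : (criticalPoints ψ).Finite := (Set.finite_range _).union (Set.finite_range _)
  have h_cover := Subspace.biUnion_ne_univ_of_top_notMem
    (s := (hfin.toFinset ×ˢ hfin.toFinset ×ˢ hfin.toFinset).image plane) fun h => by
      obtain ⟨q, -, hq⟩ := Finset.mem_image.1 h
      exact h_plane q hq
  obtain ⟨d, hd⟩ := (Set.ne_univ_iff_exists_notMem _).1 h_cover
  refine ⟨d, hE, gp, imm, fun x hx y hy z hz h_span => hd (Set.mem_iUnion₂.2 ⟨plane (x, y, z),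
    Finset.mem_image_of_mem _ ?_, ?_⟩)⟩
  · simp only [Finset.mem_product, hfin.mem_toFinset, hx, hy, hz, and_self]
  · simpa only [plane, Finset.coe_pair, SetLike.mem_coe] using h_span

end CombClosedSurface

theorem no_immersion_of_no_triple_point_general {V : Type*} [DecidableEq V] [Fintype V]
    {E : Type*} [AddCommGroup E] [Module ℝ E] (hE : Module.finrank ℝ E = 3)
    (S : CombClosedSurface V)
    (h_odd : Odd ((Fintype.card V : ℤ) - S.edgeSet.card + S.faces.card))
    (h_no_triple : ¬S.HasPiercingTriple) :
    ¬∃ ψ : V → E,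
      (∀ s : Finset V, s.card = 4 → AffineIndependent ℝ (fun v : s => ψ v.1)) ∧
      (∀ t₁ ∈ S.faces, ∀ t₂ ∈ S.faces, t₁ ≠ t₂ → ¬Disjoint t₁ t₂ →
        convexHull ℝ (ψ '' t₁) ∩ convexHull ℝ (ψ '' t₂) ⊆ convexHull ℝ (ψ '' ↑(t₁ ∩ t₂))) := by
  rintro ⟨ψ, gp, imm⟩
  obtain ⟨d, G⟩ := S.exists_genericView hE gp imm
  exact Int.not_even_iff_odd.2 h_odd (G.even_eulerChar h_no_triple)

/-- Let `Δ` be a triangulation of a closed surface with odd Euler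
characteristic (hence non-orientable).  If `Δ` contains no three pairwise vertex-disjoint
triangles such that each of the three pairs satisfies the piercing condition, then `Δ`
admits no simplexwise linear immersion into `ℝ³` with vertices in general position
(general position: every four vertex images are affinely independent; immersion:
two faces sharing a vertex intersect only in the image of their common face). -/
theorem no_immersion_of_no_triple_point {V : Type*} [DecidableEq V] [Fintype V]
    (S : CombClosedSurface V)
    (h_odd : Odd ((Fintype.card V : ℤ) - S.edgeSet.card + S.faces.card))
    (h_no_triple : ¬ ∃ t₁ ∈ S.faces, ∃ t₂ ∈ S.faces, ∃ t₃ ∈ S.faces,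
      Disjoint t₁ t₂ ∧ Disjoint t₁ t₃ ∧ Disjoint t₂ t₃ ∧
      S.PiercingCond t₁ t₂ ∧ S.PiercingCond t₁ t₃ ∧ S.PiercingCond t₂ t₃) :
    ¬ ∃ ψ : V → EuclideanSpace ℝ (Fin 3),
      (∀ s : Finset V, s.card = 4 → AffineIndependent ℝ (fun v : s => ψ v.1)) ∧
      (∀ t₁ ∈ S.faces, ∀ t₂ ∈ S.faces, t₁ ≠ t₂ → ¬ Disjoint t₁ t₂ →
        convexHull ℝ (ψ '' ↑t₁) ∩ convexHull ℝ (ψ '' ↑t₂) ⊆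
          convexHull ℝ (ψ '' ↑(t₁ ∩ t₂))) :=
  no_immersion_of_no_triple_point_general finrank_euclideanSpace_fin S h_odd h_no_triple
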